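/- arXiv:2407.01341 — 2 statements merged into one kernel-verified Lean document; each statement's English description precedes it below -/
import Mathlib

section
/- Let I be a bounded open interval and let p ∈ L¹(I) be a positive log-concave weight. Then the weighted Neumann eigenvalue and the Dirichlet eigenvalue with measure potential satisfy μ₁(I, p) ≥ λ₁(I, m_p). -/
open MeasureTheory Real Set Filter
open scoped ENNReal

noncomputable section

/-- Test class for the Dirichlet eigenvalue with measure potential on `(a,b)`:
`C¹` functions vanishing outside the open interval (a core of `H¹₀`). -/
def TestFun (a b : ℝ) (v : ℝ → ℝ) : Prop :=
  ContDiff ℝ 1 v ∧ ∀ x ∉ Ioo a b, v x = 0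

/-- Rayleigh quotient for the Dirichlet eigenvalue with (nonnegative, possibly infinite)
measure potential `q` on the interval `(a,b)`. -/
def dirRQ (a b : ℝ) (q : Measure ℝ) (v : ℝ → ℝ) : ℝ≥0∞ :=
  ((∫⁻ x in Ioo a b, ENNReal.ofReal ((deriv v x) ^ 2)) +
      ∫⁻ x in Ioo a b, ENNReal.ofReal ((v x) ^ 2) ∂q) /
    ∫⁻ x in Ioo a b, ENNReal.ofReal ((v x) ^ 2)

/-- `λ₁((a,b), q)`, the first Dirichlet eigenvalue with measure potential `q`. -/
def lam1 (a b : ℝ) (q : Measure ℝ) : ℝ≥0∞ :=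
  ⨅ (v : ℝ → ℝ)
    (_ : TestFun a b v ∧ (∫⁻ x in Ioo a b, ENNReal.ofReal ((v x) ^ 2)) ≠ 0),
    dirRQ a b q v

/-- The class `𝒜(I_π)`: an increasing function `psi` with finiteness domain `dom ⊆ I_π`
(an interval), satisfying the improved-monotonicity gap condition, together with the
measure `nu` representing its distributional derivative `ψ'` on `dom`. -/
structure PsiA where
  dom : Set ℝ
  domSub : dom ⊆ Ioo (-(π / 2)) (π / 2)
  domConn : dom.OrdConnected
  psi : ℝ → ℝ
  mono : MonotoneOn psi dom
  gap : ∀ ⦃x⦄, x ∈ dom → ∀ ⦃y⦄, y ∈ dom → x < y →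
    2 * tan ((y - x) / 2) ≤ psi y - psi x
  nu : Measure ℝ
  nu_eq : ∀ ⦃x⦄, x ∈ dom → ∀ ⦃y⦄, y ∈ dom → x ≤ y →
    nu (Ioc x y) = ENNReal.ofReal (psi y - psi x)

/-- The measure `ψ'`, extended by `+∞` on `I_π \ dom ψ`. -/
def PsiA.derivM (P : PsiA) : Measure ℝ :=
  P.nu.restrict P.dom + (∞ : ℝ≥0∞) • volume.restrict (Ioo (-(π / 2)) (π / 2) \ P.dom)

/-- The measure `ψ² dx`, extended by `+∞` on `I_π \ dom ψ`. -/
def PsiA.sqM (P : PsiA) : Measure ℝ :=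
  (volume.restrict P.dom).withDensity (fun x => ENNReal.ofReal ((P.psi x) ^ 2)) +
    (∞ : ℝ≥0∞) • volume.restrict (Ioo (-(π / 2)) (π / 2) \ P.dom)

/-- The measure `q = ψ' + ψ²`, extended by `+∞` on `I_π \ dom ψ`. -/
def PsiA.qM (P : PsiA) : Measure ℝ :=
  P.nu.restrict P.dom +
    (volume.restrict P.dom).withDensity (fun x => ENNReal.ofReal ((P.psi x) ^ 2)) +
    (∞ : ℝ≥0∞) • volume.restrict (Ioo (-(π / 2)) (π / 2) \ P.dom)

/-- The function `cos² x` on `I_π`, extended by zero. -/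
def cosSq : ℝ → ℝ := fun x => if x ∈ Ioo (-(π / 2)) (π / 2) then cos x ^ 2 else 0

/-- The measure with density `1 + 2 tan² x` on `I_π`. -/
def tanWeight : Measure ℝ :=
  (volume.restrict (Ioo (-(π / 2)) (π / 2))).withDensity
    fun x => ENNReal.ofReal (1 + 2 * tan x ^ 2)

/-- Rayleigh quotient for the weighted Neumann eigenvalue on `(a,b)` with weight `p`. -/
def neuRQ (a b : ℝ) (p v : ℝ → ℝ) : ℝ≥0∞ :=
  (∫⁻ x in Ioo a b, ENNReal.ofReal ((deriv v x) ^ 2 * p x)) /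
    ∫⁻ x in Ioo a b, ENNReal.ofReal ((v x) ^ 2 * p x)

/-- Admissibility for the weighted Neumann eigenvalue on `(a,b)`:
`v ∈ H¹_loc ∩ L²(p dx)` with zero `p`-mean. -/
def neuAdm (a b : ℝ) (p v : ℝ → ℝ) : Prop :=
  ContDiffOn ℝ 1 v (Ioo a b) ∧
    (∫⁻ x in Ioo a b, ENNReal.ofReal ((v x) ^ 2 * p x)) ≠ 0 ∧
    (∫⁻ x in Ioo a b, ENNReal.ofReal ((v x) ^ 2 * p x)) ≠ ∞ ∧
    (∫ x in Ioo a b, v x * p x) = 0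

/-- `μ₁((a,b), p)`, the first nontrivial weighted Neumann eigenvalue. -/
def mu1 (a b : ℝ) (p : ℝ → ℝ) : ℝ≥0∞ :=
  ⨅ (v : ℝ → ℝ) (_ : neuAdm a b p v), neuRQ a b p v

/-!
Duality: instead of comparing `v` with a Dirichlet test function directly, pass to the primitive `G`
of `v p`, which vanishes at both endpoints because `v` has zero `p`-mean.

* If `u = G / √p`, then `G' / √p = u' - ψ u`, and Jacobi's identity
  `∫ (u' - ψ u)² = ∫ u'² + ∫ u² dν + ∫ ψ² u²` says that `G` has the same Rayleigh quotient for the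
  weight `1 / p` as `u` has for the potential `m_p = ψ' + ψ²`. Hence `λ₁(m_p)` is at most the dual
  eigenvalue `inf ∫ G'² / p / ∫ G² / p`.
* Integration by parts gives `∫ v² p = ∫ v G' = -∫ v' G`, so by the Cauchy–Schwarz inequality
  `(∫ v² p)² ≤ ∫ v'² p · ∫ G² / p`. As `G'² / p = v² p`, the dual quotient of `G` is at most the
  Neumann quotient of `v`. To obtain a compactly supported `G`, its values near `0` are cut off;
  the loss vanishes in the limit since `v p = G' = 0` almost everywhere on `{G = 0}`.
-/

section

variable {α : Type*} [MeasurableSpace α] {μ : Measure α}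
variable {ν : Measure ℝ} {ψ p v G : ℝ → ℝ} {a b c d : ℝ}

/-- `ν` is the distributional derivative on `s` of the monotone, right-continuous function `ψ`,
encoded by its values on half-open intervals. -/
def IsDerivMeasureOn (ν : Measure ℝ) (ψ : ℝ → ℝ) (s : Set ℝ) : Prop :=
  ∀ x ∈ s, ∀ y ∈ s, x ≤ y → ν (Ioc x y) = ENNReal.ofReal (ψ y - ψ x)

theorem IsDerivMeasureOn.mono {s t : Set ℝ} (h : IsDerivMeasureOn ν ψ t) (hst : s ⊆ t) :
    IsDerivMeasureOn ν ψ s :=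
  fun x hx y hy ↦ h x (hst hx) y (hst hy)

theorem IsDerivMeasureOn.measureReal_Ioc {s : Set ℝ} (h : IsDerivMeasureOn ν ψ s)
    (hψ : MonotoneOn ψ s) {x y : ℝ} (hx : x ∈ s) (hy : y ∈ s) (hxy : x ≤ y) :
    ν.real (Ioc x y) = ψ y - ψ x := by
  rw [measureReal_def, h x hx y hy hxy, ENNReal.toReal_ofReal (sub_nonneg.2 (hψ hx hy hxy))]

theorem IsDerivMeasureOn.isFiniteMeasure_restrict_Ioc (h : IsDerivMeasureOn ν ψ (Icc c d))
    (hcd : c ≤ d) : IsFiniteMeasure (ν.restrict (Ioc c d)) := by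
  refine ⟨?_⟩
  rw [Measure.restrict_apply_univ, h c (left_mem_Icc.2 hcd) d (right_mem_Icc.2 hcd) hcd]
  exact ENNReal.ofReal_lt_top

theorem setIntegral_setIntegral_Ioo {g : ℝ → ℝ} [IsFiniteMeasure (ν.restrict (Ioc c d))]
    (hg : IntegrableOn g (Ioc c d)) :
    ∫ x in Ioc c d, (∫ t in Ioo c x, g t) ∂ν = ∫ t in Ioc c d, ν.real (Ioc t d) * g t := by
  have hinner : ∀ x ∈ Ioc c d, ∫ t in Ioo c x, g t = ∫ t in Ioc c d, (Iio x).indicator g t := by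
    intro x hx
    rw [setIntegral_indicator measurableSet_Iio]
    congr 2
    ext t
    exact ⟨fun ht ↦ ⟨⟨ht.1, ht.2.le.trans hx.2⟩, ht.2⟩, fun ht ↦ ⟨ht.1.1, ht.2⟩⟩
  have houter : ∀ t ∈ Ioc c d,
      ∫ x in Ioc c d, (Iio x).indicator g t ∂ν = ν.real (Ioc t d) * g t := by
    intro t ht
    have hind : (fun x ↦ (Iio x).indicator g t) = (Ioi t).indicator fun _ ↦ g t := by
      ext x
      simp [indicator]
    have hset : Ioc c d ∩ Ioi t = Ioc t d := by
      ext x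
      exact ⟨fun hx ↦ ⟨hx.2, hx.1.2⟩, fun hx ↦ ⟨⟨ht.1.trans hx.1, hx.2⟩, hx.1⟩⟩
    rw [hind, setIntegral_indicator measurableSet_Ioi, hset, setIntegral_const, smul_eq_mul]
  have hint : Integrable (Function.uncurry fun x t ↦ (Iio x).indicator g t)
      ((ν.restrict (Ioc c d)).prod (volume.restrict (Ioc c d))) :=
    (hg.comp_snd (ν.restrict (Ioc c d))).indicator (measurableSet_lt measurable_snd measurable_fst)
  rw [setIntegral_congr_fun measurableSet_Ioc hinner, integral_integral_swap hint,
    setIntegral_congr_fun measurableSet_Ioc houter]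

theorem IsDerivMeasureOn.integrableOn_Ioc {f : ℝ → ℝ} (hν : IsDerivMeasureOn ν ψ (Icc c d))
    (hcd : c ≤ d) (hf : ContinuousOn f (Icc c d)) : IntegrableOn f (Ioc c d) ν := by
  have := hν.isFiniteMeasure_restrict_Ioc hcd
  have hfi : IntegrableOn f (Icc c d) (ν.restrict (Ioc c d)) := hf.integrableOn_Icc
  rwa [IntegrableOn, Measure.restrict_restrict measurableSet_Icc,
    inter_eq_right.2 Ioc_subset_Icc_self] at hfi

theorem IsDerivMeasureOn.setIntegral_eq_sub {f f' : ℝ → ℝ} (hν : IsDerivMeasureOn ν ψ (Icc c d))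
    (hψ : MonotoneOn ψ (Icc c d)) (hcd : c ≤ d) (hf : ∀ x ∈ Icc c d, HasDerivAt f (f' x) x)
    (hf' : ContinuousOn f' (Icc c d)) :
    ∫ x in Ioc c d, f x ∂ν = f d * ψ d - f c * ψ c - ∫ x in Ioc c d, f' x * ψ x := by
  have hc : c ∈ Icc c d := left_mem_Icc.2 hcd
  have hd : d ∈ Icc c d := right_mem_Icc.2 hcd
  have := hν.isFiniteMeasure_restrict_Ioc hcd
  have hf'i : IntegrableOn f' (Ioc c d) := hf'.integrableOn_Icc.mono_set Ioc_subset_Icc_self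
  have hf'ψ : IntegrableOn (fun x ↦ f' x * ψ x) (Ioc c d) :=
    ((hψ.integrableOn_isCompact isCompact_Icc).continuousOn_mul hf' isCompact_Icc).mono_set
      Ioc_subset_Icc_self
  have hftc : ∀ x ∈ Icc c d, ∫ t in Ioo c x, f' t = f x - f c := by
    intro x hx
    have hsub : uIcc c x ⊆ Icc c d := uIcc_subset_Icc hc hx
    rw [← integral_Ioc_eq_integral_Ioo, ← intervalIntegral.integral_of_le hx.1]
    exact intervalIntegral.integral_eq_sub_of_hasDerivAt (fun t ht ↦ hf t (hsub ht))
      (hf'.mono hsub).intervalIntegrable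
  have hfi : IntegrableOn f (Ioc c d) ν :=
    hν.integrableOn_Ioc hcd fun x hx ↦ (hf x hx).continuousAt.continuousWithinAt
  have hfubini : ∫ x in Ioc c d, (f x - f c) ∂ν = ∫ t in Ioc c d, (ψ d - ψ t) * f' t := by
    rw [← setIntegral_congr_fun measurableSet_Ioc fun x hx ↦ hftc x (Ioc_subset_Icc_self hx),
      setIntegral_setIntegral_Ioo hf'i]
    refine setIntegral_congr_fun measurableSet_Ioc fun t ht ↦ ?_
    simp only [hν.measureReal_Ioc hψ (Ioc_subset_Icc_self ht) hd ht.2]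
  have hsplit : ∫ t in Ioc c d, (ψ d - ψ t) * f' t =
      ψ d * (f d - f c) - ∫ t in Ioc c d, f' t * ψ t := by
    rw [← hftc d hd, ← integral_Ioc_eq_integral_Ioo, ← integral_const_mul,
      ← integral_sub (hf'i.const_mul _) hf'ψ]
    congr with t
    ring
  rw [integral_sub hfi (integrable_const _), setIntegral_const, hν.measureReal_Ioc hψ hc hd hcd,
    hsplit, smul_eq_mul] at hfubini
  linear_combination hfubini

theorem memLp_two_mul_of_monotoneOn {u : ℝ → ℝ} (hψ : MonotoneOn ψ (Icc c d)) (hu : Continuous u)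
    (hus : HasCompactSupport u) : MemLp (fun x ↦ ψ x * u x) 2 (volume.restrict (Ioc c d)) := by
  have hψ' : MemLp ψ ∞ (volume.restrict (Ioc c d)) :=
    (hψ.memLp_isCompact isCompact_Icc).mono_measure
      (Measure.restrict_mono Ioc_subset_Icc_self le_rfl)
  exact (hu.memLp_of_hasCompactSupport (p := 2) hus).mul' hψ'

theorem hasCompactSupport_of_tsupport_subset_Ioo {u : ℝ → ℝ} (hu : tsupport u ⊆ Ioo a b) :
    HasCompactSupport u :=
  isCompact_Icc.of_isClosed_subset (isClosed_tsupport u) (hu.trans Ioo_subset_Icc_self)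

theorem IsDerivMeasureOn.energy_eq {u : ℝ → ℝ} (hν : IsDerivMeasureOn ν ψ (Icc c d))
    (hψ : MonotoneOn ψ (Icc c d)) (hcd : c ≤ d) (hu : ContDiff ℝ 1 u) (hus : tsupport u ⊆ Ioo c d) :
    (∫ x in Ioc c d, deriv u x ^ 2) + ∫ x in Ioc c d, u x ^ 2 ∂ν +
        ∫ x in Ioc c d, (ψ x * u x) ^ 2 =
      ∫ x in Ioc c d, (deriv u x - ψ x * u x) ^ 2 := by
  have hu₀ : Continuous u := hu.continuous
  have hu' : Continuous (deriv u) := hu.continuous_deriv_one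
  have hcs : HasCompactSupport u := hasCompactSupport_of_tsupport_subset_Ioo hus
  have huc : u c = 0 := image_eq_zero_of_notMem_tsupport fun h ↦ (hus h).1.false
  have hud : u d = 0 := image_eq_zero_of_notMem_tsupport fun h ↦ (hus h).2.false
  have hIBP := hν.setIntegral_eq_sub hψ hcd (f := fun x ↦ u x ^ 2)
    (f' := fun x ↦ 2 * u x * deriv u x)
    (fun x _ ↦ by simpa using (hu.differentiable_one x).hasDerivAt.fun_pow 2) (by fun_prop)
  simp only [huc, hud, ne_eq, OfNat.ofNat_ne_zero, not_false_eq_true, zero_pow, zero_mul, sub_zero,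
    zero_sub] at hIBP
  have hu'L2 : MemLp (deriv u) 2 (volume.restrict (Ioc c d)) :=
    hu'.memLp_of_hasCompactSupport hcs.deriv
  have hψuL2 := memLp_two_mul_of_monotoneOn hψ hu₀ hcs
  have hcross : IntegrableOn (fun x ↦ 2 * (deriv u x * (ψ x * u x))) (Ioc c d) :=
    (hu'L2.integrable_mul hψuL2).const_mul 2
  have hdiff : IntegrableOn (fun x ↦ deriv u x ^ 2 - 2 * (deriv u x * (ψ x * u x))) (Ioc c d) :=
    hu'L2.integrable_sq.sub hcross
  have hcomm : ∀ x, 2 * u x * deriv u x * ψ x = 2 * (deriv u x * (ψ x * u x)) := fun x ↦ by ring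
  simp only [hcomm] at hIBP
  rw [hIBP, ← sub_eq_add_neg, ← integral_sub hu'L2.integrable_sq hcross,
    ← integral_add hdiff hψuL2.integrable_sq]
  congr with x
  ring

/-- The measure `m = ψ' + ψ²` on `(a, b)`, where `ν` stands for the derivative measure `ψ'`. For
`ψ = -(log p)' / 2` this is the potential `m_p` of the weight `p`. -/
def riccatiPotential (a b : ℝ) (ψ : ℝ → ℝ) (ν : Measure ℝ) : Measure ℝ :=
  ν.restrict (Ioo a b) +
    (volume.restrict (Ioo a b)).withDensity fun x ↦ ENNReal.ofReal (ψ x ^ 2)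

theorem setLIntegral_riccatiPotential (hψ : MonotoneOn ψ (Ioo a b)) {f : ℝ → ℝ}
    (hf : Measurable f) :
    ∫⁻ x in Ioo a b, ENNReal.ofReal (f x ^ 2) ∂riccatiPotential a b ψ ν =
      ∫⁻ x in Ioo a b, ENNReal.ofReal (f x ^ 2) ∂ν +
        ∫⁻ x in Ioo a b, ENNReal.ofReal ((ψ x * f x) ^ 2) := by
  have hψm : AEMeasurable ψ (volume.restrict (Ioo a b)) :=
    aemeasurable_restrict_of_monotoneOn measurableSet_Ioo hψ
  rw [riccatiPotential, Measure.restrict_add, lintegral_add_measure,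
    setLIntegral_withDensity_eq_lintegral_mul₀ (by fun_prop) (by fun_prop) measurableSet_Ioo,
    Measure.restrict_restrict measurableSet_Ioo, Measure.restrict_restrict measurableSet_Ioo,
    inter_self]
  simp only [Pi.mul_apply, mul_pow, ENNReal.ofReal_mul (sq_nonneg _)]

theorem setLIntegral_ofReal_sq_eq_of_support_subset {s t : Set α} {f : α → ℝ}
    (hf : Function.support f ⊆ s) (hst : s ⊆ t) :
    ∫⁻ x in t, ENNReal.ofReal (f x ^ 2) ∂μ = ∫⁻ x in s, ENNReal.ofReal (f x ^ 2) ∂μ := by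
  have hsupp : (Function.support fun x ↦ ENNReal.ofReal (f x ^ 2)) ⊆ s :=
    fun x hx ↦ hf fun hfx ↦ hx (by simp [hfx])
  rw [setLIntegral_eq_of_support_subset (hsupp.trans hst), setLIntegral_eq_of_support_subset hsupp]

theorem lintegral_ofReal_sq_eq_of_memLp_two {f : α → ℝ} (hf : MemLp f 2 μ) :
    ∫⁻ x, ENNReal.ofReal (f x ^ 2) ∂μ = ENNReal.ofReal (∫ x, f x ^ 2 ∂μ) :=
  (ofReal_integral_eq_lintegral_ofReal hf.integrable_sq (ae_of_all _ fun _ ↦ sq_nonneg _)).symm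

theorem IsDerivMeasureOn.energy_add_riccatiPotential_eq {u : ℝ → ℝ}
    (hν : IsDerivMeasureOn ν ψ (Ioo a b)) (hψ : MonotoneOn ψ (Ioo a b)) (hcd : c ≤ d)
    (hsub : Icc c d ⊆ Ioo a b) (hu : ContDiff ℝ 1 u) (hus : tsupport u ⊆ Ioo c d) :
    (∫⁻ x in Ioo a b, ENNReal.ofReal (deriv u x ^ 2)) +
        ∫⁻ x in Ioo a b, ENNReal.ofReal (u x ^ 2) ∂riccatiPotential a b ψ ν =
      ∫⁻ x in Ioo a b, ENNReal.ofReal ((deriv u x - ψ x * u x) ^ 2) := by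
  have hu₀ : Continuous u := hu.continuous
  have hcs : HasCompactSupport u := hasCompactSupport_of_tsupport_subset_Ioo hus
  have hν' : IsDerivMeasureOn ν ψ (Icc c d) := hν.mono hsub
  have huL2 : MemLp u 2 (ν.restrict (Ioc c d)) := by
    have := hν'.isFiniteMeasure_restrict_Ioc hcd
    exact hu₀.memLp_of_hasCompactSupport hcs
  have hu'L2 : MemLp (deriv u) 2 (volume.restrict (Ioc c d)) :=
    hu.continuous_deriv_one.memLp_of_hasCompactSupport hcs.deriv
  have hψuL2 := memLp_two_mul_of_monotoneOn (hψ.mono hsub) hu₀ hcs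
  have hdL2 : MemLp (fun x ↦ deriv u x - ψ x * u x) 2 (volume.restrict (Ioc c d)) :=
    hu'L2.sub hψuL2
  have hrestrict (μ : Measure ℝ) {f : ℝ → ℝ} (hf : Function.support f ⊆ tsupport u) :
      ∫⁻ x in Ioo a b, ENNReal.ofReal (f x ^ 2) ∂μ = ∫⁻ x in Ioc c d, ENNReal.ofReal (f x ^ 2) ∂μ :=
    setLIntegral_ofReal_sq_eq_of_support_subset (hf.trans (hus.trans Ioo_subset_Ioc_self))
      (Ioc_subset_Icc_self.trans hsub)
  have hψu : (Function.support fun x ↦ ψ x * u x) ⊆ tsupport u :=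
    (Function.support_mul_subset_right _ _).trans (subset_tsupport u)
  rw [setLIntegral_riccatiPotential hψ hu₀.measurable, ← add_assoc,
    hrestrict _ support_deriv_subset, hrestrict _ (subset_tsupport u), hrestrict _ hψu,
    hrestrict _ ((Function.support_sub _ _).trans (union_subset support_deriv_subset hψu)),
    lintegral_ofReal_sq_eq_of_memLp_two hu'L2, lintegral_ofReal_sq_eq_of_memLp_two huL2,
    lintegral_ofReal_sq_eq_of_memLp_two hψuL2, lintegral_ofReal_sq_eq_of_memLp_two hdL2,
    ← hν'.energy_eq (hψ.mono hsub) hcd hu hus, ENNReal.ofReal_add (by positivity) (by positivity),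
    ENNReal.ofReal_add (by positivity) (by positivity)]

theorem lam1_mul_le_energy (q : Measure ℝ) (hv : TestFun a b v) :
    lam1 a b q * ∫⁻ x in Ioo a b, ENNReal.ofReal (v x ^ 2) ≤
      (∫⁻ x in Ioo a b, ENNReal.ofReal (deriv v x ^ 2)) +
        ∫⁻ x in Ioo a b, ENNReal.ofReal (v x ^ 2) ∂q := by
  by_cases hv0 : ∫⁻ x in Ioo a b, ENNReal.ofReal (v x ^ 2) = 0
  · simp [hv0]
  · exact ENNReal.mul_le_of_le_div (iInf₂_le (f := fun v _ ↦ dirRQ a b q v) v ⟨hv, hv0⟩)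

theorem IsDerivMeasureOn.lam1_mul_le {u : ℝ → ℝ} (hν : IsDerivMeasureOn ν ψ (Ioo a b))
    (hψ : MonotoneOn ψ (Ioo a b)) (hcd : c ≤ d) (hsub : Icc c d ⊆ Ioo a b) (hu : ContDiff ℝ 1 u)
    (hus : tsupport u ⊆ Ioo c d) :
    lam1 a b (riccatiPotential a b ψ ν) * ∫⁻ x in Ioo a b, ENNReal.ofReal (u x ^ 2) ≤
      ∫⁻ x in Ioo a b, ENNReal.ofReal ((deriv u x - ψ x * u x) ^ 2) := by
  rw [← hν.energy_add_riccatiPotential_eq hψ hcd hsub hu hus]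
  exact lam1_mul_le_energy _ ⟨hu, fun x hx ↦ image_eq_zero_of_notMem_tsupport fun h ↦
    hx (hsub (Ioo_subset_Icc_self (hus h)))⟩

theorem exists_seq_continuous_tendsto_ae {f : ℝ → ℝ} {M : ℝ} (hf : AEStronglyMeasurable f volume)
    (hM : ∀ x, |f x| ≤ M) :
    ∃ F : ℕ → ℝ → ℝ, (∀ n, Continuous (F n)) ∧ (∀ n x, |F n x| ≤ M) ∧
      ∀ᵐ x, Tendsto (F · x) atTop (nhds (f x)) := by
  have hint : LocallyIntegrable f volume :=
    (memLp_top_of_bound hf M (ae_of_all _ hM)).locallyIntegrable le_top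
  have hii (x y : ℝ) : IntervalIntegrable f volume x y :=
    (hint.integrableOn_isCompact isCompact_uIcc).intervalIntegrable
  set h : ℕ → ℝ := fun n ↦ 1 / ((n : ℝ) + 1)
  have hpos (n : ℕ) : 0 < h n := by positivity
  have hh : Tendsto h atTop (nhdsWithin 0 (Ioi 0)) :=
    tendsto_nhdsWithin_iff.2 ⟨tendsto_one_div_add_atTop_nhds_zero_nat, .of_forall hpos⟩
  refine ⟨fun n x ↦ (h n)⁻¹ * ((∫ t in 0..x + h n, f t) - ∫ t in 0..x, f t), fun n ↦ ?_,
    fun n x ↦ ?_, ?_⟩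
  · have hP : Continuous fun x ↦ ∫ t in 0..x, f t := intervalIntegral.continuous_primitive hii 0
    fun_prop
  · beta_reduce
    rw [intervalIntegral.integral_interval_sub_left (hii _ _) (hii _ _), abs_mul,
      abs_of_pos (inv_pos.2 (hpos n)), inv_mul_le_iff₀ (hpos n), mul_comm]
    have hle := intervalIntegral.norm_integral_le_of_norm_le_const (a := x) (b := x + h n)
      (f := f) fun t _ ↦ hM t
    rwa [add_sub_cancel_left, abs_of_pos (hpos n)] at hle
  · filter_upwards [LocallyIntegrable.ae_hasDerivAt_integral hint] with x hx
    exact (hx 0).tendsto_slope_zero_right.comp hh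

theorem exists_seq_contDiff_tendsto_primitive {Λ : ℝ → ℝ} {M : ℝ}
    (hψ : AEStronglyMeasurable ψ (volume.restrict (Icc c d))) (hM : ∀ x ∈ Icc c d, |ψ x| ≤ M)
    (hM₀ : 0 ≤ M) (hΛ : ∀ x ∈ Icc c d, Λ x - Λ c = ∫ t in c..x, ψ t) :
    ∃ L : ℕ → ℝ → ℝ, (∀ n, ContDiff ℝ 1 (L n)) ∧ (∀ n x, |deriv (L n) x| ≤ M) ∧
      (∀ n, ∀ x ∈ Icc c d, L n x ≤ Λ c + M * (d - c)) ∧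
      (∀ x ∈ Icc c d, Tendsto (L · x) atTop (nhds (Λ x))) ∧
      ∀ᵐ x ∂volume.restrict (Icc c d), Tendsto (fun n ↦ deriv (L n) x) atTop (nhds (ψ x)) := by
  obtain ⟨F, hFc, hFM, hF⟩ := exists_seq_continuous_tendsto_ae
    ((aestronglyMeasurable_indicator_iff measurableSet_Icc).2 hψ) (M := M) fun x ↦ by
      by_cases hx : x ∈ Icc c d <;> simp [hx, hM₀, hM x]
  have hFψ : ∀ᵐ x, x ∈ Icc c d → Tendsto (F · x) atTop (nhds (ψ x)) := by
    filter_upwards [hF] with x hx hxI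
    rwa [indicator_of_mem hxI] at hx
  have hderiv (n : ℕ) (x : ℝ) : HasDerivAt (fun y ↦ Λ c + ∫ t in c..y, F n t) (F n x) x :=
    ((hFc n).integral_hasStrictDerivAt c x).hasDerivAt.const_add _
  have hderiv' (n : ℕ) : deriv (fun y ↦ Λ c + ∫ t in c..y, F n t) = F n :=
    funext fun x ↦ (hderiv n x).deriv
  refine ⟨fun n y ↦ Λ c + ∫ t in c..y, F n t, fun n ↦ ?_, fun n x ↦ ?_, fun n x hx ↦ ?_,
    fun x hx ↦ ?_, ?_⟩
  · exact contDiff_one_iff_deriv.2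
      ⟨fun x ↦ (hderiv n x).differentiableAt, (hderiv' n).symm ▸ hFc n⟩
  · rw [hderiv']
    exact hFM n x
  · have hle := intervalIntegral.norm_integral_le_of_norm_le_const (a := c) (b := x) (f := F n)
      fun t _ ↦ hFM n t
    rw [abs_of_nonneg (sub_nonneg.2 hx.1)] at hle
    have := mul_le_mul_of_nonneg_left (sub_le_sub_right hx.2 c) hM₀
    simp only [add_le_add_iff_left]
    exact (le_abs_self _).trans (hle.trans this)
  · have hlim : Tendsto (fun n ↦ ∫ t in c..x, F n t) atTop (nhds (∫ t in c..x, ψ t)) := by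
      refine intervalIntegral.tendsto_integral_filter_of_dominated_convergence (fun _ ↦ M)
        (.of_forall fun n ↦ (hFc n).aestronglyMeasurable)
        (.of_forall fun n ↦ ae_of_all _ fun t _ ↦ hFM n t) intervalIntegrable_const ?_
      filter_upwards [hFψ] with t ht htx
      rw [uIoc_of_le hx.1] at htx
      exact ht ⟨htx.1.le, htx.2.trans hx.2⟩
    rw [← hΛ x hx] at hlim
    simpa using hlim.const_add (Λ c)
  · simp only [hderiv']
    exact (ae_restrict_iff' measurableSet_Icc).2 hFψ

theorem tendsto_lintegral_ofReal_sq_of_bounded [IsFiniteMeasure μ] {F : ℕ → α → ℝ} {f : α → ℝ}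
    {C : ℝ} (hF : ∀ n, AEMeasurable (F n) μ) (hC : ∀ n, ∀ᵐ x ∂μ, |F n x| ≤ C)
    (hlim : ∀ᵐ x ∂μ, Tendsto (F · x) atTop (nhds (f x))) :
    Tendsto (fun n ↦ ∫⁻ x, ENNReal.ofReal (F n x ^ 2) ∂μ) atTop
      (nhds (∫⁻ x, ENNReal.ofReal (f x ^ 2) ∂μ)) := by
  refine tendsto_lintegral_of_dominated_convergence' (fun _ ↦ ENNReal.ofReal (C ^ 2))
    (fun n ↦ by have := hF n; fun_prop) (fun n ↦ ?_)
    (by simpa using ENNReal.mul_ne_top ENNReal.ofReal_ne_top (measure_ne_top μ univ)) ?_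
  · filter_upwards [hC n] with x hx
    exact ENNReal.ofReal_le_ofReal (sq_le_sq' (abs_le.1 hx).1 (abs_le.1 hx).2)
  · filter_upwards [hlim] with x hx
    exact ENNReal.tendsto_ofReal (hx.pow 2)

theorem tendsto_lintegral_ofReal_sq_exp_mul [IsFiniteMeasure μ] {L H : ℕ → α → ℝ} {Λ h : α → ℝ}
    {A B : ℝ} (hL : ∀ n, AEMeasurable (L n) μ) (hH : ∀ n, AEMeasurable (H n) μ)
    (hLA : ∀ n, ∀ᵐ x ∂μ, L n x ≤ A) (hHB : ∀ n, ∀ᵐ x ∂μ, |H n x| ≤ B)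
    (hLΛ : ∀ᵐ x ∂μ, Tendsto (L · x) atTop (nhds (Λ x)))
    (hHh : ∀ᵐ x ∂μ, Tendsto (H · x) atTop (nhds (h x))) :
    Tendsto (fun n ↦ ∫⁻ x, ENNReal.ofReal ((exp (L n x) * H n x) ^ 2) ∂μ) atTop
      (nhds (∫⁻ x, ENNReal.ofReal ((exp (Λ x) * h x) ^ 2) ∂μ)) := by
  refine tendsto_lintegral_ofReal_sq_of_bounded (C := exp A * B)
    (fun n ↦ (hL n).exp.mul (hH n)) (fun n ↦ ?_) ?_
  · filter_upwards [hLA n, hHB n] with x hx hx'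
    rw [abs_mul, abs_exp]
    gcongr
  · filter_upwards [hLΛ, hHh] with x hx hx'
    exact (continuous_exp.continuousAt.tendsto.comp hx).mul hx'

theorem IsDerivMeasureOn.lam1_mul_exp_le {L : ℝ → ℝ} (hν : IsDerivMeasureOn ν ψ (Ioo a b))
    (hψ : MonotoneOn ψ (Ioo a b)) (hcd : c ≤ d) (hsub : Icc c d ⊆ Ioo a b) (hL : ContDiff ℝ 1 L)
    (hG : ContDiff ℝ 1 G) (hGs : tsupport G ⊆ Ioo c d) :
    lam1 a b (riccatiPotential a b ψ ν) *
        ∫⁻ x in Ioo a b, ENNReal.ofReal ((exp (L x) * G x) ^ 2) ≤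
      ∫⁻ x in Ioo a b,
        ENNReal.ofReal ((exp (L x) * (deriv G x + (deriv L x - ψ x) * G x)) ^ 2) := by
  refine (hν.lam1_mul_le hψ hcd hsub (hL.exp.mul hG)
    (tsupport_mul_subset_right.trans hGs)).trans_eq ?_
  have hderiv (x : ℝ) : deriv (fun x ↦ exp (L x) * G x) x =
      exp (L x) * deriv L x * G x + exp (L x) * deriv G x :=
    ((hL.differentiable_one x).hasDerivAt.exp.mul (hG.differentiable_one x).hasDerivAt).deriv
  congr with x
  rw [hderiv]
  ring_nf

theorem tendsto_lintegral_ofReal_sq_exp_mul_deriv_add {L : ℕ → ℝ → ℝ} {Λ : ℝ → ℝ} {A M : ℝ}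
    {μ : Measure ℝ} [IsFiniteMeasure μ] (hL : ∀ n, ContDiff ℝ 1 (L n)) (hψ : AEMeasurable ψ μ)
    (hLA : ∀ n, ∀ᵐ x ∂μ, L n x ≤ A) (hLM : ∀ n x, |deriv (L n) x| ≤ M) (hψM : ∀ᵐ x ∂μ, |ψ x| ≤ M)
    (hLΛ : ∀ᵐ x ∂μ, Tendsto (L · x) atTop (nhds (Λ x)))
    (hLψ : ∀ᵐ x ∂μ, Tendsto (fun n ↦ deriv (L n) x) atTop (nhds (ψ x))) (hG : ContDiff ℝ 1 G)
    (hGc : HasCompactSupport G) :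
    Tendsto (fun n ↦ ∫⁻ x, ENNReal.ofReal
        ((exp (L n x) * (deriv G x + (deriv (L n) x - ψ x) * G x)) ^ 2) ∂μ) atTop
      (nhds (∫⁻ x, ENNReal.ofReal ((exp (Λ x) * deriv G x) ^ 2) ∂μ)) := by
  have hG₀ : Continuous G := hG.continuous
  have hG' : Continuous (deriv G) := hG.continuous_deriv_one
  obtain ⟨K, hK⟩ := hG₀.bounded_above_of_compact_support hGc
  obtain ⟨K', hK'⟩ := hG'.bounded_above_of_compact_support hGc.deriv
  refine tendsto_lintegral_ofReal_sq_exp_mul (B := K' + (M + M) * K)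
    (fun n ↦ (hL n).continuous.aemeasurable) (fun n ↦ by fun_prop) hLA (fun n ↦ ?_) hLΛ ?_
  · filter_upwards [hψM] with x hx
    refine (abs_add_le _ _).trans ?_
    rw [abs_mul]
    have hM : 0 ≤ M := (abs_nonneg _).trans hx
    gcongr
    exacts [hK' x, (abs_sub _ _).trans (add_le_add (hLM n x) hx), hK x]
  · filter_upwards [hLψ] with x hx
    simpa using ((hx.sub_const (ψ x)).mul_const (G x)).const_add (deriv G x)

/-- The regularisation of `Λ` is needed because `exp Λ * G` is only Lipschitz where `ψ` jumps. -/
theorem IsDerivMeasureOn.lam1_mul_exp_primitive_le {Λ : ℝ → ℝ}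
    (hν : IsDerivMeasureOn ν ψ (Ioo a b)) (hψ : MonotoneOn ψ (Ioo a b)) (hcd : c ≤ d)
    (hsub : Icc c d ⊆ Ioo a b) (hΛ : ∀ x ∈ Icc c d, Λ x - Λ c = ∫ t in c..x, ψ t)
    (hG : ContDiff ℝ 1 G) (hGs : tsupport G ⊆ Ioo c d) :
    lam1 a b (riccatiPotential a b ψ ν) *
        ∫⁻ x in Ioo a b, ENNReal.ofReal ((exp (Λ x) * G x) ^ 2) ≤
      ∫⁻ x in Ioo a b, ENNReal.ofReal ((exp (Λ x) * deriv G x) ^ 2) := by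
  have hψ' : MonotoneOn ψ (Icc c d) := hψ.mono hsub
  have hψm : AEMeasurable ψ (volume.restrict (Icc c d)) :=
    aemeasurable_restrict_of_monotoneOn measurableSet_Icc hψ'
  obtain ⟨M, hM₀, hM⟩ : ∃ M, 0 ≤ M ∧ ∀ x ∈ Icc c d, |ψ x| ≤ M :=
    ⟨max |ψ c| |ψ d|, by positivity, fun x hx ↦ abs_le_max_abs_abs
      (hψ' (left_mem_Icc.2 hcd) hx hx.1) (hψ' hx (right_mem_Icc.2 hcd) hx.2)⟩
  obtain ⟨L, hLdiff, hLM, hLle, hLΛ, hLψ⟩ :=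
    exists_seq_contDiff_tendsto_primitive hψm.aestronglyMeasurable hM hM₀ hΛ
  have hcs : HasCompactSupport G := hasCompactSupport_of_tsupport_subset_Ioo hGs
  obtain ⟨K, hK⟩ := hG.continuous.bounded_above_of_compact_support hcs
  have hrestrict {f : ℝ → ℝ} (hf : Function.support f ⊆ tsupport G) :
      ∫⁻ x in Ioo a b, ENNReal.ofReal (f x ^ 2) = ∫⁻ x in Icc c d, ENNReal.ofReal (f x ^ 2) :=
    setLIntegral_ofReal_sq_eq_of_support_subset (hf.trans (hGs.trans Ioo_subset_Icc_self)) hsub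
  have hmem : ∀ᵐ x ∂volume.restrict (Icc c d), x ∈ Icc c d := ae_restrict_mem measurableSet_Icc
  have hleft := tendsto_lintegral_ofReal_sq_exp_mul (H := fun _ ↦ G)
    (fun n ↦ (hLdiff n).continuous.aemeasurable) (fun _ ↦ hG.continuous.aemeasurable)
    (fun n ↦ hmem.mono (hLle n)) (fun _ ↦ ae_of_all _ hK) (hmem.mono hLΛ)
    (ae_of_all _ fun _ ↦ tendsto_const_nhds)
  have hright := tendsto_lintegral_ofReal_sq_exp_mul_deriv_add hLdiff hψm
    (fun n ↦ hmem.mono (hLle n)) hLM (hmem.mono hM) (hmem.mono hLΛ) hLψ hG hcs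
  have hGsupp (f : ℝ → ℝ) : (Function.support fun x ↦ f x * G x) ⊆ tsupport G :=
    (Function.support_mul_subset_right _ _).trans (subset_tsupport G)
  have hG'supp : (Function.support fun x ↦ exp (Λ x) * deriv G x) ⊆ tsupport G :=
    (Function.support_mul_subset_right _ _).trans support_deriv_subset
  rw [hrestrict (hGsupp _), hrestrict hG'supp]
  by_cases h₀ : ∫⁻ x in Icc c d, ENNReal.ofReal ((exp (Λ x) * G x) ^ 2) = 0
  · simp [h₀]
  refine le_of_tendsto_of_tendsto' (ENNReal.Tendsto.const_mul hleft (.inl h₀)) hright fun n ↦ ?_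
  have hn := hν.lam1_mul_exp_le hψ hcd hsub (hLdiff n) hG hGs
  rwa [hrestrict (hGsupp _), hrestrict ((Function.support_mul_subset_right _ _).trans
    ((Function.support_add _ _).trans (union_subset support_deriv_subset (hGsupp _))))] at hn

/-- The first eigenvalue of the dual weighted Dirichlet problem `-(G' / p)' = λ G / p` on `(a, b)`,
with compactly supported `C¹` test functions. -/
def dualLam1 (a b : ℝ) (p : ℝ → ℝ) : ℝ≥0∞ :=
  ⨅ (G : ℝ → ℝ) (_ : ContDiff ℝ 1 G ∧ tsupport G ⊆ Ioo a b ∧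
      ∫⁻ x in Ioo a b, ENNReal.ofReal (G x ^ 2 / p x) ≠ 0),
    (∫⁻ x in Ioo a b, ENNReal.ofReal (deriv G x ^ 2 / p x)) /
      ∫⁻ x in Ioo a b, ENNReal.ofReal (G x ^ 2 / p x)

theorem exists_Icc_subset_of_isCompact_subset_Ioo {K : Set ℝ} (hab : a < b) (hK : IsCompact K)
    (hKab : K ⊆ Ioo a b) : ∃ c d, c ≤ d ∧ Icc c d ⊆ Ioo a b ∧ K ⊆ Ioo c d := by
  have hm : (a + b) / 2 ∈ Ioo a b := ⟨by linarith, by linarith⟩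
  have hK' : IsCompact (insert ((a + b) / 2) K) := hK.insert _
  have hsub : insert ((a + b) / 2) K ⊆ Ioo a b := insert_subset hm hKab
  obtain ⟨m, hmK, hmin⟩ := hK'.exists_isLeast (insert_nonempty _ _)
  obtain ⟨M, hMK, hmax⟩ := hK'.exists_isGreatest (insert_nonempty _ _)
  obtain ⟨c, hac, hcm⟩ := exists_between (hsub hmK).1
  obtain ⟨d, hMd, hdb⟩ := exists_between (hsub hMK).2
  exact ⟨c, d, hcm.le.trans ((hmin hMK).trans hMd.le), Icc_subset_Ioo hac hdb, fun x hx ↦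
    ⟨hcm.trans_le (hmin (mem_insert_of_mem _ hx)), (hmax (mem_insert_of_mem _ hx)).trans_lt hMd⟩⟩

theorem integrable_mul_of_tsupport_subset [TopologicalSpace α] [OpensMeasurableSpace α]
    [IsFiniteMeasureOnCompacts μ] {s : Set α} {f g : α → ℝ} (hs : IsOpen s)
    (hf : ContinuousOn f s) (hg : Continuous g) (hgs : tsupport g ⊆ s) (hgc : HasCompactSupport g) :
    Integrable (fun x ↦ f x * g x) μ :=
  ((hf.mul hg.continuousOn).continuous_of_tsupport_subset hs
    (tsupport_mul_subset_right.trans hgs)).integrable_of_hasCompactSupport hgc.mul_left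

theorem setLIntegral_sq_div_ne_top (hp : ContinuousOn p (Ioo a b)) (hpos : ∀ x ∈ Ioo a b, 0 < p x)
    (hG : Continuous G) (hGs : tsupport G ⊆ Ioo a b) :
    ∫⁻ x in Ioo a b, ENNReal.ofReal (G x ^ 2 / p x) ≠ ∞ := by
  have hcont : ContinuousOn (fun x ↦ G x / p x) (Ioo a b) :=
    hG.continuousOn.div hp fun x hx ↦ (hpos x hx).ne'
  have hint := integrable_mul_of_tsupport_subset (μ := volume) isOpen_Ioo hcont hG hGs
    (hasCompactSupport_of_tsupport_subset_Ioo hGs)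
  have hcomm : (fun x ↦ G x / p x * G x) = fun x ↦ G x ^ 2 / p x := by
    ext x
    ring
  exact (hcomm ▸ hint).integrableOn.lintegral_lt_top.ne

theorem IsDerivMeasureOn.lam1_le_dualLam1 (hν : IsDerivMeasureOn ν ψ (Ioo a b))
    (hψ : MonotoneOn ψ (Ioo a b)) (hab : a < b) (hpos : ∀ x ∈ Ioo a b, 0 < p x)
    (hpc : ContinuousOn p (Ioo a b))
    (hlog : ∀ x ∈ Ioo a b, ∀ y ∈ Ioo a b, log (p y) - log (p x) = -2 * ∫ t in x..y, ψ t) :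
    lam1 a b (riccatiPotential a b ψ ν) ≤ dualLam1 a b p := by
  refine le_iInf₂ fun G ⟨hG, hGs, hG0⟩ ↦ ?_
  obtain ⟨c, d, hcd, hsub, hGcd⟩ := exists_Icc_subset_of_isCompact_subset_Ioo hab
    (hasCompactSupport_of_tsupport_subset_Ioo hGs) hGs
  have hΛ : ∀ x ∈ Icc c d, -log (p x) / 2 - -log (p c) / 2 = ∫ t in c..x, ψ t := fun x hx ↦ by
    linarith [hlog c (hsub (left_mem_Icc.2 hcd)) x (hsub hx)]
  have hexp (f : ℝ → ℝ) : ∫⁻ x in Ioo a b, ENNReal.ofReal ((exp (-log (p x) / 2) * f x) ^ 2) =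
      ∫⁻ x in Ioo a b, ENNReal.ofReal (f x ^ 2 / p x) := by
    refine setLIntegral_congr_fun measurableSet_Ioo fun x hx ↦ ?_
    rw [mul_pow, ← exp_nat_mul, Nat.cast_ofNat, mul_div_cancel₀ _ two_ne_zero, exp_neg,
      exp_log (hpos x hx), inv_mul_eq_div]
  rw [ENNReal.le_div_iff_mul_le (.inl hG0)
    (.inl (setLIntegral_sq_div_ne_top hpc hpos hG.continuous hGs)), ← hexp, ← hexp]
  exact hν.lam1_mul_exp_primitive_le hψ hcd hsub hΛ hG hGcd

theorem enorm_integral_mul_sq_le {f g : α → ℝ} (hf : AEMeasurable f μ) (hg : AEMeasurable g μ) :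
    ‖∫ x, f x * g x ∂μ‖ₑ ^ 2 ≤
      (∫⁻ x, ENNReal.ofReal (f x ^ 2) ∂μ) * ∫⁻ x, ENNReal.ofReal (g x ^ 2) ∂μ := by
  have hsq (y : ℝ) : ENNReal.ofReal (y ^ 2) = ‖y‖ₑ ^ (2 : ℝ) := by
    rw [← sq_abs, ENNReal.ofReal_pow (abs_nonneg y), ← Real.enorm_eq_ofReal_abs,
      ENNReal.rpow_two]
  have hroot (A : ℝ≥0∞) : (A ^ (1 / 2 : ℝ)) ^ 2 = A := by
    rw [← ENNReal.rpow_two, ← ENNReal.rpow_mul, one_div, inv_mul_cancel₀ two_ne_zero,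
      ENNReal.rpow_one]
  simp only [hsq]
  calc ‖∫ x, f x * g x ∂μ‖ₑ ^ 2 ≤ (∫⁻ x, ‖f x‖ₑ * ‖g x‖ₑ ∂μ) ^ 2 := by
        gcongr
        simpa only [enorm_mul] using enorm_integral_le_lintegral_enorm fun x ↦ f x * g x
    _ ≤ ((∫⁻ x, ‖f x‖ₑ ^ (2 : ℝ) ∂μ) ^ (1 / 2 : ℝ) *
          (∫⁻ x, ‖g x‖ₑ ^ (2 : ℝ) ∂μ) ^ (1 / 2 : ℝ)) ^ 2 := by
        gcongr
        exact ENNReal.lintegral_mul_le_Lp_mul_Lq μ .two_two hf.enorm hg.enorm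
    _ = (∫⁻ x, ‖f x‖ₑ ^ (2 : ℝ) ∂μ) * ∫⁻ x, ‖g x‖ₑ ^ (2 : ℝ) ∂μ := by
        rw [mul_pow, hroot, hroot]

theorem enorm_setIntegral_mul_sq_le_of_weight {s : Set α} {w f g : α → ℝ} (hs : MeasurableSet s)
    (hpos : ∀ x ∈ s, 0 < w x) (hw : AEMeasurable w (μ.restrict s))
    (hf : AEMeasurable f (μ.restrict s)) (hg : AEMeasurable g (μ.restrict s)) :
    ‖∫ x in s, f x * g x ∂μ‖ₑ ^ 2 ≤
      (∫⁻ x in s, ENNReal.ofReal (f x ^ 2 * w x) ∂μ) *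
        ∫⁻ x in s, ENNReal.ofReal (g x ^ 2 / w x) ∂μ := by
  have hcs := enorm_integral_mul_sq_le (hf.mul hw.sqrt) (hg.div hw.sqrt)
  refine (le_of_eq ?_).trans (hcs.trans (le_of_eq ?_))
  · congr 2
    refine setIntegral_congr_fun hs fun x hx ↦ ?_
    have hsqrt := (Real.sqrt_pos.2 (hpos x hx)).ne'
    simp only [Pi.mul_apply, Pi.div_apply]
    field_simp
  · congr 1 <;> refine setLIntegral_congr_fun hs fun x hx ↦ ?_
    · simp only [Pi.mul_apply, mul_pow, Real.sq_sqrt (hpos x hx).le]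
    · simp only [Pi.div_apply, div_pow, Real.sq_sqrt (hpos x hx).le]

theorem contDiff_of_contDiffOn_of_tsupport_subset {𝕜 E F : Type*} [NontriviallyNormedField 𝕜]
    [NormedAddCommGroup E] [NormedSpace 𝕜 E] [NormedAddCommGroup F] [NormedSpace 𝕜 F]
    {n : WithTop ℕ∞} {s : Set E} {f : E → F} (hf : ContDiffOn 𝕜 n f s) (hs : IsOpen s)
    (hfs : tsupport f ⊆ s) : ContDiff 𝕜 n f := by
  refine contDiff_iff_contDiffAt.2 fun x ↦ ?_
  by_cases hx : x ∈ tsupport f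
  · exact hf.contDiffAt (hs.mem_nhds (hfs hx))
  · exact contDiffAt_const.congr_of_eventuallyEq (notMem_tsupport_iff_eventuallyEq.1 hx)

theorem integral_mul_deriv_eq_neg_deriv_mul {s : Set ℝ} (hs : IsOpen s) (hv : ContDiffOn ℝ 1 v s)
    (hG : ContDiff ℝ 1 G) (hGs : tsupport G ⊆ s) (hGc : HasCompactSupport G) :
    ∫ x in s, v x * deriv G x = -∫ x in s, deriv v x * G x := by
  have hv' : ContinuousOn (deriv v) s := hv.continuousOn_deriv_of_isOpen hs le_rfl
  have hw : ContDiff ℝ 1 fun x ↦ v x * G x :=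
    contDiff_of_contDiffOn_of_tsupport_subset (hv.mul hG.contDiffOn) hs
      (tsupport_mul_subset_right.trans hGs)
  have hint₁ : Integrable fun x ↦ deriv v x * G x :=
    integrable_mul_of_tsupport_subset hs hv' hG.continuous hGs hGc
  have hint₂ : Integrable fun x ↦ v x * deriv G x :=
    integrable_mul_of_tsupport_subset hs hv.continuousOn hG.continuous_deriv_one
      (tsupport_deriv_subset.trans hGs) hGc.deriv
  have hderiv : ∀ x ∈ s, deriv (fun x ↦ v x * G x) x = deriv v x * G x + v x * deriv G x :=
    fun x hx ↦ deriv_fun_mul ((hv.differentiableOn one_ne_zero).differentiableAt (hs.mem_nhds hx))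
      (hG.differentiable one_ne_zero x)
  have hzero : ∫ x in s, deriv (fun x ↦ v x * G x) x = 0 := by
    have hsupp : Function.support (deriv fun x ↦ v x * G x) ⊆ s :=
      support_deriv_subset.trans (tsupport_mul_subset_right.trans hGs)
    rw [setIntegral_eq_integral_of_forall_compl_eq_zero fun x hx ↦
      Function.notMem_support.1 fun hx' ↦ hx (hsupp hx')]
    exact integral_eq_zero_of_hasDerivAt_of_integrable
      (fun x ↦ (hw.differentiable one_ne_zero x).hasDerivAt)
      (hw.continuous_deriv_one.integrable_of_hasCompactSupport hGc.mul_left.deriv)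
      (hw.continuous.integrable_of_hasCompactSupport hGc.mul_left)
  rw [setIntegral_congr_fun hs.measurableSet hderiv,
    integral_add hint₁.integrableOn hint₂.integrableOn] at hzero
  linarith

theorem tsupport_comp_subset_support_of_eventuallyEq_zero {X Y Z : Type*} [TopologicalSpace X]
    [TopologicalSpace Y] [Zero Y] [Zero Z] {T : Y → Z} {g : X → Y} (hg : Continuous g)
    (hT : T =ᶠ[nhds 0] 0) : tsupport (fun x ↦ T (g x)) ⊆ Function.support g := by
  intro x hx hgx
  have hcomp : Tendsto g (nhds x) (nhds 0) := hgx ▸ hg.continuousAt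
  exact notMem_tsupport_iff_eventuallyEq.2 (hcomp.eventually hT) hx

theorem intervalIntegral_eventuallyEq_zero {h : ℝ → ℝ} (hh : h =ᶠ[nhds 0] 0) :
    (fun y ↦ ∫ t in (0 : ℝ)..y, h t) =ᶠ[nhds 0] 0 := by
  obtain ⟨ε, hε, hball⟩ := Metric.eventually_nhds_iff_ball.1 hh
  filter_upwards [Metric.ball_mem_nhds 0 hε] with y hy
  have hsub : uIcc 0 y ⊆ Metric.ball 0 ε := by
    rw [← segment_eq_uIcc]
    exact (convex_ball 0 ε).segment_subset (Metric.mem_ball_self hε) hy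
  rw [intervalIntegral.integral_congr fun t ht ↦ hball t (hsub ht)]
  simp

theorem exists_contDiff_deriv_eq_comp_mul {s : Set ℝ} {f g h : ℝ → ℝ} (hs : IsOpen s)
    (hf : ContinuousOn f s) (hg : Continuous g) (hgs : Function.support g ⊆ s)
    (hg' : ∀ x ∈ s, HasDerivAt g (f x) x) (hh : Continuous h) (hh₀ : h =ᶠ[nhds 0] 0) :
    ∃ G : ℝ → ℝ, ContDiff ℝ 1 G ∧ tsupport G ⊆ s ∧ ∀ x ∈ s, deriv G x = h (g x) * f x := by
  let T : ℝ → ℝ := fun y ↦ ∫ t in (0 : ℝ)..y, h t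
  have hG' : ∀ x ∈ s, HasDerivAt (fun x ↦ T (g x)) (h (g x) * f x) x := fun x hx ↦
    (hh.integral_hasStrictDerivAt 0 (g x)).hasDerivAt.comp x (hg' x hx)
  have hGs : tsupport (fun x ↦ T (g x)) ⊆ s :=
    (tsupport_comp_subset_support_of_eventuallyEq_zero hg
      (intervalIntegral_eventuallyEq_zero hh₀)).trans hgs
  have hderiv : EqOn (deriv fun x ↦ T (g x)) (fun x ↦ h (g x) * f x) s :=
    fun x hx ↦ (hG' x hx).deriv
  have hcont : ContDiffOn ℝ 1 (fun x ↦ T (g x)) s := by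
    refine (contDiffOn_succ_iff_deriv_of_isOpen (n := 0) hs).2
      ⟨fun x hx ↦ (hG' x hx).differentiableAt.differentiableWithinAt, by simp, ?_⟩
    exact contDiffOn_zero.2 (((hh.comp hg).continuousOn.mul hf).congr hderiv)
  exact ⟨_, contDiff_of_contDiffOn_of_tsupport_subset hcont hs hGs, hGs, hderiv⟩

theorem exists_continuous_primitive_of_setIntegral_eq_zero {f : ℝ → ℝ}
    (hfc : ContinuousOn f (Ioo a b)) (hfi : IntegrableOn f (Ioo a b))
    (hf₀ : ∫ x in Ioo a b, f x = 0) :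
    ∃ g : ℝ → ℝ, Continuous g ∧ Function.support g ⊆ Ioo a b ∧
      ∀ x ∈ Ioo a b, HasDerivAt g (f x) x := by
  let F : ℝ → ℝ := (Ioo a b).indicator f
  have hF : Integrable F := hfi.integrable_indicator measurableSet_Ioo
  have hFf : ∀ x ∈ Ioo a b, F =ᶠ[nhds x] f := fun x hx ↦
    eventuallyEq_of_mem (isOpen_Ioo.mem_nhds hx) eqOn_indicator
  have hIic (x : ℝ) : ∫ t in Iic x, F t = ∫ t in Iic x ∩ Ioo a b, f t :=
    setIntegral_indicator measurableSet_Ioo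
  have hleft : ∀ x ≤ a, Iic x ∩ Ioo a b = ∅ := fun x hx ↦
    eq_empty_of_forall_notMem fun t ht ↦ (ht.1.trans hx).not_gt ht.2.1
  have hg (x : ℝ) : ∫ t in a..x, F t = ∫ t in Iic x ∩ Ioo a b, f t := by
    rw [← intervalIntegral.integral_Iic_sub_Iic hF.integrableOn hF.integrableOn, hIic, hIic,
      hleft a le_rfl, setIntegral_empty, sub_zero]
  refine ⟨fun x ↦ ∫ t in a..x, F t, hF.continuous_primitive a, fun x hx ↦ ?_, fun x hx ↦ ?_⟩
  · contrapose! hx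
    rw [Function.notMem_support, hg]
    rcases le_or_gt x a with hxa | hax
    · rw [hleft x hxa, setIntegral_empty]
    · have hbx : b ≤ x := not_lt.1 fun hxb ↦ hx ⟨hax, hxb⟩
      rw [inter_eq_right.2 fun t ht ↦ ht.2.le.trans hbx, hf₀]
  · rw [← (hFf x hx).eq_of_nhds]
    exact intervalIntegral.integral_hasDerivAt_right hF.intervalIntegrable
      hF.aestronglyMeasurable.stronglyMeasurableAtFilter
      ((hfc.continuousAt (isOpen_Ioo.mem_nhds hx)).congr (hFf x hx).symm)

theorem dualLam1_mul_le (hG : ContDiff ℝ 1 G) (hGs : tsupport G ⊆ Ioo a b) :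
    dualLam1 a b p * ∫⁻ x in Ioo a b, ENNReal.ofReal (G x ^ 2 / p x) ≤
      ∫⁻ x in Ioo a b, ENNReal.ofReal (deriv G x ^ 2 / p x) := by
  rcases eq_or_ne (∫⁻ x in Ioo a b, ENNReal.ofReal (G x ^ 2 / p x)) 0 with hG₀ | hG₀
  · simp [hG₀]
  · exact ENNReal.mul_le_of_le_div (iInf₂_le G ⟨hG, hGs, hG₀⟩)

theorem ofReal_integral_mul_deriv_sq_le (hpos : ∀ x ∈ Ioo a b, 0 < p x)
    (hpc : ContinuousOn p (Ioo a b)) (hv : ContDiffOn ℝ 1 v (Ioo a b)) (hG : ContDiff ℝ 1 G)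
    (hGs : tsupport G ⊆ Ioo a b) :
    ENNReal.ofReal (∫ x in Ioo a b, v x * deriv G x) ^ 2 ≤
      (∫⁻ x in Ioo a b, ENNReal.ofReal (deriv v x ^ 2 * p x)) *
        ∫⁻ x in Ioo a b, ENNReal.ofReal (G x ^ 2 / p x) := by
  have hv' : ContinuousOn (deriv v) (Ioo a b) := hv.continuousOn_deriv_of_isOpen isOpen_Ioo le_rfl
  calc ENNReal.ofReal (∫ x in Ioo a b, v x * deriv G x) ^ 2
      ≤ ‖∫ x in Ioo a b, v x * deriv G x‖ₑ ^ 2 := by gcongr; exact Real.ofReal_le_enorm _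
    _ = ‖∫ x in Ioo a b, deriv v x * G x‖ₑ ^ 2 := by
        rw [integral_mul_deriv_eq_neg_deriv_mul isOpen_Ioo hv hG hGs
          (hasCompactSupport_of_tsupport_subset_Ioo hGs), enorm_neg]
    _ ≤ _ := enorm_setIntegral_mul_sq_le_of_weight measurableSet_Ioo hpos
        (hpc.aemeasurable measurableSet_Ioo) (hv'.aemeasurable measurableSet_Ioo)
        hG.continuous.aemeasurable

theorem dualLam1_mul_integral_mul_deriv_le (hpos : ∀ x ∈ Ioo a b, 0 < p x)
    (hpc : ContinuousOn p (Ioo a b)) (hv : ContDiffOn ℝ 1 v (Ioo a b)) (hG : ContDiff ℝ 1 G)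
    (hGs : tsupport G ⊆ Ioo a b)
    (hGv : ∫⁻ x in Ioo a b, ENNReal.ofReal (deriv G x ^ 2 / p x) ≤
      ENNReal.ofReal (∫ x in Ioo a b, v x * deriv G x)) :
    dualLam1 a b p * ENNReal.ofReal (∫ x in Ioo a b, v x * deriv G x) ≤
      ∫⁻ x in Ioo a b, ENNReal.ofReal (deriv v x ^ 2 * p x) := by
  set A := ENNReal.ofReal (∫ x in Ioo a b, v x * deriv G x)
  set B := ∫⁻ x in Ioo a b, ENNReal.ofReal (G x ^ 2 / p x)
  set D := ∫⁻ x in Ioo a b, ENNReal.ofReal (deriv v x ^ 2 * p x)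
  rcases eq_or_ne A 0 with hA | hA
  · simp [hA]
  rw [← ENNReal.mul_le_mul_iff_left hA ENNReal.ofReal_ne_top]
  calc dualLam1 a b p * A * A = dualLam1 a b p * A ^ 2 := by ring
    _ ≤ dualLam1 a b p * (D * B) := by
        gcongr
        exact ofReal_integral_mul_deriv_sq_le hpos hpc hv hG hGs
    _ = D * (dualLam1 a b p * B) := by ring
    _ ≤ D * A := by
        gcongr
        exact (dualLam1_mul_le hG hGs).trans hGv

theorem dualLam1_mul_lintegral_comp_mul_le {g h : ℝ → ℝ} (hpos : ∀ x ∈ Ioo a b, 0 < p x)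
    (hpc : ContinuousOn p (Ioo a b)) (hv : ContDiffOn ℝ 1 v (Ioo a b)) (hg : Continuous g)
    (hgs : Function.support g ⊆ Ioo a b) (hg' : ∀ x ∈ Ioo a b, HasDerivAt g (v x * p x) x)
    (hh : Continuous h) (hh₀ : h =ᶠ[nhds 0] 0) (hh₁ : ∀ y, h y ∈ Icc 0 1) :
    dualLam1 a b p * ∫⁻ x in Ioo a b, ENNReal.ofReal (h (g x) * (v x ^ 2 * p x)) ≤
      ∫⁻ x in Ioo a b, ENNReal.ofReal (deriv v x ^ 2 * p x) := by
  obtain ⟨G, hG, hGs, hG'⟩ := exists_contDiff_deriv_eq_comp_mul isOpen_Ioo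
    (hv.continuousOn.fun_mul hpc) hg hgs hg' hh hh₀
  have hvG : ∀ x ∈ Ioo a b, v x * deriv G x = h (g x) * (v x ^ 2 * p x) := fun x hx ↦ by
    rw [hG' x hx]
    ring
  have hnonneg : ∀ x ∈ Ioo a b, 0 ≤ v x ^ 2 * p x :=
    fun x hx ↦ mul_nonneg (sq_nonneg _) (hpos x hx).le
  have hint : Integrable fun x ↦ v x * deriv G x :=
    integrable_mul_of_tsupport_subset isOpen_Ioo hv.continuousOn hG.continuous_deriv_one
      (tsupport_deriv_subset.trans hGs) (hasCompactSupport_of_tsupport_subset_Ioo hGs).deriv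
  have hA : ENNReal.ofReal (∫ x in Ioo a b, v x * deriv G x) =
      ∫⁻ x in Ioo a b, ENNReal.ofReal (h (g x) * (v x ^ 2 * p x)) := by
    rw [ofReal_integral_eq_lintegral_ofReal hint.integrableOn]
    · exact setLIntegral_congr_fun measurableSet_Ioo fun x hx ↦ by rw [hvG x hx]
    · filter_upwards [ae_restrict_mem measurableSet_Ioo] with x hx
      rw [Pi.zero_apply, hvG x hx]
      exact mul_nonneg (hh₁ (g x)).1 (hnonneg x hx)
  rw [← hA]
  refine dualLam1_mul_integral_mul_deriv_le hpos hpc hv hG hGs ?_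
  rw [hA]
  refine setLIntegral_mono' measurableSet_Ioo fun x hx ↦ ENNReal.ofReal_le_ofReal ?_
  have hquot : deriv G x ^ 2 / p x = h (g x) * (h (g x) * (v x ^ 2 * p x)) := by
    have hpx := (hpos x hx).ne'
    rw [hG' x hx]
    field_simp
  rw [hquot]
  exact mul_le_of_le_one_left (mul_nonneg (hh₁ (g x)).1 (hnonneg x hx)) (hh₁ (g x)).2

theorem countable_setOf_eq_zero_of_hasDerivAt_ne_zero {s : Set ℝ} {f f' : ℝ → ℝ}
    (hf : ∀ x ∈ s, HasDerivAt f (f' x) x) : {x | x ∈ s ∧ f x = 0 ∧ f' x ≠ 0}.Countable := by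
  have : DiscreteTopology {x | x ∈ s ∧ f x = 0 ∧ f' x ≠ 0} := by
    refine discreteTopology_subtype_iff.2 fun x ⟨hx, _, hx'⟩ ↦ ?_
    rw [← disjoint_iff, disjoint_principal_right]
    filter_upwards [(hf x hx).eventually_ne hx'] with z hz hz'
    exact hz hz'.2.1
  exact countable_coe_iff.1 (TopologicalSpace.separableSpace_iff_countable.1 inferInstance)

theorem ae_eq_zero_imp_of_hasDerivAt {s : Set ℝ} {f f' : ℝ → ℝ} (hs : MeasurableSet s)
    (hf : ∀ x ∈ s, HasDerivAt f (f' x) x) : ∀ᵐ x ∂volume.restrict s, f x = 0 → f' x = 0 := by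
  filter_upwards [(countable_setOf_eq_zero_of_hasDerivAt_ne_zero hf).ae_notMem _,
    ae_restrict_mem hs] with x hx hxs hfx
  by_contra hf'x
  exact hx ⟨hxs, hfx, hf'x⟩

/-- A continuous approximation, as `n → ∞`, of the indicator function of `{0}ᶜ` which vanishes
near `0`. -/
def zeroCutoff (n : ℕ) (y : ℝ) : ℝ := max 0 (min 1 (n * |y| - 1))

theorem continuous_zeroCutoff (n : ℕ) : Continuous (zeroCutoff n) := by
  unfold zeroCutoff
  fun_prop

theorem zeroCutoff_mem_Icc (n : ℕ) (y : ℝ) : zeroCutoff n y ∈ Icc 0 1 :=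
  ⟨le_max_left _ _, max_le zero_le_one (min_le_left _ _)⟩

theorem zeroCutoff_eventuallyEq_zero (n : ℕ) : zeroCutoff n =ᶠ[nhds 0] 0 := by
  have hlim : Tendsto (fun y : ℝ ↦ n * |y| - 1) (nhds 0) (nhds (n * |0| - 1)) :=
    (by fun_prop : Continuous fun y : ℝ ↦ n * |y| - 1).tendsto 0
  filter_upwards [hlim.eventually_lt_const (by norm_num : (n : ℝ) * |0| - 1 < 0)] with y hy
  exact max_eq_left ((min_le_right _ _).trans hy.le)

theorem tendsto_zeroCutoff {y : ℝ} (hy : y ≠ 0) :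
    Tendsto (fun n ↦ zeroCutoff n y) atTop (nhds 1) := by
  have hlim : Tendsto (fun n : ℕ ↦ (n : ℝ) * |y| - 1) atTop atTop :=
    tendsto_atTop_add_const_right _ _
      (tendsto_natCast_atTop_atTop.atTop_mul_const (abs_pos.2 hy))
  refine tendsto_const_nhds.congr' ?_
  filter_upwards [hlim.eventually_ge_atTop 1] with n hn
  rw [zeroCutoff, min_eq_left hn, max_eq_right zero_le_one]

theorem tendsto_lintegral_zeroCutoff_comp_mul {g F : α → ℝ} (hg : AEMeasurable g μ)
    (hF : AEMeasurable F μ) (hF₀ : 0 ≤ᵐ[μ] F) (hFt : ∫⁻ x, ENNReal.ofReal (F x) ∂μ ≠ ∞)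
    (hgF : ∀ᵐ x ∂μ, g x = 0 → F x = 0) :
    Tendsto (fun n ↦ ∫⁻ x, ENNReal.ofReal (zeroCutoff n (g x) * F x) ∂μ) atTop
      (nhds (∫⁻ x, ENNReal.ofReal (F x) ∂μ)) := by
  refine tendsto_lintegral_of_dominated_convergence' (fun x ↦ ENNReal.ofReal (F x))
    (fun n ↦ ?_) (fun n ↦ ?_) hFt ?_
  · exact (((continuous_zeroCutoff n).measurable.comp_aemeasurable hg).mul hF).ennreal_ofReal
  · filter_upwards [hF₀] with x hx
    exact ENNReal.ofReal_le_ofReal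
      (mul_le_of_le_one_left hx (zeroCutoff_mem_Icc n (g x)).2)
  · filter_upwards [hgF] with x hx
    rcases eq_or_ne (g x) 0 with hgx | hgx
    · simp [hx hgx]
    · simpa only [one_mul] using
        ENNReal.tendsto_ofReal ((tendsto_zeroCutoff hgx).mul_const (F x))

theorem integrable_mul_of_lintegral_sq_mul_ne_top {w f : α → ℝ} (hw₀ : 0 ≤ᵐ[μ] w)
    (hw : Integrable w μ) (hf : AEStronglyMeasurable f μ)
    (hfw : ∫⁻ x, ENNReal.ofReal (f x ^ 2 * w x) ∂μ ≠ ∞) : Integrable (fun x ↦ f x * w x) μ := by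
  have hsq : Integrable (fun x ↦ f x ^ 2 * w x) μ := by
    refine ⟨(hf.pow 2).mul hw.aestronglyMeasurable, ?_⟩
    rw [hasFiniteIntegral_iff_ofReal (hw₀.mono fun x hx ↦ mul_nonneg (sq_nonneg _) hx)]
    exact hfw.lt_top
  refine (hsq.add hw).mono' (hf.mul hw.aestronglyMeasurable) ?_
  filter_upwards [hw₀] with x hx
  have habs : |f x| ≤ f x ^ 2 + 1 := by nlinarith [sq_abs (f x), sq_nonneg (|f x| - 1)]
  calc ‖f x * w x‖ = |f x| * w x := by rw [Real.norm_eq_abs, abs_mul, abs_of_nonneg hx]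
    _ ≤ (f x ^ 2 + 1) * w x := mul_le_mul_of_nonneg_right habs hx
    _ = f x ^ 2 * w x + w x := by ring

theorem dualLam1_le_mu1 (hpos : ∀ x ∈ Ioo a b, 0 < p x) (hpc : ContinuousOn p (Ioo a b))
    (hpi : IntegrableOn p (Ioo a b)) : dualLam1 a b p ≤ mu1 a b p := by
  refine le_iInf₂ fun v ⟨hv, hv₀, hvt, hmean⟩ ↦ ?_
  have hvc : ContinuousOn v (Ioo a b) := hv.continuousOn
  have hp : ∀ᵐ x ∂volume.restrict (Ioo a b), 0 < p x := by
    filter_upwards [ae_restrict_mem measurableSet_Ioo] with x hx using hpos x hx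
  have hvpi : IntegrableOn (fun x ↦ v x * p x) (Ioo a b) :=
    integrable_mul_of_lintegral_sq_mul_ne_top (hp.mono fun x hx ↦ hx.le) hpi
      (hvc.aestronglyMeasurable measurableSet_Ioo) hvt
  obtain ⟨g, hg, hgs, hg'⟩ :=
    exists_continuous_primitive_of_setIntegral_eq_zero (hvc.fun_mul hpc) hvpi hmean
  have hgv : ∀ᵐ x ∂volume.restrict (Ioo a b), g x = 0 → v x ^ 2 * p x = 0 := by
    filter_upwards [ae_eq_zero_imp_of_hasDerivAt measurableSet_Ioo hg'] with x hx hgx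
    rw [sq, mul_assoc, hx hgx, mul_zero]
  have hlim := tendsto_lintegral_zeroCutoff_comp_mul hg.aemeasurable
    (((hvc.pow 2).mul hpc).aemeasurable measurableSet_Ioo)
    (hp.mono fun x hx ↦ mul_nonneg (sq_nonneg _) hx.le) hvt hgv
  rw [neuRQ, ENNReal.le_div_iff_mul_le (.inl hv₀) (.inl hvt)]
  exact le_of_tendsto' (ENNReal.Tendsto.const_mul hlim (.inl hv₀)) fun n ↦
    dualLam1_mul_lintegral_comp_mul_le hpos hpc hv hg hgs hg' (continuous_zeroCutoff n)
      (zeroCutoff_eventuallyEq_zero n) (zeroCutoff_mem_Icc n)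

end

/-- Lemma 2.1 / `l:ml`: for a positive log-concave weight `p ∈ L¹(I)` on a
bounded open interval `I = (a,b)`, it holds `μ₁(I, p) ≥ λ₁(I, m_p)`, where
`m_p = ψ_p' + ψ_p²` and `ψ_p = -(1/2)(log p)'`. Here `ψ_p` is encoded as a monotone function
`ψ` with `log p(y) - log p(x) = -2∫_x^y ψ` and `ν` is its distributional derivative measure. -/
theorem weighted_neumann_ge_dirichlet_with_potential
    (a b : ℝ) (hab : a < b) (p : ℝ → ℝ)
    (hpos : ∀ x ∈ Ioo a b, 0 < p x)
    (hint : IntegrableOn p (Ioo a b))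
    (hlc : ConcaveOn ℝ (Ioo a b) (fun x => Real.log (p x)))
    (ψ : ℝ → ℝ) (ν : Measure ℝ)
    (hmono : MonotoneOn ψ (Ioo a b))
    (hψ : ∀ x ∈ Ioo a b, ∀ y ∈ Ioo a b,
      Real.log (p y) - Real.log (p x) = -2 * ∫ t in x..y, ψ t)
    (hν : ∀ x ∈ Ioo a b, ∀ y ∈ Ioo a b, x ≤ y →
      ν (Ioc x y) = ENNReal.ofReal (ψ y - ψ x)) :
    lam1 a b (ν.restrict (Ioo a b) +
        (volume.restrict (Ioo a b)).withDensity fun x => ENNReal.ofReal ((ψ x) ^ 2)) ≤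
      mu1 a b p := by
  have hpc : ContinuousOn p (Ioo a b) :=
    (continuous_exp.comp_continuousOn (hlc.continuousOn isOpen_Ioo)).congr
      fun x hx ↦ (exp_log (hpos x hx)).symm
  have hν' : IsDerivMeasureOn ν ψ (Ioo a b) := hν
  exact (hν'.lam1_le_dualLam1 hmono hab hpos hpc hψ).trans (dualLam1_le_mu1 hpos hpc hint)
end
end

section
/- If μ₁(I_π, p) = 3 for a positive log-concave weight p ∈ L¹(I_π) such that ψ_p ∈ 𝒜(I_π), then ψ_p(x) = tan x and p(x) = k cos²x for some positive constant k. -/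
open MeasureTheory Real Set Filter
open scoped ENNReal

noncomputable section

/-!
At each end of the interval, the equation `(p v')' + 3 p v = 0` has a principal solution, which
satisfies the Neumann condition there; we describe both by their Prüfer angles. If the angle from
the left lies strictly below the one from the right, then interpolating between the two ratios
`v / (p v')` gives a strict supersolution of the Riccati equation, and completing the square shows
`μ₁ > 3`.

To compare the angles, move two points `y` and `-s` in opposite directions so that the integrals of
the ratio `R = v / v'` swept out on the two sides stay equal. By the gap condition, the quantity
`R y + S s - 2 tan ((y + s) / 2)`, where `S s = -R (-s)` for the solution on the left, satisfies a
Gronwall inequality along this motion. Hence the angles are ordered, so that `μ₁ ≤ 3` forces them to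
coincide. The Gronwall inequality is then an equality, which yields `R x = tan (x - c)`; this
determines `p` and `ψ`.
-/

open scoped Topology NNReal

/-! ### Superderivatives -/

/-- `m` is a superderivative of `f` at `x`: near `x` the function `f` lies below a function which
touches it at `x` and has derivative `m` there. This replaces differentiability for quantities
built from a log-concave weight, whose one-sided derivatives may differ. -/
def HasSuperderivAt (f : ℝ → ℝ) (m x : ℝ) : Prop :=
  ∃ g : ℝ → ℝ, HasDerivAt g m x ∧ g x = f x ∧ ∀ᶠ z in 𝓝 x, f z ≤ g z

namespace HasSuperderivAt

variable {f g h : ℝ → ℝ} {m n x : ℝ}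

theorem add (hf : HasSuperderivAt f m x) (hg : HasSuperderivAt g n x) :
    HasSuperderivAt (fun z ↦ f z + g z) (m + n) x := by
  obtain ⟨F, hF, hFx, hfF⟩ := hf
  obtain ⟨G, hG, hGx, hgG⟩ := hg
  refine ⟨fun z ↦ F z + G z, hF.add hG, congrArg₂ (· + ·) hFx hGx, ?_⟩
  filter_upwards [hfF, hgG] with z h₁ h₂ using add_le_add h₁ h₂

theorem sub_hasDerivAt (hf : HasSuperderivAt f m x) (hg : HasDerivAt g n x) :
    HasSuperderivAt (fun z ↦ f z - g z) (m - n) x := by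
  obtain ⟨F, hF, hFx, hfF⟩ := hf
  refine ⟨fun z ↦ F z - g z, hF.sub hg, congrArg (· - g x) hFx, ?_⟩
  filter_upwards [hfF] with z hz using sub_le_sub_right hz _

theorem comp {t k : ℝ} (hf : HasSuperderivAt f m (h t)) (hh : HasDerivAt h k t) :
    HasSuperderivAt (fun s ↦ f (h s)) (m * k) t := by
  obtain ⟨F, hF, hFx, hfF⟩ := hf
  exact ⟨fun s ↦ F (h s), hF.comp t hh, hFx, hh.continuousAt.eventually hfF⟩

theorem monotone_comp {F : ℝ → ℝ} {k : ℝ} (hF : Monotone F) (hF' : HasDerivAt F k (f x))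
    (hf : HasSuperderivAt f m x) : HasSuperderivAt (fun z ↦ F (f z)) (k * m) x := by
  obtain ⟨G, hG, hGx, hfG⟩ := hf
  rw [← hGx] at hF'
  exact ⟨fun z ↦ F (G z), hF'.comp x hG, congrArg F hGx, hfG.mono fun _ h ↦ hF h⟩

theorem mul_of_nonneg {k' : ℝ} (hf : HasSuperderivAt f m x) (hh : HasDerivAt h k' x)
    (h0 : ∀ᶠ z in 𝓝 x, 0 ≤ h z) :
    HasSuperderivAt (fun z ↦ f z * h z) (m * h x + f x * k') x := by
  obtain ⟨G, hG, hGx, hfG⟩ := hf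
  refine ⟨fun z ↦ G z * h z, hGx ▸ hG.mul hh, congrArg (· * h x) hGx, ?_⟩
  filter_upwards [hfG, h0] with z h₁ h₂ using mul_le_mul_of_nonneg_right h₁ h₂

theorem eq_of_hasDerivAt (hf : HasSuperderivAt f m x) (hf' : HasDerivAt f n x) : m = n := by
  obtain ⟨G, hG, hGx, hfG⟩ := hf
  have hmin : IsLocalMin (fun z ↦ G z - f z) x := by
    filter_upwards [hfG] with z hz
    simpa only [hGx, sub_self] using sub_nonneg.2 hz
  exact sub_eq_zero.1 (hmin.hasDerivAt_eq_zero (hG.sub hf'))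

theorem eventually_slope_lt (hf : HasSuperderivAt f m x) {r : ℝ} (hr : m < r) :
    ∀ᶠ z in 𝓝[>] x, (z - x)⁻¹ * (f z - f x) < r := by
  obtain ⟨G, hG, hGx, hfG⟩ := hf
  have hslope := (hasDerivAt_iff_tendsto_slope.1 hG).mono_left (nhdsGT_le_nhdsNE x)
  filter_upwards [hslope.eventually_lt_const hr, nhdsWithin_le_nhds hfG, self_mem_nhdsWithin]
    with z hz hle hxz
  rw [slope_def_field, div_eq_inv_mul, hGx] at hz
  have hinv : 0 ≤ (z - x)⁻¹ := inv_nonneg.2 (sub_nonneg.2 (mem_Ioi.1 hxz).le)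
  exact (mul_le_mul_of_nonneg_left (sub_le_sub_right hle _) hinv).trans_lt hz

theorem nonpos_of_le_mul {K a b : ℝ} (hab : a ≤ b) (hf : ContinuousOn f (Icc a b))
    (hf' : ∀ x ∈ Ioo a b, ∃ m, HasSuperderivAt f m x ∧ m ≤ K * f x) (ha : f a ≤ 0) :
    f b ≤ 0 := by
  choose! f' hf' hK using hf'
  rcases hab.eq_or_lt with rfl | hab
  · exact ha
  have hle : ∀ᶠ c in 𝓝[>] a, f b ≤ f c * exp (K * (b - c)) := by
    filter_upwards [Ioo_mem_nhdsGT hab] with c hc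
    have hsub : ∀ x ∈ Ico c b, x ∈ Ioo a b := fun x hx ↦ ⟨hc.1.trans_le hx.1, hx.2⟩
    simpa only [gronwallBound_ε0] using le_gronwallBound_of_liminf_deriv_right_le
      (f' := f') (K := K) (ε := 0)
      (hf.mono (Icc_subset_Icc_left hc.1.le))
      (fun x hx r hr ↦ ((hf' x (hsub x hx)).eventually_slope_lt hr).frequently) le_rfl
      (fun x hx ↦ by simpa only [add_zero] using hK x (hsub x hx)) b (right_mem_Icc.2 hc.2.le)
  have hlim : Tendsto (fun c ↦ f c * exp (K * (b - c))) (𝓝[>] a) (𝓝 (f a * exp (K * (b - a)))) :=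
    (((hf a (left_mem_Icc.2 hab.le)).mono_left
      (nhdsWithin_le_of_mem (mem_of_superset (Ioo_mem_nhdsGT hab) Ioo_subset_Icc_self)))).mul
      ((by fun_prop : Continuous fun c ↦ exp (K * (b - c))).tendsto a |>.mono_left
        nhdsWithin_le_nhds)
  exact (ge_of_tendsto hlim hle).trans (mul_nonpos_of_nonpos_of_nonneg ha (exp_pos _).le)

end HasSuperderivAt

/-! ### Prüfer angles -/

section GlobalODE

theorem exists_Icc_subset_Ioo {a b x y : ℝ} (hx : x ∈ Ioo a b) (hy : y ∈ Ioo a b) :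
    ∃ c d, x ∈ Ioo c d ∧ y ∈ Ioo c d ∧ Icc c d ⊆ Ioo a b := by
  obtain ⟨c, hac, hc⟩ := exists_between (lt_min hx.1 hy.1)
  obtain ⟨d, hd, hdb⟩ := exists_between (max_lt hx.2 hy.2)
  obtain ⟨hcx, hcy⟩ := lt_min_iff.1 hc
  obtain ⟨hxd, hyd⟩ := max_lt_iff.1 hd
  exact ⟨c, d, ⟨hcx, hxd⟩, ⟨hcy, hyd⟩, Icc_subset_Ioo hac hdb⟩

variable {E : Type*} [NormedAddCommGroup E] {f : ℝ → E → E} {a b : ℝ}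

/-- A time-dependent vector field on the time interval `(a, b)` which over compact time intervals is
bounded and Lipschitz in space, uniformly in time; its integral curves exist on all of `(a, b)`. -/
structure IsTameField (f : ℝ → E → E) (a b : ℝ) : Prop where
  continuousOn : ∀ x, ContinuousOn (f · x) (Ioo a b)
  exists_lipschitzWith : ∀ c d, Icc c d ⊆ Ioo a b → ∃ K : ℝ≥0, ∀ t ∈ Icc c d, LipschitzWith K (f t)
  exists_norm_le : ∀ c d, Icc c d ⊆ Ioo a b → ∃ L : ℝ≥0, ∀ t ∈ Icc c d, ∀ x, ‖f t x‖ ≤ L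

namespace IsTameField

theorem mono {c d : ℝ} (hf : IsTameField f a b) (h : Ioo c d ⊆ Ioo a b) : IsTameField f c d where
  continuousOn x := (hf.continuousOn x).mono h
  exists_lipschitzWith _ _ h' := hf.exists_lipschitzWith _ _ (h'.trans h)
  exists_norm_le _ _ h' := hf.exists_norm_le _ _ (h'.trans h)

variable [NormedSpace ℝ E]

theorem eqOn_of_hasDerivAt {α β : ℝ → E} {t₀ : ℝ} (hf : IsTameField f a b) (ht₀ : t₀ ∈ Ioo a b)
    (hα : ∀ t ∈ Ioo a b, HasDerivAt α (f t (α t)) t)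
    (hβ : ∀ t ∈ Ioo a b, HasDerivAt β (f t (β t)) t) (h : α t₀ = β t₀) : EqOn α β (Ioo a b) := by
  intro t ht
  obtain ⟨c, d, ht₀', ht', hcd⟩ := exists_Icc_subset_Ioo ht₀ ht
  obtain ⟨K, hK⟩ := hf.exists_lipschitzWith c d hcd
  exact ODE_solution_unique_of_mem_Ioo (v := f) (s := fun _ ↦ univ)
    (fun s hs ↦ (hK s (Ioo_subset_Icc_self hs)).lipschitzOnWith) ht₀'
    (fun s hs ↦ ⟨hα s (hcd (Ioo_subset_Icc_self hs)), mem_univ _⟩)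
    (fun s hs ↦ ⟨hβ s (hcd (Ioo_subset_Icc_self hs)), mem_univ _⟩) h ht'

variable [CompleteSpace E]

theorem exists_hasDerivAt_Ioo {c d t₀ : ℝ} (hf : IsTameField f a b) (hcd : Icc c d ⊆ Ioo a b)
    (ht₀ : t₀ ∈ Ioo c d) (x₀ : E) :
    ∃ α : ℝ → E, α t₀ = x₀ ∧ ∀ t ∈ Ioo c d, HasDerivAt α (f t (α t)) t := by
  obtain ⟨K, hK⟩ := hf.exists_lipschitzWith c d hcd
  obtain ⟨L, hL⟩ := hf.exists_norm_le c d hcd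
  have hPL : IsPicardLindelof f ⟨t₀, Ioo_subset_Icc_self ht₀⟩ x₀
      (L * (max (d - t₀) (t₀ - c)).toNNReal) 0 L K :=
    { lipschitzOnWith := fun t ht ↦ (hK t ht).lipschitzOnWith
      continuousOn := fun x _ ↦ (hf.continuousOn x).mono hcd
      norm_le := fun t ht x _ ↦ hL t ht x
      mul_max_le := by
        rw [NNReal.coe_zero, sub_zero, NNReal.coe_mul]
        exact mul_le_mul_of_nonneg_left (le_coe_toNNReal _) L.2 }
  obtain ⟨α, hα₀, hα⟩ := hPL.exists_eq_forall_mem_Icc_hasDerivWithinAt₀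
  exact ⟨α, hα₀, fun t ht ↦ (hα t (Ioo_subset_Icc_self ht)).hasDerivAt (Icc_mem_nhds ht.1 ht.2)⟩

theorem exists_hasDerivAt {t₀ : ℝ} (hf : IsTameField f a b) (ht₀ : t₀ ∈ Ioo a b) (x₀ : E) :
    ∃ α : ℝ → E, α t₀ = x₀ ∧ ∀ t ∈ Ioo a b, HasDerivAt α (f t (α t)) t := by
  choose! c d hc hd hcd using fun (t : ℝ) (ht : t ∈ Ioo a b) ↦ exists_Icc_subset_Ioo ht₀ ht
  choose! α hα₀ hα using fun (t : ℝ) (ht : t ∈ Ioo a b) ↦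
    hf.exists_hasDerivAt_Ioo (hcd t ht) (hc t ht) x₀
  have hglue : ∀ t ∈ Ioo a b, ∀ s ∈ Ioo a b, s ∈ Ioo (c t) (d t) → α s s = α t s := by
    intro t ht s hs hst
    have hsub : Ioo (c t) (d t) ∩ Ioo (c s) (d s) = Ioo (c t ⊔ c s) (d t ⊓ d s) := Ioo_inter_Ioo
    refine (hf.mono (hsub ▸ inter_subset_left.trans
      (Ioo_subset_Icc_self.trans (hcd t ht)))).eqOn_of_hasDerivAt (t₀ := t₀) ?_ ?_ ?_ ?_ ?_
    · exact hsub ▸ ⟨hc t ht, hc s hs⟩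
    · exact hsub ▸ fun r hr ↦ hα s hs r hr.2
    · exact hsub ▸ fun r hr ↦ hα t ht r hr.1
    · rw [hα₀ s hs, hα₀ t ht]
    · exact hsub ▸ ⟨hst, hd s hs⟩
  refine ⟨fun t ↦ α t t, hα₀ t₀ ht₀, fun t ht ↦ (hα t ht t (hd t ht)).congr_of_eventuallyEq ?_⟩
  filter_upwards [Ioo_mem_nhds (hd t ht).1 (hd t ht).2, Ioo_mem_nhds ht.1 ht.2] with s hs hs'
    using hglue t ht s hs' hs

end IsTameField

end GlobalODE

/-- A positive continuous weight on the interval `(a, b)`. -/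
structure ContinuousWeight (a b : ℝ) (p : ℝ → ℝ) : Prop where
  pos : ∀ x ∈ Ioo a b, 0 < p x
  continuousOn : ContinuousOn p (Ioo a b)

/-- The vector field of the Prüfer angle `θ = arctan (v / (p v'))` of a solution `v` of the
Sturm–Liouville equation `(p v')' + μ p v = 0`. -/
def pruferField (μ : ℝ) (p : ℝ → ℝ) (x θ : ℝ) : ℝ :=
  cos θ ^ 2 / p x + μ * p x * sin θ ^ 2

/-- `θ` is a Prüfer angle on `(a, b)` for the equation `(p v')' + μ p v = 0`. -/
def IsPruferAngle (a b μ : ℝ) (p θ : ℝ → ℝ) : Prop :=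
  ∀ x ∈ Ioo a b, HasDerivAt θ (pruferField μ p x (θ x)) x

/-- The ratio `v / v'` of a solution `v` with Prüfer angle `θ`. -/
def riccati (p θ : ℝ → ℝ) (x : ℝ) : ℝ :=
  p x * tan (θ x)

section Prufer

variable {a b μ : ℝ} {p θ φ : ℝ → ℝ}

theorem pruferField_eq (x t : ℝ) :
    pruferField μ p x t = 1 / p x + (μ * p x - 1 / p x) * sin t ^ 2 := by
  rw [pruferField, cos_sq']
  ring

theorem abs_pruferField_le (x t : ℝ) :
    |pruferField μ p x t| ≤ |1 / p x| + |μ * p x - 1 / p x| := by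
  rw [pruferField_eq]
  refine (abs_add_le _ _).trans (add_le_add_right ?_ _)
  rw [abs_mul, abs_of_nonneg (sq_nonneg (sin t))]
  exact mul_le_of_le_one_right (abs_nonneg _) (sin_sq_le_one t)

theorem lipschitzWith_pruferField {K : ℝ≥0} {x : ℝ} (hK : |μ * p x - 1 / p x| ≤ K) :
    LipschitzWith K (pruferField μ p x) := by
  have hderiv (t : ℝ) :
      HasDerivAt (pruferField μ p x) ((μ * p x - 1 / p x) * sin (2 * t)) t := by
    rw [funext (pruferField_eq x)]
    refine ((((hasDerivAt_sin t).pow 2).const_mul _).const_add _).congr_deriv ?_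
    rw [sin_two_mul]
    ring
  refine lipschitzWith_of_nnnorm_deriv_le (fun t ↦ (hderiv t).differentiableAt) fun t ↦ ?_
  rw [(hderiv t).deriv, ← NNReal.coe_le_coe, coe_nnnorm, Real.norm_eq_abs, abs_mul]
  exact (mul_le_of_le_one_right (abs_nonneg _) (abs_sin_le_one _)).trans hK

theorem pruferField_pos (hμ : 0 < μ) {x : ℝ} (hx : 0 < p x) (t : ℝ) : 0 < pruferField μ p x t := by
  rcases eq_or_ne (cos t) 0 with h | h
  · have hsin : sin t ^ 2 = 1 := by rw [sin_sq, h]; ring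
    rw [pruferField, h, hsin]
    positivity
  · unfold pruferField
    positivity

theorem ContinuousWeight.isTameField_pruferField (hp : ContinuousWeight a b p) :
    IsTameField (pruferField μ p) a b := by
  have hinv : ContinuousOn (fun x ↦ 1 / p x) (Ioo a b) :=
    continuousOn_const.div hp.continuousOn fun x hx ↦ (hp.pos x hx).ne'
  have hdiff : ContinuousOn (fun x ↦ μ * p x - 1 / p x) (Ioo a b) :=
    (continuousOn_const.mul hp.continuousOn).sub hinv
  refine ⟨fun t ↦ ?_, fun c d hcd ↦ ?_, fun c d hcd ↦ ?_⟩
  · simp only [pruferField_eq]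
    exact hinv.add (hdiff.mul continuousOn_const)
  · obtain ⟨K, hK⟩ := isCompact_Icc.exists_bound_of_continuousOn (hdiff.mono hcd)
    exact ⟨K.toNNReal, fun x hx ↦ lipschitzWith_pruferField ((hK x hx).trans (le_coe_toNNReal K))⟩
  · obtain ⟨L, hL⟩ := isCompact_Icc.bddAbove_image ((hinv.abs.add hdiff.abs).mono hcd)
    exact ⟨L.toNNReal, fun x hx t ↦ (abs_pruferField_le x t).trans
      ((hL (mem_image_of_mem _ hx)).trans (le_coe_toNNReal L))⟩

theorem ContinuousWeight.exists_isPruferAngle (hp : ContinuousWeight a b p) (μ : ℝ) {x₀ : ℝ}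
    (hx₀ : x₀ ∈ Ioo a b) (θ₀ : ℝ) : ∃ θ, θ x₀ = θ₀ ∧ IsPruferAngle a b μ p θ :=
  hp.isTameField_pruferField.exists_hasDerivAt hx₀ θ₀

namespace IsPruferAngle

theorem continuousOn (hθ : IsPruferAngle a b μ p θ) : ContinuousOn θ (Ioo a b) :=
  HasDerivAt.continuousOn hθ

theorem continuousAt (hθ : IsPruferAngle a b μ p θ) {x : ℝ} (hx : x ∈ Ioo a b) :
    ContinuousAt θ x :=
  (hθ x hx).continuousAt

theorem eqOn (hθ : IsPruferAngle a b μ p θ) (hφ : IsPruferAngle a b μ p φ)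
    (hp : ContinuousWeight a b p) {x : ℝ} (hx : x ∈ Ioo a b) (h : θ x = φ x) :
    EqOn θ φ (Ioo a b) :=
  hp.isTameField_pruferField.eqOn_of_hasDerivAt hx hθ hφ h

theorem lt_of_lt (hθ : IsPruferAngle a b μ p θ) (hφ : IsPruferAngle a b μ p φ)
    (hp : ContinuousWeight a b p) {x y : ℝ} (hx : x ∈ Ioo a b) (hy : y ∈ Ioo a b)
    (h : θ x < φ x) : θ y < φ y := by
  by_contra! hyle
  obtain ⟨z, hz, hzeq⟩ := isPreconnected_Ioo.intermediate_value₂ hx hy hθ.continuousOn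
    hφ.continuousOn h.le hyle
  exact h.ne (hθ.eqOn hφ hp hz hzeq hx)

theorem strictMonoOn (hθ : IsPruferAngle a b μ p θ) (hμ : 0 < μ) (hp : ContinuousWeight a b p) :
    StrictMonoOn θ (Ioo a b) := by
  refine strictMonoOn_of_deriv_pos (convex_Ioo a b) hθ.continuousOn fun x hx ↦ ?_
  rw [interior_Ioo] at hx
  exact (hθ x hx).deriv ▸ pruferField_pos hμ (hp.pos x hx) _

theorem comp_neg (hθ : IsPruferAngle a b μ p θ) :
    IsPruferAngle (-b) (-a) μ (fun x ↦ p (-x)) (fun x ↦ -θ (-x)) := by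
  intro x hx
  have hx' : -x ∈ Ioo a b := neg_mem_Ioo_iff.2 hx
  refine ((hθ (-x) hx').scomp x (hasDerivAt_neg x)).neg.congr_deriv ?_
  simp only [pruferField, cos_neg, sin_neg, neg_sq, smul_eq_mul, neg_mul, one_mul, neg_neg]

theorem hasDerivAt_tan (hθ : IsPruferAngle a b μ p θ) {x : ℝ} (hx : x ∈ Ioo a b)
    (hcos : cos (θ x) ≠ 0) :
    HasDerivAt (fun y ↦ tan (θ y)) (1 / p x + μ * p x * tan (θ x) ^ 2) x := by
  refine ((Real.hasDerivAt_tan hcos).comp x (hθ x hx)).congr_deriv ?_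
  rw [pruferField, tan_eq_sin_div_cos]
  field_simp

theorem continuousAt_riccati (hθ : IsPruferAngle a b μ p θ) (hp : ContinuousWeight a b p) {x : ℝ}
    (hx : x ∈ Ioo a b) (hcos : cos (θ x) ≠ 0) : ContinuousAt (riccati p θ) x :=
  (hp.continuousOn.continuousAt (Ioo_mem_nhds hx.1 hx.2)).mul
    (hθ.hasDerivAt_tan hx hcos).continuousAt

theorem tendsto_riccati_atTop (hθ : IsPruferAngle a b μ p θ) (hμ : 0 < μ)
    (hp : ContinuousWeight a b p) {x : ℝ} (hx : x ∈ Ioo a b) (h : θ x = π / 2) :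
    Tendsto (riccati p θ) (𝓝[<] x) atTop := by
  have hlt : ∀ᶠ y in 𝓝[<] x, θ y < π / 2 := by
    filter_upwards [Ioo_mem_nhdsLT hx.1] with y hy
    exact h ▸ hθ.strictMonoOn hμ hp ⟨hy.1, hy.2.trans hx.2⟩ hx hy.2
  have hlim : Tendsto θ (𝓝[<] x) (𝓝[<] (π / 2)) :=
    tendsto_nhdsWithin_iff.2 ⟨h ▸ (hθ.continuousAt hx).mono_left nhdsWithin_le_nhds, hlt⟩
  exact ((hp.continuousOn.continuousAt (Ioo_mem_nhds hx.1 hx.2)).mono_left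
    nhdsWithin_le_nhds).pos_mul_atTop (hp.pos x hx) (tendsto_tan_pi_div_two.comp hlim)

end IsPruferAngle

end Prufer

/-! ### Riccati supersolutions and lower bounds for `μ₁` -/

/-- `W` is a supersolution on `s` of the Riccati equation `W' = 1/p + μ p W²`, which is satisfied by
`v / (p v')` whenever `(p v')' + μ p v = 0`. -/
def IsRiccatiSupersolution (s : Set ℝ) (μ : ℝ) (p W : ℝ → ℝ) : Prop :=
  ∀ x ∈ s, DifferentiableAt ℝ W x ∧ 1 / p x + μ * p x * W x ^ 2 ≤ deriv W x

section SpectralLowerBound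

theorem continuousAt_sq_div_of_hasDerivAt {u W : ℝ → ℝ} {u' W' c : ℝ} (hu : HasDerivAt u u' c)
    (hW : HasDerivAt W W' c) (hu0 : u c = 0) (hW0 : W c = 0) (hW' : W' ≠ 0) :
    ContinuousAt (fun x ↦ u x ^ 2 / W x) c := by
  have hlim : Tendsto (fun x ↦ slope u c x / slope W c x * u x) (𝓝[≠] c) (𝓝 0) := by
    simpa only [hu0, mul_zero, Pi.div_apply] using
      (((hasDerivAt_iff_tendsto_slope.1 hu).div (hasDerivAt_iff_tendsto_slope.1 hW) hW').mul
        (hu.continuousAt.tendsto.mono_left nhdsWithin_le_nhds))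
  rw [continuousAt_iff_punctured_nhds, hu0, hW0, div_zero]
  refine hlim.congr' ?_
  filter_upwards [self_mem_nhdsWithin] with x hx
  rw [slope_def_field, slope_def_field, hu0, hW0, sub_zero, sub_zero,
    div_div_div_cancel_right₀ (sub_ne_zero.2 hx), div_mul_eq_mul_div, ← sq]

/-- The left-hand side is the derivative of `u² / W`; the bound is Picone's identity. -/
theorem deriv_sq_div_le {μ p u u' W W' : ℝ} (hp : 0 < p) (hW : W ≠ 0)
    (h : 1 / p + μ * p * W ^ 2 ≤ W') :
    (2 * u * u' * W - u ^ 2 * W') / W ^ 2 ≤ u' ^ 2 * p - μ * (u ^ 2 * p) := by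
  have hsq : u' ^ 2 * p - μ * (u ^ 2 * p) - (2 * u * u' * W - u ^ 2 * W') / W ^ 2 =
      p * (u' - u / (p * W)) ^ 2 + (u / W) ^ 2 * (W' - (1 / p + μ * p * W ^ 2)) := by
    field_simp
    ring
  have hnonneg : 0 ≤ (u / W) ^ 2 * (W' - (1 / p + μ * p * W ^ 2)) :=
    mul_nonneg (sq_nonneg _) (sub_nonneg.2 h)
  exact sub_nonneg.1 (hsq ▸ add_nonneg (mul_nonneg hp.le (sq_nonneg _)) hnonneg)

theorem hasDerivAt_deriv_of_contDiffOn {a b x : ℝ} {v : ℝ → ℝ} (hv : ContDiffOn ℝ 1 v (Ioo a b))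
    (hx : x ∈ Ioo a b) : HasDerivAt v (deriv v x) x :=
  ((hv.differentiableOn one_ne_zero).differentiableAt (Ioo_mem_nhds hx.1 hx.2)).hasDerivAt

variable {a b μ c : ℝ} {p W v : ℝ → ℝ}

namespace IsRiccatiSupersolution

theorem strictMonoOn (hW : IsRiccatiSupersolution (Ioo a b) μ p W) (hμ : 0 ≤ μ)
    (hp : ContinuousWeight a b p) : StrictMonoOn W (Ioo a b) := by
  refine strictMonoOn_of_deriv_pos (convex_Ioo a b)
    (fun x hx ↦ (hW x hx).1.continuousAt.continuousWithinAt) fun x hx ↦ ?_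
  rw [interior_Ioo] at hx
  have hpx := hp.pos x hx
  exact lt_of_lt_of_le (by positivity) (hW x hx).2

theorem sq_div_sub_le_integral (hW : IsRiccatiSupersolution (Ioo a b) μ p W) (hμ : 0 ≤ μ)
    (hp : ContinuousWeight a b p) (hv : ContDiffOn ℝ 1 v (Ioo a b)) (hc : c ∈ Ioo a b)
    (hWc : W c = 0) {α β : ℝ} (hαβ : α ≤ β) (hsub : Icc α β ⊆ Ioo a b) (hcαβ : c ∉ Ioo α β) :
    (v β - v c) ^ 2 / W β - (v α - v c) ^ 2 / W α ≤
      ∫ x in α..β, (deriv v x ^ 2 * p x - μ * ((v x - v c) ^ 2 * p x)) := by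
  have hne : ∀ x ∈ Ioo a b, x ≠ c → W x ≠ 0 := fun x hx hxc h ↦
    hxc ((hW.strictMonoOn hμ hp).injOn hx hc (h.trans hWc.symm))
  have hu : ∀ x ∈ Ioo a b, HasDerivAt (fun x ↦ v x - v c) (deriv v x) x := fun x hx ↦
    (hasDerivAt_deriv_of_contDiffOn hv hx).sub_const _
  have hW'c : deriv W c ≠ 0 := by
    have hpc := hp.pos c hc
    exact (lt_of_lt_of_le (by positivity) (hW c hc).2).ne'
  have hcont : ContinuousOn (fun x ↦ (v x - v c) ^ 2 / W x) (Icc α β) := by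
    intro x hx
    refine ContinuousAt.continuousWithinAt ?_
    rcases eq_or_ne x c with rfl | hxc
    · exact continuousAt_sq_div_of_hasDerivAt (hu x hc) (hW x hc).1.hasDerivAt (sub_self _) hWc hW'c
    · exact ((hu x (hsub hx)).continuousAt.pow 2).div (hW x (hsub hx)).1.continuousAt
        (hne x (hsub hx) hxc)
  have hint : ContinuousOn (fun x ↦ deriv v x ^ 2 * p x - μ * ((v x - v c) ^ 2 * p x))
      (Ioo a b) :=
    (((hv.continuousOn_deriv_of_isOpen isOpen_Ioo le_rfl).pow 2).mul hp.continuousOn).sub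
      (continuousOn_const.mul
        (((hv.continuousOn.sub continuousOn_const).pow 2).mul hp.continuousOn))
  refine intervalIntegral.sub_le_integral_of_hasDeriv_right_of_le hαβ hcont (fun x hx ↦ ?_)
    (hint.mono hsub).integrableOn_Icc fun x hx ↦ deriv_sq_div_le (W' := deriv W x) ?_ ?_ (hW x ?_).2
  · have hx' := hsub (Ioo_subset_Icc_self hx)
    refine ((((hu x hx').pow 2).div (hW x hx').1.hasDerivAt
      (hne x hx' (ne_of_mem_of_not_mem hx hcαβ))).congr_deriv ?_).hasDerivWithinAt
    simp only [Nat.cast_ofNat, Nat.add_one_sub_one, pow_one, Pi.pow_apply]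
  · exact hp.pos x (hsub (Ioo_subset_Icc_self hx))
  · exact hne x (hsub (Ioo_subset_Icc_self hx)) (ne_of_mem_of_not_mem hx hcαβ)
  · exact hsub (Ioo_subset_Icc_self hx)

theorem poincare_Icc (hW : IsRiccatiSupersolution (Ioo a b) μ p W) (hμ : 0 ≤ μ)
    (hp : ContinuousWeight a b p) (hv : ContDiffOn ℝ 1 v (Ioo a b)) (hWc : W c = 0) {α β : ℝ}
    (hcαβ : c ∈ Icc α β) (hsub : Icc α β ⊆ Ioo a b) :
    μ * ∫ x in Icc α β, (v x - v c) ^ 2 * p x ≤ ∫ x in Icc α β, deriv v x ^ 2 * p x := by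
  have hαβ := hcαβ.1.trans hcαβ.2
  have hα := hsub (left_mem_Icc.2 hαβ)
  have hβ := hsub (right_mem_Icc.2 hαβ)
  have hWα : W α ≤ 0 := hWc ▸ (hW.strictMonoOn hμ hp).monotoneOn hα (hsub hcαβ) hcαβ.1
  have hWβ : 0 ≤ W β := hWc ▸ (hW.strictMonoOn hμ hp).monotoneOn (hsub hcαβ) hβ hcαβ.2
  have hleft := hW.sq_div_sub_le_integral hμ hp hv (hsub hcαβ) hWc hcαβ.1
    ((Icc_subset_Icc_right hcαβ.2).trans hsub) right_notMem_Ioo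
  have hright := hW.sq_div_sub_le_integral hμ hp hv (hsub hcαβ) hWc hcαβ.2
    ((Icc_subset_Icc_left hcαβ.1).trans hsub) left_notMem_Ioo
  have hi₁ : ContinuousOn (fun x ↦ deriv v x ^ 2 * p x) (Ioo a b) :=
    ((hv.continuousOn_deriv_of_isOpen isOpen_Ioo le_rfl).pow 2).mul hp.continuousOn
  have hi₂ : ContinuousOn (fun x ↦ μ * ((v x - v c) ^ 2 * p x)) (Ioo a b) :=
    continuousOn_const.mul (((hv.continuousOn.sub continuousOn_const).pow 2).mul hp.continuousOn)
  have hint {s t : ℝ} (hs : s ∈ Icc α β) (ht : t ∈ Icc α β) : IntervalIntegrable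
      (fun x ↦ deriv v x ^ 2 * p x - μ * ((v x - v c) ^ 2 * p x)) volume s t :=
    ((hi₁.sub hi₂).mono ((uIcc_subset_Icc hs ht).trans hsub)).intervalIntegrable
  have hsum := add_le_add hleft hright
  rw [intervalIntegral.integral_add_adjacent_intervals (hint (left_mem_Icc.2 hαβ) hcαβ)
    (hint hcαβ (right_mem_Icc.2 hαβ)), intervalIntegral.integral_of_le hαβ,
    ← integral_Icc_eq_integral_Ioc, integral_sub (hi₁.mono hsub).integrableOn_Icc
    (hi₂.mono hsub).integrableOn_Icc, integral_const_mul] at hsum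
  have hgα : (v α - v c) ^ 2 / W α ≤ 0 := div_nonpos_of_nonneg_of_nonpos (sq_nonneg _) hWα
  have hgβ : 0 ≤ (v β - v c) ^ 2 / W β := div_nonneg (sq_nonneg _) hWβ
  linarith

theorem poincare (hW : IsRiccatiSupersolution (Ioo a b) μ p W) (hμ : 0 ≤ μ)
    (hp : ContinuousWeight a b p) (hv : ContDiffOn ℝ 1 v (Ioo a b)) (hc : c ∈ Ioo a b)
    (hWc : W c = 0) :
    ENNReal.ofReal μ * ∫⁻ x in Ioo a b, ENNReal.ofReal ((v x - v c) ^ 2 * p x) ≤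
      ∫⁻ x in Ioo a b, ENNReal.ofReal (deriv v x ^ 2 * p x) := by
  have hi₁ : ContinuousOn (fun x ↦ deriv v x ^ 2 * p x) (Ioo a b) :=
    ((hv.continuousOn_deriv_of_isOpen isOpen_Ioo le_rfl).pow 2).mul hp.continuousOn
  have hi₂ : ContinuousOn (fun x ↦ (v x - v c) ^ 2 * p x) (Ioo a b) :=
    ((hv.continuousOn.sub continuousOn_const).pow 2).mul hp.continuousOn
  have hcover : AECover (volume.restrict (Ioo a b)) (𝓝[>] a ×ˢ 𝓝[<] b)
      fun i : ℝ × ℝ ↦ Icc i.1 i.2 :=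
    aecover_Ioo_of_Icc (tendsto_fst.mono_right nhdsWithin_le_nhds)
      (tendsto_snd.mono_right nhdsWithin_le_nhds)
  have hlim := hcover.lintegral_tendsto_of_countably_generated
    (hi₂.aemeasurable measurableSet_Ioo).ennreal_ofReal
  refine le_of_tendsto (ENNReal.Tendsto.const_mul hlim (Or.inr ENNReal.ofReal_ne_top)) ?_
  filter_upwards [prod_mem_prod (Ioo_mem_nhdsGT hc.1) (Ioo_mem_nhdsLT hc.2)] with i hi
  have hsub : Icc i.1 i.2 ⊆ Ioo a b := Icc_subset_Ioo hi.1.1 hi.2.2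
  have hnonneg (f : ℝ → ℝ) : 0 ≤ᵐ[volume.restrict (Icc i.1 i.2)] fun x ↦ f x ^ 2 * p x :=
    (ae_restrict_mem measurableSet_Icc).mono fun x hx ↦
      mul_nonneg (sq_nonneg _) (hp.pos x (hsub hx)).le
  calc ENNReal.ofReal μ * ∫⁻ x in Icc i.1 i.2, ENNReal.ofReal ((v x - v c) ^ 2 * p x)
        ∂volume.restrict (Ioo a b)
      = ENNReal.ofReal (μ * ∫ x in Icc i.1 i.2, (v x - v c) ^ 2 * p x) := by
        rw [Measure.restrict_restrict_of_subset hsub, ENNReal.ofReal_mul hμ,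
          ofReal_integral_eq_lintegral_ofReal (hi₂.mono hsub).integrableOn_Icc (hnonneg _)]
    _ ≤ ENNReal.ofReal (∫ x in Icc i.1 i.2, deriv v x ^ 2 * p x) :=
        ENNReal.ofReal_le_ofReal (hW.poincare_Icc hμ hp hv hWc ⟨hi.1.2.le, hi.2.1.le⟩ hsub)
    _ = ∫⁻ x in Icc i.1 i.2, ENNReal.ofReal (deriv v x ^ 2 * p x) :=
        ofReal_integral_eq_lintegral_ofReal (hi₁.mono hsub).integrableOn_Icc (hnonneg _)
    _ ≤ ∫⁻ x in Ioo a b, ENNReal.ofReal (deriv v x ^ 2 * p x) := lintegral_mono_set hsub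

end IsRiccatiSupersolution

theorem lintegral_sq_le_lintegral_sub_const_sq (hp : ContinuousWeight a b p)
    (hint : IntegrableOn p (Ioo a b)) (hv : neuAdm a b p v) (k : ℝ) :
    ∫⁻ x in Ioo a b, ENNReal.ofReal (v x ^ 2 * p x) ≤
      ∫⁻ x in Ioo a b, ENNReal.ofReal ((v x - k) ^ 2 * p x) := by
  obtain ⟨hv, -, hfin, hmean⟩ := hv
  have hnonneg (f : ℝ → ℝ) : 0 ≤ᵐ[volume.restrict (Ioo a b)] fun x ↦ f x ^ 2 * p x :=
    (ae_restrict_mem measurableSet_Ioo).mono fun x hx ↦ mul_nonneg (sq_nonneg _) (hp.pos x hx).le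
  have hi₂ : IntegrableOn (fun x ↦ v x ^ 2 * p x) (Ioo a b) :=
    (lintegral_ofReal_ne_top_iff_integrable (((hv.continuousOn.pow 2).mul
      hp.continuousOn).aestronglyMeasurable measurableSet_Ioo) (hnonneg v)).1 hfin
  have hi₁ : IntegrableOn (fun x ↦ v x * p x) (Ioo a b) := by
    refine (hi₂.add hint).mono' ((hv.continuousOn.mul hp.continuousOn).aestronglyMeasurable
      measurableSet_Ioo) ((ae_restrict_mem measurableSet_Ioo).mono fun x hx ↦ ?_)
    have hv_le : |v x| ≤ v x ^ 2 + 1 := by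
      rw [← sq_abs]
      nlinarith [sq_nonneg (|v x| - 1), abs_nonneg (v x)]
    rw [Real.norm_eq_abs, abs_mul, abs_of_pos (hp.pos x hx), Pi.add_apply]
    linarith [mul_le_mul_of_nonneg_right hv_le (hp.pos x hx).le]
  have hi₀ : IntegrableOn (fun x ↦ k ^ 2 * p x - 2 * k * (v x * p x)) (Ioo a b) :=
    (hint.const_mul _).sub (hi₁.const_mul _)
  have hexpand : (fun x ↦ (v x - k) ^ 2 * p x) =
      fun x ↦ v x ^ 2 * p x + (k ^ 2 * p x - 2 * k * (v x * p x)) := by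
    funext x
    ring
  have hmass : 0 ≤ ∫ x in Ioo a b, p x :=
    setIntegral_nonneg measurableSet_Ioo fun x hx ↦ (hp.pos x hx).le
  rw [← ofReal_integral_eq_lintegral_ofReal hi₂ (hnonneg v),
    ← ofReal_integral_eq_lintegral_ofReal (hexpand ▸ hi₂.add hi₀) (hnonneg fun x ↦ v x - k)]
  refine ENNReal.ofReal_le_ofReal ?_
  rw [hexpand, integral_add hi₂ hi₀, integral_sub (hint.const_mul _) (hi₁.const_mul _),
    integral_const_mul, integral_const_mul, hmean, mul_zero, sub_zero]
  exact le_add_of_nonneg_right (mul_nonneg (sq_nonneg k) hmass)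

theorem IsRiccatiSupersolution.ofReal_le_mu1 (hW : IsRiccatiSupersolution (Ioo a b) μ p W)
    (hμ : 0 ≤ μ) (hp : ContinuousWeight a b p) (hint : IntegrableOn p (Ioo a b))
    (hc : c ∈ Ioo a b) (hWc : W c = 0) : ENNReal.ofReal μ ≤ mu1 a b p := by
  refine le_iInf₂ fun v hv ↦ ?_
  rw [neuRQ, ENNReal.le_div_iff_mul_le (Or.inl hv.2.1) (Or.inl hv.2.2.1)]
  exact (mul_le_mul_right (lintegral_sq_le_lintegral_sub_const_sq hp hint hv (v c)) _).trans
    (hW.poincare hμ hp hv.1 hc hWc)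

end SpectralLowerBound

section StrictSpectralBound

variable {a b μ c : ℝ} {p W A B : ℝ → ℝ}

/-- For `s` above `2`, shrinking `D` by a factor `1 - η` leaves enough room for the factor
`1 - 2 η / 3` on the left; for smaller `s`, the excess `m` does. -/
theorem one_add_mul_le_of_one_add_le {η m s D : ℝ} (hη : 0 ≤ η) (hη₁ : η ≤ 1 / 4) (hηm : η ≤ m / 2)
    (hs : 0 ≤ s) (hD : 1 + s ≤ D) (hexcess : s ≤ 2 → 1 + s + m ≤ D) :
    1 + (1 - 2 * η / 3) * (1 - η) * s ≤ (1 - η) * D := by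
  have hκ : 0 ≤ 1 - η := by linarith
  rcases le_total s 2 with hsmall | hlarge
  · nlinarith [mul_le_mul_of_nonneg_left (hexcess hsmall) hκ, mul_nonneg (mul_nonneg hη hκ) hs]
  · nlinarith [mul_le_mul_of_nonneg_left hD hκ,
      mul_le_mul_of_nonneg_left hlarge (mul_nonneg hη hκ)]

theorem IsRiccatiSupersolution.ofReal_lt_mu1 (hW : IsRiccatiSupersolution (Ioo a b) μ p W)
    (hμ : 0 < μ) (hp : ContinuousWeight a b p) (hint : IntegrableOn p (Ioo a b))
    (hc : c ∈ Ioo a b) (hWc : W c = 0) {m : ℝ} (hm : 0 < m)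
    (hexcess : ∀ x ∈ Ioo a b, μ * (p x * W x) ^ 2 ≤ 2 →
      1 / p x + μ * p x * W x ^ 2 + m / p x ≤ deriv W x) :
    ENNReal.ofReal μ < mu1 a b p := by
  obtain ⟨η, hη, hη_le⟩ : ∃ η, 0 < η ∧ η ≤ min (1 / 4) (m / 2) :=
    ⟨min (1 / 4) (m / 2), by positivity, le_rfl⟩
  obtain ⟨hη₁, hηm⟩ := le_min_iff.1 hη_le
  have hκ : 0 < 1 - η := by linarith
  set μ' := μ * (1 - 2 * η / 3) / (1 - η) with hμ'
  have hμμ' : μ < μ' := by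
    rw [hμ', lt_div_iff₀ hκ]
    nlinarith
  have hW' : IsRiccatiSupersolution (Ioo a b) μ' p (fun x ↦ (1 - η) * W x) := by
    refine fun x hx ↦ ⟨(hW x hx).1.const_mul _, ?_⟩
    have hpx := hp.pos x hx
    have hscale : 1 / p x + μ * p x * W x ^ 2 = (1 + μ * (p x * W x) ^ 2) / p x := by
      field_simp
    have hscale' : 1 / p x + μ' * p x * ((1 - η) * W x) ^ 2 =
        (1 + (1 - 2 * η / 3) * (1 - η) * (μ * (p x * W x) ^ 2)) / p x := by
      rw [hμ']
      field_simp
    rw [deriv_const_mul _ (hW x hx).1, hscale', div_le_iff₀ hpx, mul_assoc (1 - η)]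
    refine one_add_mul_le_of_one_add_le hη.le hη₁ hηm (by positivity) ?_ fun hsmall ↦ ?_
    · exact (div_le_iff₀ hpx).1 (hscale ▸ (hW x hx).2)
    · have hle := hexcess x hx hsmall
      rwa [hscale, ← add_div, div_le_iff₀ hpx] at hle
  exact ((ENNReal.ofReal_lt_ofReal_iff (hμ.trans hμμ')).2 hμμ').trans_le
    (hW'.ofReal_le_mu1 (hμ.trans hμμ').le hp hint hc (by rw [hWc, mul_zero]))

theorem ofReal_lt_mu1_of_add_le_deriv {g : ℝ → ℝ} {K : Set ℝ} (hμ : 0 < μ)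
    (hp : ContinuousWeight a b p) (hint : IntegrableOn p (Ioo a b))
    (hW : ∀ x ∈ Ioo a b, DifferentiableAt ℝ W x) (hg_nonneg : ∀ x ∈ Ioo a b, 0 ≤ g x)
    (hg : ∀ x ∈ Ioo a b, 1 / p x + μ * p x * W x ^ 2 + g x ≤ deriv W x) (hK : IsCompact K)
    (hKsub : K ⊆ Ioo a b) (hgcont : ContinuousOn g K)
    (hKg : ∀ x ∈ Ioo a b, μ * (p x * W x) ^ 2 ≤ 2 → x ∈ K ∧ 0 < g x)
    (hc : c ∈ Ioo a b) (hWc : W c = 0) : ENNReal.ofReal μ < mu1 a b p := by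
  have hWcont : ContinuousOn W (Ioo a b) := fun x hx ↦ (hW x hx).continuousAt.continuousWithinAt
  have hsmall : IsCompact (K ∩ (fun x ↦ μ * (p x * W x) ^ 2) ⁻¹' Iic 2) :=
    hK.of_isClosed_subset ((continuousOn_const.mul ((hp.continuousOn.mul hWcont).pow 2)).mono
      hKsub |>.preimage_isClosed_of_isClosed hK.isClosed isClosed_Iic) inter_subset_left
  obtain ⟨m, hm, hmin⟩ := hsmall.exists_forall_le' (f := fun x ↦ p x * g x) (a := 0)
    (((hp.continuousOn.mono hKsub).mul hgcont).mono inter_subset_left)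
    fun x hx ↦ mul_pos (hp.pos x (hKsub hx.1)) (hKg x (hKsub hx.1) hx.2).2
  have hsuper : IsRiccatiSupersolution (Ioo a b) μ p W := fun x hx ↦
    ⟨hW x hx, (le_add_of_nonneg_right (hg_nonneg x hx)).trans (hg x hx)⟩
  refine hsuper.ofReal_lt_mu1 hμ hp hint hc hWc hm fun x hx hx2 ↦ ?_
  have hdiv : m / p x ≤ g x := (div_le_iff₀' (hp.pos x hx)).2 (hmin x ⟨(hKg x hx hx2).1, hx2⟩)
  exact (add_le_add_right hdiv _).trans (hg x hx)

theorem exists_smooth_step {x y : ℝ} (hxy : x < y) : ∃ l : ℝ → ℝ, Differentiable ℝ l ∧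
    Monotone l ∧ (∀ z, l z ∈ Icc 0 1) ∧ (∀ z ≤ x, l z = 0) ∧ (∀ z, y ≤ z → l z = 1) ∧
    ∀ z ∈ Ioo x y, l z ∈ Ioo 0 1 := by
  have hd : 0 < y - x := sub_pos.2 hxy
  refine ⟨fun z ↦ smoothTransition ((z - x) / (y - x)), ?_, fun z w hzw ↦ ?_, fun z ↦ ?_,
    fun z hz ↦ ?_, fun z hz ↦ ?_, fun z hz ↦ ?_⟩
  · exact (smoothTransition.contDiff.differentiable one_ne_zero).comp (by fun_prop)
  · exact smoothTransition.monotone (div_le_div_of_nonneg_right (sub_le_sub_right hzw x) hd.le)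
  · exact ⟨smoothTransition.nonneg _, smoothTransition.le_one _⟩
  · exact smoothTransition.zero_of_nonpos (div_nonpos_of_nonpos_of_nonneg (sub_nonpos.2 hz) hd.le)
  · exact smoothTransition.one_of_one_le ((one_le_div hd).2 (sub_le_sub_right hz x))
  · exact ⟨smoothTransition.pos_of_pos (div_pos (sub_pos.2 hz.1) hd),
      smoothTransition.lt_one_of_lt_one ((div_lt_one hd).2 (sub_lt_sub_right hz.2 x))⟩

theorem hasDerivAt_add_mul_sub_of_riccati {q x l' : ℝ} {l : ℝ → ℝ}
    (hA : HasDerivAt A (1 / q + μ * q * A x ^ 2) x) (hB : HasDerivAt B (1 / q + μ * q * B x ^ 2) x)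
    (hl : HasDerivAt l l' x) :
    HasDerivAt (fun z ↦ A z + l z * (B z - A z))
      (1 / q + μ * q * (A x + l x * (B x - A x)) ^ 2 + l' * (B x - A x) +
        μ * q * (l x * (1 - l x)) * (B x - A x) ^ 2) x := by
  refine (hA.add (hl.mul (hB.sub hA))).congr_deriv ?_
  simp only [Pi.sub_apply]
  ring

/-- The interpolation of `A` and `B` by a step function is a supersolution which is strict wherever
the step is active. -/
theorem ofReal_lt_mu1_of_riccati_lt_of_large {x y : ℝ} (hμ : 0 < μ) (hp : ContinuousWeight a b p)
    (hint : IntegrableOn p (Ioo a b))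
    (hA : ∀ z ∈ Ioo a b, HasDerivAt A (1 / p z + μ * p z * A z ^ 2) z)
    (hB : ∀ z ∈ Ioo a b, HasDerivAt B (1 / p z + μ * p z * B z ^ 2) z)
    (hAB : ∀ z ∈ Ioo a b, A z < B z) (hax : a < x) (hxy : x < y) (hyb : y < b)
    (hAx : A x < 0) (hBy : 0 < B y) (hA_large : ∀ z ∈ Ioc a x, 2 < μ * (p z * A z) ^ 2)
    (hB_large : ∀ z ∈ Ico y b, 2 < μ * (p z * B z) ^ 2) : ENNReal.ofReal μ < mu1 a b p := by
  obtain ⟨l, hl, hlmono, hl01, hl0, hl1, hlIoo⟩ := exists_smooth_step hxy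
  set U : ℝ → ℝ := fun z ↦ A z + l z * (B z - A z) with hU
  have hsub : Icc x y ⊆ Ioo a b := Icc_subset_Ioo hax hyb
  have hUA : ∀ z ≤ x, U z = A z := fun z hz ↦ by simp only [hU, hl0 z hz, zero_mul, add_zero]
  have hUB : ∀ z, y ≤ z → U z = B z := fun z hz ↦ by
    simp only [hU, hl1 z hz, one_mul, add_sub_cancel]
  have hU' : ∀ z ∈ Ioo a b, HasDerivAt U _ z := fun z hz ↦
    hasDerivAt_add_mul_sub_of_riccati (hA z hz) (hB z hz) (hl z).hasDerivAt
  obtain ⟨c, hc, hUc⟩ := isPreconnected_Icc.intermediate_value (left_mem_Icc.2 hxy.le)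
    (right_mem_Icc.2 hxy.le) ((HasDerivAt.continuousOn hU').mono hsub)
    ⟨(hUA x le_rfl ▸ hAx).le, (hUB y le_rfl ▸ hBy).le⟩
  refine ofReal_lt_mu1_of_add_le_deriv (W := U) (K := Icc x y)
    (g := fun z ↦ μ * p z * (l z * (1 - l z)) * (B z - A z) ^ 2) hμ hp hint
    (fun z hz ↦ (hU' z hz).differentiableAt) (fun z hz ↦ ?_) (fun z hz ↦ ?_) isCompact_Icc hsub ?_
    (fun z hz hsmall ↦ ?_) (hsub hc) hUc
  · have hl₀ := (hl01 z).1
    have hl₁ := sub_nonneg.2 (hl01 z).2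
    have hpz := (hp.pos z hz).le
    positivity
  · have hstep : 0 ≤ deriv l z * (B z - A z) :=
      mul_nonneg hlmono.deriv_nonneg (sub_pos.2 (hAB z hz)).le
    rw [(hU' z hz).deriv]
    linarith
  · have hl' := hl.continuous.continuousOn (s := Icc x y)
    exact ((continuousOn_const.mul (hp.continuousOn.mono hsub)).mul
      (hl'.mul (continuousOn_const.sub hl'))).mul
      ((((HasDerivAt.continuousOn hB).sub (HasDerivAt.continuousOn hA)).mono hsub).pow 2)
  · have hzxy : z ∈ Ioo x y := by
      refine ⟨not_le.1 fun hzx ↦ ?_, not_le.1 fun hyz ↦ ?_⟩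
      · exact (hA_large z ⟨hz.1, hzx⟩).not_ge (hUA z hzx ▸ hsmall)
      · exact (hB_large z ⟨hyz, hz.2⟩).not_ge (hUB z hyz ▸ hsmall)
    have hl₀ := (hlIoo z hzxy).1
    have hl₁ := sub_pos.2 (hlIoo z hzxy).2
    have hpz := hp.pos z hz
    have hBA := sub_pos.2 (hAB z hz)
    exact ⟨Ioo_subset_Icc_self hzxy, by positivity⟩

theorem ofReal_lt_mu1_of_riccati_lt (hμ : 0 < μ) (hab : a < b) (hp : ContinuousWeight a b p)
    (hint : IntegrableOn p (Ioo a b))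
    (hA : ∀ x ∈ Ioo a b, HasDerivAt A (1 / p x + μ * p x * A x ^ 2) x)
    (hB : ∀ x ∈ Ioo a b, HasDerivAt B (1 / p x + μ * p x * B x ^ 2) x)
    (hAB : ∀ x ∈ Ioo a b, A x < B x) (hAa : Tendsto (fun x ↦ p x * A x) (𝓝[>] a) atBot)
    (hBb : Tendsto (fun x ↦ p x * B x) (𝓝[<] b) atTop) : ENNReal.ofReal μ < mu1 a b p := by
  have hAa' : ∀ᶠ x in 𝓝[>] a, p x * A x < 0 ∧ 2 < μ * (p x * A x) ^ 2 := by
    have hsq := ((tendsto_pow_atTop two_ne_zero).comp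
      (tendsto_neg_atBot_atTop.comp hAa)).const_mul_atTop hμ
    filter_upwards [hAa.eventually_lt_atBot 0, hsq.eventually_gt_atTop 2] with x h₁ h₂
    exact ⟨h₁, by simpa only [Function.comp_apply, neg_sq] using h₂⟩
  have hBb' : ∀ᶠ x in 𝓝[<] b, 0 < p x * B x ∧ 2 < μ * (p x * B x) ^ 2 :=
    (hBb.eventually_gt_atTop 0).and
      ((((tendsto_pow_atTop two_ne_zero).comp hBb).const_mul_atTop hμ).eventually_gt_atTop 2)
  obtain ⟨z, haz, hzb⟩ := exists_between hab
  obtain ⟨x, hax, hx⟩ := mem_nhdsGT_iff_exists_Ioc_subset.1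
    (hAa'.and (Ioo_mem_nhdsGT haz))
  obtain ⟨y, hyb, hy⟩ := mem_nhdsLT_iff_exists_Ico_subset.1
    (hBb'.and (Ioo_mem_nhdsLT hzb))
  have hxz := (hx (right_mem_Ioc.2 hax)).2.2
  have hzy := (hy (left_mem_Ico.2 hyb)).2.1
  have hpx := hp.pos x ⟨hax, hxz.trans hzb⟩
  have hpy := hp.pos y ⟨haz.trans hzy, hyb⟩
  exact ofReal_lt_mu1_of_riccati_lt_of_large hμ hp hint hA hB hAB hax (hxz.trans hzy) hyb
    (neg_of_mul_neg_right (hx (right_mem_Ioc.2 hax)).1.1 hpx.le)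
    (pos_of_mul_pos_right (hy (left_mem_Ico.2 hyb)).1.1 hpy.le)
    (fun w hw ↦ (hx hw).1.2) fun w hw ↦ (hy hw).1.2

end StrictSpectralBound

/-! ### Log-concave weights and principal angles -/

/-- A positive log-concave weight `p` on `(a, b)`, given together with the monotone function
`ψ = -(log p)' / 2`. -/
structure LogConcaveWeight (a b : ℝ) (p ψ : ℝ → ℝ) : Prop where
  pos : ∀ x ∈ Ioo a b, 0 < p x
  mono : MonotoneOn ψ (Ioo a b)
  log_sub_log : ∀ x ∈ Ioo a b, ∀ y ∈ Ioo a b, log (p y) - log (p x) = -2 * ∫ t in x..y, ψ t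

section LogConcave

variable {a b μ : ℝ} {p ψ θ φ : ℝ → ℝ}

theorem mul_sub_le_integral_of_monotoneOn {x y : ℝ} (hψ : MonotoneOn ψ (uIcc x y)) :
    ψ x * (y - x) ≤ ∫ t in x..y, ψ t := by
  have hint : IntervalIntegrable ψ volume x y := hψ.intervalIntegrable
  rcases le_total x y with h | h
  · have hle := intervalIntegral.integral_mono_on h intervalIntegrable_const hint fun t ht ↦
      hψ left_mem_uIcc (by rwa [uIcc_of_le h]) ht.1
    rwa [intervalIntegral.integral_const, smul_eq_mul, mul_comm] at hle
  · have hle := intervalIntegral.integral_mono_on h hint.symm intervalIntegrable_const fun t ht ↦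
      hψ (by rwa [uIcc_of_ge h]) left_mem_uIcc ht.2
    rw [intervalIntegral.integral_const, smul_eq_mul] at hle
    rw [intervalIntegral.integral_symm]
    linarith

namespace LogConcaveWeight

theorem toContinuousWeight (hp : LogConcaveWeight a b p ψ) : ContinuousWeight a b p := by
  refine ⟨hp.pos, fun x hx ↦ ContinuousAt.continuousWithinAt ?_⟩
  obtain ⟨c, d, hxcd, -, hsub⟩ := exists_Icc_subset_Ioo hx hx
  have hcd : c ≤ d := (hxcd.1.trans hxcd.2).le
  have hint : IntervalIntegrable ψ volume c d :=
    (hp.mono.mono (uIcc_of_le hcd ▸ hsub)).intervalIntegrable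
  have hprim : ContinuousAt (fun y ↦ ∫ t in x..y, ψ t) x := by
    refine (intervalIntegral.continuousOn_primitive_interval' hint ?_).continuousAt ?_ <;>
      rw [uIcc_of_le hcd]
    exacts [Ioo_subset_Icc_self hxcd, Icc_mem_nhds hxcd.1 hxcd.2]
  refine ((hprim.const_mul (-2)).const_add (log (p x))).rexp.congr ?_
  filter_upwards [Ioo_mem_nhds hx.1 hx.2] with y hy
  rw [← hp.log_sub_log x hx y hy, add_sub_cancel, exp_log (hp.pos y hy)]

theorem le_mul_exp (hp : LogConcaveWeight a b p ψ) {x y : ℝ} (hx : x ∈ Ioo a b)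
    (hy : y ∈ Ioo a b) : p y ≤ p x * exp (-2 * ψ x * (y - x)) := by
  have hsub : uIcc x y ⊆ Ioo a b := ordConnected_Ioo.uIcc_subset hx hy
  have hle := mul_sub_le_integral_of_monotoneOn (hp.mono.mono hsub)
  have hlog := hp.log_sub_log x hx y hy
  rw [← log_le_log_iff (hp.pos y hy) (mul_pos (hp.pos x hx) (exp_pos _)),
    log_mul (hp.pos x hx).ne' (exp_pos _).ne', log_exp]
  linarith

theorem integrableOn (hp : LogConcaveWeight a b p ψ) : IntegrableOn p (Ioo a b) := by
  rcases (Ioo a b).eq_empty_or_nonempty with h | ⟨x, hx⟩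
  · rw [h]
    exact integrableOn_empty
  have hbound : IntegrableOn (fun y ↦ p x * exp (-2 * ψ x * (y - x))) (Ioo a b) :=
    ((by fun_prop : Continuous fun y ↦ p x * exp (-2 * ψ x * (y - x))).integrableOn_Icc).mono_set
      Ioo_subset_Icc_self
  refine hbound.mono'
    (hp.toContinuousWeight.continuousOn.aestronglyMeasurable measurableSet_Ioo) ?_
  filter_upwards [ae_restrict_mem measurableSet_Ioo] with y hy
  rw [norm_of_nonneg (hp.pos y hy).le]
  exact hp.le_mul_exp hx hy

theorem hasSuperderivAt (hp : LogConcaveWeight a b p ψ) {x : ℝ} (hx : x ∈ Ioo a b) :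
    HasSuperderivAt p (-2 * ψ x * p x) x := by
  refine ⟨fun y ↦ p x * exp (-2 * ψ x * (y - x)), ?_, ?_, ?_⟩
  · have hlin : HasDerivAt (fun y ↦ -2 * ψ x * (y - x)) (-2 * ψ x * 1) x :=
      ((hasDerivAt_id x).sub_const x).const_mul _
    refine (hlin.exp.const_mul (p x)).congr_deriv ?_
    simp only [sub_self, mul_zero, exp_zero]
    ring
  · simp only [sub_self, mul_zero, exp_zero, mul_one]
  · filter_upwards [Ioo_mem_nhds hx.1 hx.2] with y hy using hp.le_mul_exp hx hy

theorem comp_neg (hp : LogConcaveWeight a b p ψ) :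
    LogConcaveWeight (-b) (-a) (fun x ↦ p (-x)) (fun x ↦ -ψ (-x)) where
  pos x hx := hp.pos (-x) (neg_mem_Ioo_iff.2 hx)
  mono x hx y hy hxy :=
    neg_le_neg (hp.mono (neg_mem_Ioo_iff.2 hy) (neg_mem_Ioo_iff.2 hx) (neg_le_neg hxy))
  log_sub_log x hx y hy := by
    rw [hp.log_sub_log (-x) (neg_mem_Ioo_iff.2 hx) (-y) (neg_mem_Ioo_iff.2 hy),
      intervalIntegral.integral_neg, intervalIntegral.integral_comp_neg,
      intervalIntegral.integral_symm]

theorem hasSuperderivAt_riccati (hp : LogConcaveWeight a b p ψ) (hφ : IsPruferAngle a b μ p φ)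
    {x : ℝ} (hx : x ∈ Ioo a b) (h₀ : 0 < φ x) (h₁ : φ x < π / 2) :
    HasSuperderivAt (riccati p φ)
      (1 + μ * riccati p φ x ^ 2 - 2 * ψ x * riccati p φ x) x := by
  have hcos : cos (φ x) ≠ 0 := (cos_pos_of_mem_Ioo ⟨by linarith, h₁⟩).ne'
  have hnonneg : ∀ᶠ z in 𝓝 x, 0 ≤ tan (φ z) :=
    (hφ.hasDerivAt_tan hx hcos).continuousAt.eventually_const_le
      (tan_pos_of_pos_of_lt_pi_div_two h₀ h₁)
  have hpx := (hp.pos x hx).ne'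
  convert (hp.hasSuperderivAt hx).mul_of_nonneg (hφ.hasDerivAt_tan hx hcos) hnonneg using 1
  · rfl
  · simp only [riccati]
    field_simp
    ring

end LogConcaveWeight

end LogConcave

section PrincipalAngle

variable {a b μ : ℝ} {p ψ θ φ : ℝ → ℝ}

theorem IsPruferAngle.exists_eq_pi_div_two (hφ : IsPruferAngle a b μ p φ) {x y : ℝ}
    (hx : x ∈ Ioo a b) (hy : y ∈ Ioo a b) (hφx : φ x < π / 2) (hφy : π / 2 ≤ φ y) :
    ∃ z ∈ Ioo a b, φ z = π / 2 :=
  isPreconnected_Ioo.intermediate_value₂ hx hy hφ.continuousOn continuousOn_const hφx.le hφy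

theorem IsPruferAngle.exists_lt_riccati (hφ : IsPruferAngle a b μ p φ) (hμ : 0 < μ)
    (hp : ContinuousWeight a b p) {y z : ℝ} (hz : z ∈ Ioo a b) (hφz : φ z = π / 2) (hyz : y < z)
    (M : ℝ) : ∃ w ∈ Ioo y z, M < riccati p φ w :=
  (((hφ.tendsto_riccati_atTop hμ hp hz hφz).eventually_gt_atTop M).and
    (Ioo_mem_nhdsLT hyz)).exists.imp fun _ hw ↦ ⟨hw.2, hw.1⟩

theorem riccati_eq_of_eq_arctan {x A : ℝ} (hpx : 0 < p x) (h : φ x = arctan (A / p x)) :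
    riccati p φ x = A := by
  rw [riccati, h, tan_arctan, mul_div_cancel₀ _ hpx.ne']

namespace LogConcaveWeight

/-- Unlike the growth of `φ` itself, this bound does not involve `p`, which may degenerate at an
end of the interval. -/
theorem arctan_riccati_le (hp : LogConcaveWeight a b p ψ) (hμ : 0 < μ)
    (hφ : IsPruferAngle a b μ p φ) {K y z : ℝ} (hsub : Icc y z ⊆ Ioo a b) (hyz : y ≤ z)
    (h₀ : 0 ≤ φ y) (h₁ : φ z < π / 2) (hK : ∀ x ∈ Ioo y z, -K ≤ ψ x) :
    arctan (riccati p φ z) ≤ arctan (riccati p φ y) + (1 + μ + |K|) * (z - y) := by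
  have hpc := hp.toContinuousWeight
  have hmono := (hφ.strictMonoOn hμ hpc).mono hsub
  have hφ₀ : ∀ x ∈ Icc y z, 0 ≤ φ x := fun x hx ↦
    h₀.trans (hmono.monotoneOn (left_mem_Icc.2 hyz) hx hx.1)
  have hφ₁ : ∀ x ∈ Icc y z, φ x < π / 2 := fun x hx ↦
    (hmono.monotoneOn hx (right_mem_Icc.2 hyz) hx.2).trans_lt h₁
  have hcont : ContinuousOn (riccati p φ) (Icc y z) := fun x hx ↦
    (hφ.continuousAt_riccati hpc (hsub hx) (cos_pos_of_mem_Ioo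
      ⟨by linarith [hφ₀ x hx, pi_pos], hφ₁ x hx⟩).ne').continuousWithinAt
  set C := 1 + μ + |K|
  set R := riccati p φ
  have hlin (x : ℝ) : HasDerivAt (fun x ↦ arctan (R y) + C * (x - y)) (C * 1) x :=
    (((hasDerivAt_id x).sub_const y).const_mul C).const_add _
  refine sub_nonpos.1 (HasSuperderivAt.nonpos_of_le_mul (K := 0)
    (f := fun x ↦ arctan (R x) - (arctan (R y) + C * (x - y))) hyz
    ((continuous_arctan.comp_continuousOn hcont).sub (HasDerivAt.continuousOn fun x _ ↦ hlin x))
    (fun x hx ↦ ?_) ?_)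
  · have hx' := Ioo_subset_Icc_self hx
    have hφx : 0 < φ x := h₀.trans_lt (hmono (left_mem_Icc.2 hyz) hx' hx.1)
    refine ⟨_, ((hp.hasSuperderivAt_riccati hφ (hsub hx') hφx (hφ₁ x hx')).monotone_comp
      arctan_strictMono.monotone (hasDerivAt_arctan _)).sub_hasDerivAt (hlin x), ?_⟩
    have hRx : 0 ≤ R x := mul_nonneg (hp.pos x (hsub hx')).le
      (tan_nonneg_of_nonneg_of_le_pi_div_two hφx.le (hφ₁ x hx').le)
    have hψR : -(2 * ψ x * R x) ≤ |K| * (1 + R x ^ 2) := by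
      nlinarith [mul_nonneg (abs_nonneg K) (sq_nonneg (R x - 1)), le_abs_self K, hK x hx]
    rw [zero_mul, mul_one, sub_nonpos, one_div, inv_mul_le_iff₀ (by positivity)]
    nlinarith [sq_nonneg (R x)]
  · simp only [sub_self, mul_zero, add_zero, le_refl]

theorem eventually_lt_pi_div_two (hp : LogConcaveWeight a b p ψ) (hab : a < b) (hμ : 0 < μ)
    (A : ℝ) : ∀ᶠ y in 𝓝[<] b, ∀ φ, IsPruferAngle a b μ p φ → 0 ≤ φ y → φ y < π / 2 →
      riccati p φ y ≤ A → ∀ x ∈ Ioo a b, φ x < π / 2 := by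
  obtain ⟨x₀, hx₀⟩ := nonempty_Ioo.2 hab
  set C := 1 + μ + |-ψ x₀|
  have hC : 0 < C := by positivity
  have hlim : Tendsto (fun y ↦ arctan A + C * (b - y)) (𝓝[<] b) (𝓝 (arctan A)) := by
    have hc : Continuous fun y ↦ arctan A + C * (b - y) := by fun_prop
    simpa only [sub_self, mul_zero, add_zero] using (hc.tendsto b).mono_left nhdsWithin_le_nhds
  filter_upwards [hlim.eventually_lt_const (arctan_lt_pi_div_two A), Ioo_mem_nhdsLT hx₀.2]
    with y hm hy φ hφ hφ₀ hφ₁ hA x hx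
  have hyI : y ∈ Ioo a b := ⟨hx₀.1.trans hy.1, hy.2⟩
  have hmono := hφ.strictMonoOn hμ hp.toContinuousWeight
  by_contra! hφx
  obtain ⟨z, hz, hφz⟩ := hφ.exists_eq_pi_div_two hyI hx hφ₁ hφx
  have hyz : y < z := (hmono.lt_iff_lt hyI hz).1 (hφz ▸ hφ₁)
  set m := arctan A + C * (b - y)
  have hm' : -(π / 2) < m :=
    (neg_pi_div_two_lt_arctan A).trans (lt_add_of_pos_right _ (mul_pos hC (sub_pos.2 hy.2)))
  obtain ⟨w, hw, hmw⟩ := hφ.exists_lt_riccati hμ hp.toContinuousWeight hz hφz hyz (tan m)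
  have hwI : w ∈ Ioo a b := ⟨hyI.1.trans hw.1, hw.2.trans hz.2⟩
  have hle := hp.arctan_riccati_le hμ hφ (K := -ψ x₀)
    (fun t ht ↦ ⟨hyI.1.trans_le ht.1, ht.2.trans_lt hwI.2⟩) hw.1.le hφ₀
    (hφz ▸ hmono hwI hz hw.2) fun t ht ↦ (neg_neg (ψ x₀)).le.trans
      (hp.mono hx₀ ⟨hyI.1.trans ht.1, ht.2.trans hwI.2⟩ (hy.1.trans ht.1).le)
  have hlt := (arctan_strictMono hmw).trans_le (hle.trans
    (add_le_add (arctan_mono hA) (mul_le_mul_of_nonneg_left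
      (sub_le_sub_right hwI.2.le y) hC.le)))
  rw [arctan_tan hm' hm] at hlt
  exact lt_irrefl _ hlt

end LogConcaveWeight

/-- `θ` is the Prüfer angle of the solution of `(p v')' + μ p v = 0` which is principal at the
right end of `(a, b)`, i.e. satisfies the Neumann condition there: the largest angle which stays
below `π / 2`. -/
structure IsRightPrincipal (a b μ : ℝ) (p θ : ℝ → ℝ) : Prop where
  isPruferAngle : IsPruferAngle a b μ p θ
  lt_pi_div_two : ∀ x ∈ Ioo a b, θ x < π / 2
  le_of_lt_pi_div_two : ∀ φ, IsPruferAngle a b μ p φ → (∀ x ∈ Ioo a b, φ x < π / 2) →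
    ∀ x ∈ Ioo a b, φ x ≤ θ x

theorem LogConcaveWeight.exists_isRightPrincipal (hp : LogConcaveWeight a b p ψ) (hab : a < b)
    (hμ : 0 < μ) : ∃ θ, IsRightPrincipal a b μ p θ := by
  have hpc := hp.toContinuousWeight
  obtain ⟨y, hend, hy⟩ :=
    ((hp.eventually_lt_pi_div_two hab hμ 0).and (Ioo_mem_nhdsLT hab)).exists
  set S := {s | ∃ φ, IsPruferAngle a b μ p φ ∧ φ y = s ∧ ∀ x ∈ Ioo a b, φ x < π / 2}
  have hSne : S.Nonempty := by
    obtain ⟨φ, hφy, hφ⟩ := hpc.exists_isPruferAngle μ hy 0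
    refine ⟨0, φ, hφ, hφy, hend φ hφ hφy.ge (hφy ▸ pi_div_two_pos) ?_⟩
    rw [riccati, hφy, tan_zero, mul_zero]
  have hSbdd : BddAbove S := ⟨π / 2, fun _ ⟨_, _, hφy, hlt⟩ ↦ hφy ▸ (hlt y hy).le⟩
  obtain ⟨θ, hθy, hθ⟩ := hpc.exists_isPruferAngle μ hy (sSup S)
  refine ⟨θ, hθ, fun x hx ↦ ?_, fun φ hφ hlt x hx ↦ ?_⟩
  · by_contra! hθx
    obtain ⟨z, hxz, hzb⟩ := exists_between hx.2
    have hz : z ∈ Ioo a b := ⟨hx.1.trans hxz, hzb⟩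
    have hθz : π / 2 < θ z := hθx.trans_lt (hθ.strictMonoOn hμ hpc hx hz hxz)
    obtain ⟨φ, hφz, hφ⟩ := hpc.exists_isPruferAngle μ hz (π / 2)
    have hφy : φ y < sSup S := hθy ▸ hφ.lt_of_lt hθ hpc hz hy (hφz ▸ hθz)
    obtain ⟨_, ⟨σ, hσ, rfl, hσlt⟩, hφσ⟩ := exists_lt_of_lt_csSup hSne hφy
    exact (hσlt z hz).not_gt (hφz ▸ hφ.lt_of_lt hσ hpc hy hz hφσ)
  · by_contra! hlt'
    exact (le_csSup hSbdd ⟨φ, hφ, rfl, hlt⟩).not_gt (hθy ▸ hθ.lt_of_lt hφ hpc hx hy hlt')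

namespace IsRightPrincipal

theorem exists_eq_pi_div_two (hθ : IsRightPrincipal a b μ p θ) {x : ℝ}
    (hx : x ∈ Ioo a b) (hφ : IsPruferAngle a b μ p φ) (hφx : φ x < π / 2) (h : θ x < φ x) :
    ∃ z ∈ Ioo a b, φ z = π / 2 := by
  by_contra! hne
  refine h.not_ge (hθ.le_of_lt_pi_div_two φ hφ (fun z hz ↦ ?_) x hx)
  by_contra! hz'
  obtain ⟨w, hw, hφw⟩ := hφ.exists_eq_pi_div_two hx hz hφx hz'
  exact hne w hw hφw

theorem tendsto_riccati_atTop (hθ : IsRightPrincipal a b μ p θ) (hp : LogConcaveWeight a b p ψ)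
    (hab : a < b) (hμ : 0 < μ) : Tendsto (riccati p θ) (𝓝[<] b) atTop := by
  refine tendsto_atTop.2 fun A ↦ ?_
  filter_upwards [hp.eventually_lt_pi_div_two hab hμ (max A 0), Ioo_mem_nhdsLT hab] with y hend hy
  have hpy := hp.pos y hy
  obtain ⟨φ, hφy, hφ⟩ :=
    hp.toContinuousWeight.exists_isPruferAngle μ hy (arctan (max A 0 / p y))
  have hφ₀ : 0 ≤ φ y := hφy ▸ arctan_nonneg.2 (by positivity)
  have hφ₁ : φ y < π / 2 := hφy ▸ arctan_lt_pi_div_two _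
  have hR := riccati_eq_of_eq_arctan hpy hφy
  have hφθ : φ y ≤ θ y := hθ.le_of_lt_pi_div_two φ hφ (hend φ hφ hφ₀ hφ₁ hR.le) y hy
  have htan : tan (φ y) ≤ tan (θ y) := strictMonoOn_tan.monotoneOn
    ⟨by linarith [pi_pos], hφ₁⟩ ⟨by linarith [pi_pos], hθ.lt_pi_div_two y hy⟩ hφθ
  calc A ≤ max A 0 := le_max_left A 0
    _ = riccati p φ y := hR.symm
    _ ≤ riccati p θ y := mul_le_mul_of_nonneg_left htan hpy.le

end IsRightPrincipal

end PrincipalAngle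

/-! ### Two-point comparison -/

/-- `Y` parametrizes `[α, β]` over `[0, τ]` by the integral of `R` from `α`. -/
structure IsIntegralParam (R : ℝ → ℝ) (α β τ : ℝ) (Y : ℝ → ℝ) : Prop where
  continuousOn : ContinuousOn Y (Icc 0 τ)
  map_zero : Y 0 = α
  map_right : Y τ = β
  mem_Ioo : ∀ t ∈ Ioo 0 τ, Y t ∈ Ioo α β
  hasDerivAt : ∀ t ∈ Ioo 0 τ, HasDerivAt Y (R (Y t))⁻¹ t
  integral_eq : ∀ t ∈ Ioo 0 τ, ∫ x in α..Y t, R x = t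

theorem IsIntegralParam.mem_Icc {R Y : ℝ → ℝ} {α β τ t : ℝ} (h : IsIntegralParam R α β τ Y)
    (hαβ : α ≤ β) (ht : t ∈ Icc 0 τ) : Y t ∈ Icc α β := by
  rcases eq_endpoints_or_mem_Ioo_of_mem_Icc ht with rfl | rfl | ht
  · rwa [h.map_zero, left_mem_Icc]
  · rwa [h.map_right, right_mem_Icc]
  · exact Ioo_subset_Icc_self (h.mem_Ioo t ht)

section InverseFunctions

theorem continuousOn_image_of_leftInvOn {X Y : Type*} [TopologicalSpace X] [TopologicalSpace Y]
    [T2Space Y] {f : X → Y} {g : Y → X} {s : Set X} (hs : IsCompact s) (hf : ContinuousOn f s)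
    (hgf : LeftInvOn g f s) : ContinuousOn g (f '' s) := by
  refine continuousOn_iff_isClosed.2 fun t ht ↦ ⟨f '' (s ∩ t), ?_, ?_⟩
  · exact ((hs.inter_right ht).image_of_continuousOn (hf.mono inter_subset_left)).isClosed
  · rw [inter_comm s t, hgf.image_inter', inter_assoc, inter_self]

variable {R : ℝ → ℝ} {α β : ℝ}

theorem continuousOn_integral_of_continuousOn_Icc (hαβ : α ≤ β) (hR : ContinuousOn R (Icc α β)) :
    ContinuousOn (fun y ↦ ∫ x in α..y, R x) (Icc α β) := by
  rw [← uIcc_of_le hαβ] at hR ⊢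
  exact intervalIntegral.continuousOn_primitive_interval' hR.intervalIntegrable left_mem_uIcc

theorem hasDerivAt_integral_of_continuousOn_Icc (hR : ContinuousOn R (Icc α β)) {y : ℝ}
    (hy : y ∈ Ioo α β) : HasDerivAt (fun y ↦ ∫ x in α..y, R x) (R y) y := by
  refine intervalIntegral.integral_hasDerivAt_right ?_
    ((hR.mono Ioo_subset_Icc_self).stronglyMeasurableAtFilter isOpen_Ioo y hy)
    (hR.continuousAt (Icc_mem_nhds hy.1 hy.2))
  refine (hR.mono ?_).intervalIntegrable
  rw [uIcc_of_le hy.1.le]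
  exact Icc_subset_Icc_right hy.2.le

theorem strictMonoOn_integral_of_pos (hαβ : α ≤ β) (hR : ContinuousOn R (Icc α β))
    (hpos : ∀ x ∈ Ioo α β, 0 < R x) : StrictMonoOn (fun y ↦ ∫ x in α..y, R x) (Icc α β) := by
  refine strictMonoOn_of_deriv_pos (convex_Icc α β)
    (continuousOn_integral_of_continuousOn_Icc hαβ hR) fun x hx ↦ ?_
  rw [interior_Icc] at hx
  exact (hasDerivAt_integral_of_continuousOn_Icc hR hx).deriv ▸ hpos x hx

theorem exists_isIntegralParam (hαβ : α ≤ β) (hR : ContinuousOn R (Icc α β))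
    (hpos : ∀ x ∈ Ioo α β, 0 < R x) : ∃ Y, IsIntegralParam R α β (∫ x in α..β, R x) Y := by
  set G : ℝ → ℝ := fun y ↦ ∫ x in α..y, R x
  have hGα : G α = 0 := intervalIntegral.integral_same
  have hGcont := continuousOn_integral_of_continuousOn_Icc hαβ hR
  have hGmono := strictMonoOn_integral_of_pos hαβ hR hpos
  have himage : G '' Icc α β = Icc 0 (G β) :=
    hGα ▸ hGcont.image_Icc_of_monotoneOn hαβ hGmono.monotoneOn
  set Y := Function.invFunOn G (Icc α β)
  have hYG : LeftInvOn Y G (Icc α β) := hGmono.injOn.leftInvOn_invFunOn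
  have hY : ∀ t ∈ Icc 0 (G β), Y t ∈ Icc α β ∧ G (Y t) = t := fun t ht ↦
    have ht' : t ∈ G '' Icc α β := himage ▸ ht
    ⟨Function.invFunOn_mem ht', Function.invFunOn_eq ht'⟩
  have hYcont : ContinuousOn Y (Icc 0 (G β)) :=
    himage ▸ continuousOn_image_of_leftInvOn isCompact_Icc hGcont hYG
  have hYIoo : ∀ t ∈ Ioo 0 (G β), Y t ∈ Ioo α β := fun t ht ↦ by
    obtain ⟨hmem, hGY⟩ := hY t (Ioo_subset_Icc_self ht)
    refine ⟨(hGmono.lt_iff_lt (left_mem_Icc.2 hαβ) hmem).1 ?_,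
      (hGmono.lt_iff_lt hmem (right_mem_Icc.2 hαβ)).1 ?_⟩
    exacts [hGα.trans_lt (ht.1.trans_eq hGY.symm), hGY.trans_lt ht.2]
  refine ⟨Y, hYcont, hGα ▸ hYG (left_mem_Icc.2 hαβ), hYG (right_mem_Icc.2 hαβ), hYIoo,
    fun t ht ↦ ?_, fun t ht ↦ (hY t (Ioo_subset_Icc_self ht)).2⟩
  have hnhds : Icc 0 (G β) ∈ 𝓝 t := Icc_mem_nhds ht.1 ht.2
  refine HasDerivAt.of_local_left_inverse (f := G) (hYcont.continuousAt hnhds)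
    (hasDerivAt_integral_of_continuousOn_Icc hR (hYIoo t ht))
    (hpos _ (hYIoo t ht)).ne' (by filter_upwards [hnhds] with s hs using (hY s hs).2)

end InverseFunctions

/-- Two log-concave weights whose logarithmic derivatives satisfy the gap condition against each
other. In the application the second weight is the reflection of the first one about `0`, so that
`s` stands for `-x` in the condition `2 * tan ((y - x) / 2) ≤ ψ y - ψ x`; in this form the two
points play symmetric roles. -/
structure GapPair (a₁ b₁ : ℝ) (p₁ ψ₁ : ℝ → ℝ) (a₂ b₂ : ℝ) (p₂ ψ₂ : ℝ → ℝ) : Prop where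
  fst : LogConcaveWeight a₁ b₁ p₁ ψ₁
  snd : LogConcaveWeight a₂ b₂ p₂ ψ₂
  add_le_pi : b₁ + b₂ ≤ π
  gap : ∀ y ∈ Ioo a₁ b₁, ∀ s ∈ Ioo a₂ b₂, 0 < y + s → 2 * tan ((y + s) / 2) ≤ ψ₁ y + ψ₂ s

/-- On `[y₀, y₁)` the Prüfer angle `φ` runs through part of `[0, π / 2)`. -/
structure IsRightBranch (a b μ : ℝ) (p φ : ℝ → ℝ) (y₀ y₁ : ℝ) : Prop where
  isPruferAngle : IsPruferAngle a b μ p φ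
  mem : y₀ ∈ Ioo a b
  le : y₁ ≤ b
  nonneg : 0 ≤ φ y₀
  lt_pi_div_two : ∀ x ∈ Ico y₀ y₁, φ x < π / 2

/-- The quantity whose sign is compared along pairs of points with equal integrals of the ratios
`riccati`; it vanishes identically for the model weight `cos x ^ 2`. -/
def twoPointExcess (p₁ φ₁ p₂ φ₂ : ℝ → ℝ) (y s : ℝ) : ℝ :=
  riccati p₁ φ₁ y + riccati p₂ φ₂ s - 2 * tan ((y + s) / 2)

namespace IsRightBranch

variable {a b μ : ℝ} {p ψ φ : ℝ → ℝ} {y₀ y₁ x : ℝ}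

theorem mem_Ioo (h : IsRightBranch a b μ p φ y₀ y₁) (hx : x ∈ Ico y₀ y₁) : x ∈ Ioo a b :=
  ⟨h.mem.1.trans_le hx.1, hx.2.trans_le h.le⟩

theorem angle_pos (h : IsRightBranch a b μ p φ y₀ y₁) (hp : ContinuousWeight a b p) (hμ : 0 < μ)
    (hx : x ∈ Ioo y₀ y₁) : 0 < φ x :=
  h.nonneg.trans_lt
    (h.isPruferAngle.strictMonoOn hμ hp h.mem (h.mem_Ioo (Ioo_subset_Ico_self hx)) hx.1)

theorem riccati_pos (h : IsRightBranch a b μ p φ y₀ y₁) (hp : ContinuousWeight a b p) (hμ : 0 < μ)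
    (hx : x ∈ Ioo y₀ y₁) : 0 < riccati p φ x :=
  have hx' := Ioo_subset_Ico_self hx
  mul_pos (hp.pos x (h.mem_Ioo hx'))
    (tan_pos_of_pos_of_lt_pi_div_two (h.angle_pos hp hμ hx) (h.lt_pi_div_two x hx'))

theorem continuousOn_riccati (h : IsRightBranch a b μ p φ y₀ y₁) (hp : ContinuousWeight a b p)
    (hμ : 0 < μ) : ContinuousOn (riccati p φ) (Ico y₀ y₁) := fun x hx ↦ by
  have hφx : 0 ≤ φ x := h.nonneg.trans
    ((h.isPruferAngle.strictMonoOn hμ hp).monotoneOn h.mem (h.mem_Ioo hx) hx.1)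
  exact (h.isPruferAngle.continuousAt_riccati hp (h.mem_Ioo hx) (cos_pos_of_mem_Ioo
    ⟨by linarith [pi_pos], h.lt_pi_div_two x hx⟩).ne').continuousWithinAt

theorem hasSuperderivAt_riccati (h : IsRightBranch a b μ p φ y₀ y₁)
    (hp : LogConcaveWeight a b p ψ) (hμ : 0 < μ) (hx : x ∈ Ioo y₀ y₁) :
    HasSuperderivAt (riccati p φ) (1 + μ * riccati p φ x ^ 2 - 2 * ψ x * riccati p φ x) x :=
  have hx' := Ioo_subset_Ico_self hx
  hp.hasSuperderivAt_riccati h.isPruferAngle (h.mem_Ioo hx')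
    (h.angle_pos hp.toContinuousWeight hμ hx) (h.lt_pi_div_two x hx')

theorem exists_isIntegralParam (h : IsRightBranch a b μ p φ y₀ y₁) (hp : ContinuousWeight a b p)
    (hμ : 0 < μ) (hx : x ∈ Ico y₀ y₁) :
    ∃ Y, IsIntegralParam (riccati p φ) y₀ x (∫ z in y₀..x, riccati p φ z) Y :=
  _root_.exists_isIntegralParam hx.1
    ((h.continuousOn_riccati hp hμ).mono fun _ hz ↦ ⟨hz.1, hz.2.trans_lt hx.2⟩)
    fun _ hz ↦ h.riccati_pos hp hμ ⟨hz.1, hz.2.trans hx.2⟩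

theorem integral_riccati_pos (h : IsRightBranch a b μ p φ y₀ y₁) (hp : ContinuousWeight a b p)
    (hμ : 0 < μ) (hx : x ∈ Ioo y₀ y₁) : 0 < ∫ z in y₀..x, riccati p φ z :=
  intervalIntegral.intervalIntegral_pos_of_pos_on
    (((h.continuousOn_riccati hp hμ).mono (by
      rw [uIcc_of_le hx.1.le]; exact fun z hz ↦ ⟨hz.1, hz.2.trans_lt hx.2⟩)).intervalIntegrable)
    (fun _ hz ↦ h.riccati_pos hp hμ ⟨hz.1, hz.2.trans hx.2⟩) hx.1

theorem exists_integral_eq (h : IsRightBranch a b μ p φ y₀ y₁) (hp : ContinuousWeight a b p)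
    (hμ : 0 < μ) (hx : x ∈ Ioo y₀ y₁) {τ : ℝ} (hτ : 0 < τ)
    (hτx : τ ≤ ∫ z in y₀..x, riccati p φ z) :
    ∃ y ∈ Ioo y₀ y₁, ∫ z in y₀..y, riccati p φ z = τ := by
  have hcont : ContinuousOn (riccati p φ) (Icc y₀ x) :=
    (h.continuousOn_riccati hp hμ).mono (Icc_subset_Ico_right hx.2)
  have hG₀ : ∫ z in y₀..y₀, riccati p φ z = 0 := intervalIntegral.integral_same
  obtain ⟨y, hy, hyτ⟩ := intermediate_value_Ioc hx.1.le
    (continuousOn_integral_of_continuousOn_Icc hx.1.le hcont) ⟨hG₀.trans_lt hτ, hτx⟩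
  exact ⟨y, ⟨hy.1, hy.2.trans_lt hx.2⟩, hyτ⟩

theorem forall_integral_eq_or {a₂ b₂ s₀ s₁ : ℝ} {p₂ φ₂ : ℝ → ℝ}
    (h : IsRightBranch a b μ p φ y₀ y₁) (h₂ : IsRightBranch a₂ b₂ μ p₂ φ₂ s₀ s₁)
    (hp : ContinuousWeight a b p) (hp₂ : ContinuousWeight a₂ b₂ p₂) (hμ : 0 < μ) :
    (∀ y ∈ Ioo y₀ y₁, ∃ s ∈ Ioo s₀ s₁,
      ∫ x in s₀..s, riccati p₂ φ₂ x = ∫ x in y₀..y, riccati p φ x) ∨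
    ∀ s ∈ Ioo s₀ s₁, ∃ y ∈ Ioo y₀ y₁,
      ∫ x in y₀..y, riccati p φ x = ∫ x in s₀..s, riccati p₂ φ₂ x := by
  by_contra! hne
  obtain ⟨⟨y, hy, hy_ne⟩, s, hs, hs_ne⟩ := hne
  rcases le_total (∫ x in y₀..y, riccati p φ x) (∫ x in s₀..s, riccati p₂ φ₂ x) with hle | hle
  · obtain ⟨s', hs', heq⟩ := h₂.exists_integral_eq hp₂ hμ hs (h.integral_riccati_pos hp hμ hy) hle
    exact hy_ne s' hs' heq
  · obtain ⟨y', hy', heq⟩ := h.exists_integral_eq hp hμ hy (h₂.integral_riccati_pos hp₂ hμ hs) hle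
    exact hs_ne y' hy' heq

end IsRightBranch

section TwoPoint

variable {a₁ b₁ a₂ b₂ y₀ y₁ s₀ s₁ : ℝ} {p₁ ψ₁ φ₁ p₂ ψ₂ φ₂ Y₁ Y₂ : ℝ → ℝ}

theorem twoPointExcess_comm (y s : ℝ) :
    twoPointExcess p₁ φ₁ p₂ φ₂ y s = twoPointExcess p₂ φ₂ p₁ φ₁ s y := by
  rw [twoPointExcess, twoPointExcess, add_comm s y, add_comm (riccati p₁ φ₁ y)]

theorem excess_deriv_le {R₁ R₂ T m₁ m₂ : ℝ} (hR₁ : 0 < R₁) (hR₂ : 0 < R₂) (hm : 2 * T ≤ m₁ + m₂) :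
    (1 + 3 * R₁ ^ 2 - 2 * m₁ * R₁) * R₁⁻¹ + (1 + 3 * R₂ ^ 2 - 2 * m₂ * R₂) * R₂⁻¹ -
        (1 + T ^ 2) * (R₁⁻¹ + R₂⁻¹) ≤
      4 * (R₁ + R₂ - 2 * T) - T ^ 2 * (R₁ - R₂) ^ 2 / (R₁ * R₂ * (R₁ + R₂)) := by
  have hgap : (1 + 3 * R₁ ^ 2 - 2 * m₁ * R₁) * R₁⁻¹ + (1 + 3 * R₂ ^ 2 - 2 * m₂ * R₂) * R₂⁻¹ -
        (1 + T ^ 2) * (R₁⁻¹ + R₂⁻¹) =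
      4 * (R₁ + R₂ - 2 * T) - T ^ 2 * (R₁ - R₂) ^ 2 / (R₁ * R₂ * (R₁ + R₂)) -
        ((R₁ + R₂ - 2 * T) ^ 2 / (R₁ + R₂) + 2 * (m₁ + m₂ - 2 * T)) := by
    field_simp
    ring
  rw [hgap, sub_le_self_iff]
  have := sub_nonneg.2 hm
  positivity

theorem hasDerivAt_two_mul_tan_half {f : ℝ → ℝ} {f' t : ℝ} (hf : HasDerivAt f f' t)
    (h : cos (f t / 2) ≠ 0) :
    HasDerivAt (fun t ↦ 2 * tan (f t / 2)) ((1 + tan (f t / 2) ^ 2) * f') t := by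
  refine (((hasDerivAt_tan h).comp t (hf.div_const 2)).const_mul 2).congr_deriv ?_
  rw [← inv_one_add_tan_sq h, one_div, inv_inv]
  ring

namespace GapPair

theorem symm (h : GapPair a₁ b₁ p₁ ψ₁ a₂ b₂ p₂ ψ₂) : GapPair a₂ b₂ p₂ ψ₂ a₁ b₁ p₁ ψ₁ where
  fst := h.snd
  snd := h.fst
  add_le_pi := add_comm b₁ b₂ ▸ h.add_le_pi
  gap s hs y hy hsy := by
    rw [add_comm s, add_comm (ψ₂ s)]
    exact h.gap y hy s hs (add_comm s y ▸ hsy)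

theorem half_add_mem_Ico (h : GapPair a₁ b₁ p₁ ψ₁ a₂ b₂ p₂ ψ₂) {y s : ℝ} (hys : 0 ≤ y + s)
    (hy : y < b₁) (hs : s < b₂) : (y + s) / 2 ∈ Ico 0 (π / 2) :=
  ⟨by linarith, by linarith [h.add_le_pi]⟩

variable (h : GapPair a₁ b₁ p₁ ψ₁ a₂ b₂ p₂ ψ₂) (h₁ : IsRightBranch a₁ b₁ 3 p₁ φ₁ y₀ y₁)
  (h₂ : IsRightBranch a₂ b₂ 3 p₂ φ₂ s₀ s₁) (h₀ : 0 ≤ y₀ + s₀)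

include h h₁ h₂ h₀

theorem exists_hasSuperderivAt_excess {t : ℝ} (hY₁ : Y₁ t ∈ Ioo y₀ y₁) (hY₂ : Y₂ t ∈ Ioo s₀ s₁)
    (hY₁' : HasDerivAt Y₁ (riccati p₁ φ₁ (Y₁ t))⁻¹ t)
    (hY₂' : HasDerivAt Y₂ (riccati p₂ φ₂ (Y₂ t))⁻¹ t) :
    ∃ m, HasSuperderivAt (fun t ↦ twoPointExcess p₁ φ₁ p₂ φ₂ (Y₁ t) (Y₂ t)) m t ∧
      m ≤ 4 * twoPointExcess p₁ φ₁ p₂ φ₂ (Y₁ t) (Y₂ t) -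
        tan ((Y₁ t + Y₂ t) / 2) ^ 2 * (riccati p₁ φ₁ (Y₁ t) - riccati p₂ φ₂ (Y₂ t)) ^ 2 /
          (riccati p₁ φ₁ (Y₁ t) * riccati p₂ φ₂ (Y₂ t) *
            (riccati p₁ φ₁ (Y₁ t) + riccati p₂ φ₂ (Y₂ t))) := by
  have hμ : (0 : ℝ) < 3 := three_pos
  have hI₁ := h₁.mem_Ioo (Ioo_subset_Ico_self hY₁)
  have hI₂ := h₂.mem_Ioo (Ioo_subset_Ico_self hY₂)
  have hsum : 0 < Y₁ t + Y₂ t := by linarith [hY₁.1, hY₂.1]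
  have hhalf := h.half_add_mem_Ico hsum.le hI₁.2 hI₂.2
  have hcos : cos ((Y₁ t + Y₂ t) / 2) ≠ 0 :=
    (cos_pos_of_mem_Ioo ⟨by linarith [hhalf.1, pi_pos], hhalf.2⟩).ne'
  exact ⟨_, (((h₁.hasSuperderivAt_riccati h.fst hμ hY₁).comp hY₁').add
      ((h₂.hasSuperderivAt_riccati h.snd hμ hY₂).comp hY₂')).sub_hasDerivAt
        (hasDerivAt_two_mul_tan_half (hY₁'.add hY₂') hcos),
    excess_deriv_le (h₁.riccati_pos h.fst.toContinuousWeight hμ hY₁)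
      (h₂.riccati_pos h.snd.toContinuousWeight hμ hY₂) (h.gap _ hI₁ _ hI₂ hsum)⟩

theorem continuousOn_excess {s : Set ℝ} (hY₁ : ContinuousOn Y₁ s) (hY₂ : ContinuousOn Y₂ s)
    (hmem₁ : MapsTo Y₁ s (Ico y₀ y₁)) (hmem₂ : MapsTo Y₂ s (Ico s₀ s₁)) :
    ContinuousOn (fun t ↦ twoPointExcess p₁ φ₁ p₂ φ₂ (Y₁ t) (Y₂ t)) s := by
  refine ((((h₁.continuousOn_riccati h.fst.toContinuousWeight three_pos).comp hY₁ hmem₁).add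
    ((h₂.continuousOn_riccati h.snd.toContinuousWeight three_pos).comp hY₂ hmem₂)).sub
      (continuousOn_const.mul (continuousOn_tan_Ioo.comp ((hY₁.add hY₂).div_const 2) ?_)))
  intro t ht
  have hhalf := h.half_add_mem_Ico (h₀.trans (add_le_add (hmem₁ ht).1 (hmem₂ ht).1))
    (h₁.mem_Ioo (hmem₁ ht)).2 (h₂.mem_Ioo (hmem₂ ht)).2
  exact ⟨by linarith [hhalf.1, pi_pos], hhalf.2⟩

theorem excess_nonpos (hinit : twoPointExcess p₁ φ₁ p₂ φ₂ y₀ s₀ ≤ 0) {y s : ℝ}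
    (hy : y ∈ Ioo y₀ y₁) (hs : s ∈ Ioo s₀ s₁)
    (hys : ∫ x in s₀..s, riccati p₂ φ₂ x = ∫ x in y₀..y, riccati p₁ φ₁ x) :
    twoPointExcess p₁ φ₁ p₂ φ₂ y s ≤ 0 := by
  have hp₁ := h.fst.toContinuousWeight
  have hp₂ := h.snd.toContinuousWeight
  obtain ⟨Y₁, hY₁⟩ := h₁.exists_isIntegralParam hp₁ three_pos (Ioo_subset_Ico_self hy)
  obtain ⟨Y₂, hY₂⟩ := h₂.exists_isIntegralParam hp₂ three_pos (Ioo_subset_Ico_self hs)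
  rw [hys] at hY₂
  have hmem₁ : MapsTo Y₁ (Icc 0 _) (Ico y₀ y₁) := fun t ht ↦
    Icc_subset_Ico_right hy.2 (hY₁.mem_Icc hy.1.le ht)
  have hmem₂ : MapsTo Y₂ (Icc 0 _) (Ico s₀ s₁) := fun t ht ↦
    Icc_subset_Ico_right hs.2 (hY₂.mem_Icc hs.1.le ht)
  have key := HasSuperderivAt.nonpos_of_le_mul (K := 4)
    (f := fun t ↦ twoPointExcess p₁ φ₁ p₂ φ₂ (Y₁ t) (Y₂ t))
    (h₁.integral_riccati_pos hp₁ three_pos hy).le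
    (h.continuousOn_excess h₁ h₂ h₀ hY₁.continuousOn hY₂.continuousOn hmem₁ hmem₂)
    (fun t ht ↦ ?_) (by rwa [hY₁.map_zero, hY₂.map_zero])
  · rwa [hY₁.map_right, hY₂.map_right] at key
  have ht₁ := Ioo_subset_Ioo_right hy.2.le (hY₁.mem_Ioo t ht)
  have ht₂ := Ioo_subset_Ioo_right hs.2.le (hY₂.mem_Ioo t ht)
  obtain ⟨m, hm, hle⟩ := h.exists_hasSuperderivAt_excess h₁ h₂ h₀ ht₁ ht₂
    (hY₁.hasDerivAt t ht) (hY₂.hasDerivAt t ht)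
  have hR₁ := h₁.riccati_pos hp₁ three_pos ht₁
  have hR₂ := h₂.riccati_pos hp₂ three_pos ht₂
  exact ⟨m, hm, hle.trans (sub_le_self _ (by positivity))⟩

theorem riccati_le_of_forall_integral_eq (hinit : twoPointExcess p₁ φ₁ p₂ φ₂ y₀ s₀ ≤ 0)
    (hmatch : ∀ y ∈ Ioo y₀ y₁, ∃ s ∈ Ioo s₀ s₁,
      ∫ x in s₀..s, riccati p₂ φ₂ x = ∫ x in y₀..y, riccati p₁ φ₁ x)
    (hlt : y₁ + s₁ < π) {y : ℝ} (hy : y ∈ Ioo y₀ y₁) :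
    riccati p₁ φ₁ y ≤ 2 * tan ((y₁ + s₁) / 2) := by
  obtain ⟨s, hs, hys⟩ := hmatch y hy
  have hexcess := h.excess_nonpos h₁ h₂ h₀ hinit hy hs hys
  have hR₂ := h₂.riccati_pos h.snd.toContinuousWeight three_pos hs
  have htan : tan ((y + s) / 2) ≤ tan ((y₁ + s₁) / 2) := by
    have hpi := pi_pos
    refine strictMonoOn_tan.monotoneOn ⟨?_, ?_⟩ ⟨?_, ?_⟩ ?_ <;>
      linarith [hy.1, hy.2, hs.1, hs.2]
  rw [twoPointExcess] at hexcess
  linarith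

end GapPair

theorem IsPruferAngle.isRightBranch {a b μ y z : ℝ} {p φ : ℝ → ℝ} (hφ : IsPruferAngle a b μ p φ)
    (hp : ContinuousWeight a b p) (hμ : 0 < μ) (hy : y ∈ Ioo a b) (hz : z ∈ Ioo a b)
    (hφy : 0 ≤ φ y) (hφz : φ z = π / 2) : IsRightBranch a b μ p φ y z where
  isPruferAngle := hφ
  mem := hy
  le := hz.2.le
  nonneg := hφy
  lt_pi_div_two _ hx := hφz ▸ hφ.strictMonoOn hμ hp ⟨hy.1.trans_le hx.1, hx.2.trans hz.2⟩ hz hx.2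

theorem IsRightPrincipal.isRightBranch {a b μ y : ℝ} {p θ : ℝ → ℝ}
    (hθ : IsRightPrincipal a b μ p θ) (hy : y ∈ Ioo a b) (hθy : 0 ≤ θ y) :
    IsRightBranch a b μ p θ y b where
  isPruferAngle := hθ.isPruferAngle
  mem := hy
  le := le_rfl
  nonneg := hθy
  lt_pi_div_two x hx := hθ.lt_pi_div_two x ⟨hy.1.trans_le hx.1, hx.2⟩

namespace GapPair

/-- The logarithmic ratios of the two branches cannot blow up together strictly inside the
intervals: along matched points they are bounded by the tangent. -/
theorem excess_pos_of_eq_pi_div_two (h : GapPair a₁ b₁ p₁ ψ₁ a₂ b₂ p₂ ψ₂)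
    (hφ₁ : IsPruferAngle a₁ b₁ 3 p₁ φ₁) (hφ₂ : IsPruferAngle a₂ b₂ 3 p₂ φ₂) {y s : ℝ}
    (hy : y ∈ Ioo a₁ b₁) (hs : s ∈ Ioo a₂ b₂) (hys : 0 ≤ y + s) (hφy : φ₁ y ∈ Ico 0 (π / 2))
    (hφs : φ₂ s ∈ Ico 0 (π / 2)) (hend₁ : ∃ z ∈ Ioo a₁ b₁, φ₁ z = π / 2)
    (hend₂ : ∃ z ∈ Ioo a₂ b₂, φ₂ z = π / 2) : 0 < twoPointExcess p₁ φ₁ p₂ φ₂ y s := by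
  obtain ⟨y₁, hy₁, hφy₁⟩ := hend₁
  obtain ⟨s₁, hs₁, hφs₁⟩ := hend₂
  have hp₁ := h.fst.toContinuousWeight
  have hp₂ := h.snd.toContinuousWeight
  have h₁ := hφ₁.isRightBranch hp₁ three_pos hy hy₁ hφy.1 hφy₁
  have h₂ := hφ₂.isRightBranch hp₂ three_pos hs hs₁ hφs.1 hφs₁
  have hlt : y₁ + s₁ < π := (add_lt_add hy₁.2 hs₁.2).trans_le h.add_le_pi
  by_contra! hinit
  rcases h₁.forall_integral_eq_or h₂ hp₁ hp₂ three_pos with hmatch | hmatch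
  · have hyy₁ : y < y₁ :=
      ((hφ₁.strictMonoOn three_pos hp₁).lt_iff_lt hy hy₁).1 (hφy₁ ▸ hφy.2)
    obtain ⟨w, hw, hlarge⟩ := hφ₁.exists_lt_riccati three_pos hp₁ hy₁ hφy₁ hyy₁ _
    exact (h.riccati_le_of_forall_integral_eq h₁ h₂ hys hinit hmatch hlt hw).not_gt hlarge
  · have hss₁ : s < s₁ :=
      ((hφ₂.strictMonoOn three_pos hp₂).lt_iff_lt hs hs₁).1 (hφs₁ ▸ hφs.2)
    obtain ⟨w, hw, hlarge⟩ := hφ₂.exists_lt_riccati three_pos hp₂ hs₁ hφs₁ hss₁ _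
    rw [twoPointExcess_comm] at hinit
    rw [add_comm] at hlt hys
    exact (h.symm.riccati_le_of_forall_integral_eq h₂ h₁ hys hinit hmatch hlt hw).not_gt hlarge

end GapPair

end TwoPoint

/-! ### Rigidity -/

theorem eq_of_hasDerivAt_zero_off_countable {f : ℝ → ℝ} {a b : ℝ} {s : Set ℝ} (hab : a ≤ b)
    (hs : s.Countable) (hf : ContinuousOn f (Icc a b))
    (hf' : ∀ x ∈ Ioo a b \ s, HasDerivAt f 0 x) : f a = f b := by
  have hint := integral_eq_of_hasDerivAt_off_countable_of_le f (fun _ ↦ 0) hab hs hf hf'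
    intervalIntegrable_const
  rw [intervalIntegral.integral_zero] at hint
  exact (sub_eq_zero.1 hint.symm).symm

namespace IsRightPrincipal

variable {a b μ : ℝ} {p ψ θ : ℝ → ℝ}

theorem exists_nonneg (hθ : IsRightPrincipal a b μ p θ) (hp : LogConcaveWeight a b p ψ)
    (hab : a < b) (hμ : 0 < μ) : ∃ x ∈ Ioo a b, 0 ≤ θ x := by
  obtain ⟨x, hend, hx⟩ := ((hp.eventually_lt_pi_div_two hab hμ 0).and (Ioo_mem_nhdsLT hab)).exists
  obtain ⟨φ, hφx, hφ⟩ := hp.toContinuousWeight.exists_isPruferAngle μ hx 0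
  have hφ_lt := hend φ hφ hφx.ge (hφx ▸ pi_div_two_pos) (by rw [riccati, hφx, tan_zero, mul_zero])
  exact ⟨x, hx, hφx.ge.trans (hθ.le_of_lt_pi_div_two φ hφ hφ_lt x hx)⟩

theorem exists_isPruferAngle_riccati_add (hθ : IsRightPrincipal a b μ p θ)
    (hp : ContinuousWeight a b p) {x δ : ℝ} (hx : x ∈ Ioo a b) (hθx : 0 ≤ θ x) (hδ : 0 < δ) :
    ∃ φ, IsPruferAngle a b μ p φ ∧ φ x ∈ Ico 0 (π / 2) ∧ riccati p φ x = riccati p θ x + δ ∧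
      ∃ z ∈ Ioo a b, φ z = π / 2 := by
  have hpx := hp.pos x hx
  have hlt := hθ.lt_pi_div_two x hx
  obtain ⟨φ, hφx, hφ⟩ := hp.exists_isPruferAngle μ hx (arctan ((riccati p θ x + δ) / p x))
  have hθφ : θ x < φ x := by
    rw [hφx, ← arctan_tan (by linarith [pi_pos]) hlt]
    refine arctan_strictMono ((lt_div_iff₀ hpx).2 ?_)
    rw [riccati, mul_comm]
    exact lt_add_of_pos_right _ hδ
  have hφ_lt : φ x < π / 2 := hφx ▸ arctan_lt_pi_div_two _
  exact ⟨φ, hφ, ⟨hθx.trans hθφ.le, hφ_lt⟩, riccati_eq_of_eq_arctan hpx hφx,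
    hθ.exists_eq_pi_div_two hx hφ hφ_lt hθφ⟩

end IsRightPrincipal

section Rigidity

variable {a₁ b₁ a₂ b₂ c₁ c₂ : ℝ} {p₁ ψ₁ θ₁ p₂ ψ₂ θ₂ Y₁ Y₂ : ℝ → ℝ}

namespace GapPair

theorem excess_nonneg (h : GapPair a₁ b₁ p₁ ψ₁ a₂ b₂ p₂ ψ₂)
    (hθ₁ : IsRightPrincipal a₁ b₁ 3 p₁ θ₁) (hθ₂ : IsRightPrincipal a₂ b₂ 3 p₂ θ₂) {y s : ℝ}
    (hy : y ∈ Ioo a₁ b₁) (hs : s ∈ Ioo a₂ b₂) (hys : 0 ≤ y + s) (hθy : 0 ≤ θ₁ y)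
    (hθs : 0 ≤ θ₂ s) : 0 ≤ twoPointExcess p₁ θ₁ p₂ θ₂ y s := by
  by_contra! hneg
  have hδ : 0 < -twoPointExcess p₁ θ₁ p₂ θ₂ y s / 2 := by linarith
  obtain ⟨φ₁, hφ₁, hφy, hR₁, hend₁⟩ :=
    hθ₁.exists_isPruferAngle_riccati_add h.fst.toContinuousWeight hy hθy hδ
  obtain ⟨φ₂, hφ₂, hφs, hR₂, hend₂⟩ :=
    hθ₂.exists_isPruferAngle_riccati_add h.snd.toContinuousWeight hs hθs hδ
  have hpos := h.excess_pos_of_eq_pi_div_two hφ₁ hφ₂ hy hs hys hφy hφs hend₁ hend₂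
  rw [twoPointExcess, hR₁, hR₂, twoPointExcess] at hpos
  linarith

theorem riccati_eq_of_excess_eventuallyEq_zero {y₁ s₁ t : ℝ}
    (h : GapPair a₁ b₁ p₁ ψ₁ a₂ b₂ p₂ ψ₂) (h₁ : IsRightBranch a₁ b₁ 3 p₁ θ₁ c₁ y₁)
    (h₂ : IsRightBranch a₂ b₂ 3 p₂ θ₂ c₂ s₁) (h₀ : 0 ≤ c₁ + c₂)
    (hY₁ : Y₁ t ∈ Ioo c₁ y₁) (hY₂ : Y₂ t ∈ Ioo c₂ s₁)
    (hY₁' : HasDerivAt Y₁ (riccati p₁ θ₁ (Y₁ t))⁻¹ t)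
    (hY₂' : HasDerivAt Y₂ (riccati p₂ θ₂ (Y₂ t))⁻¹ t)
    (hzero : (fun t ↦ twoPointExcess p₁ θ₁ p₂ θ₂ (Y₁ t) (Y₂ t)) =ᶠ[𝓝 t] fun _ ↦ 0) :
    riccati p₁ θ₁ (Y₁ t) = riccati p₂ θ₂ (Y₂ t) := by
  obtain ⟨m, hm, hle⟩ := h.exists_hasSuperderivAt_excess h₁ h₂ h₀ hY₁ hY₂ hY₁' hY₂'
  have hm₀ : m = 0 := hm.eq_of_hasDerivAt ((hasDerivAt_const t 0).congr_of_eventuallyEq hzero)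
  rw [hm₀, hzero.eq_of_nhds, mul_zero, zero_sub, le_neg, neg_zero] at hle
  have hhalf := h.half_add_mem_Ico (h₀.trans (add_le_add hY₁.1.le hY₂.1.le))
    (hY₁.2.trans_le h₁.le) (hY₂.2.trans_le h₂.le)
  have htan : 0 < tan ((Y₁ t + Y₂ t) / 2) :=
    tan_pos_of_pos_of_lt_pi_div_two (by linarith [hY₁.1, hY₂.1]) hhalf.2
  have hR₁ := h₁.riccati_pos h.fst.toContinuousWeight three_pos hY₁
  have hR₂ := h₂.riccati_pos h.snd.toContinuousWeight three_pos hY₂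
  by_contra hne
  have := sub_ne_zero.2 hne
  exact hle.not_gt (by positivity)

end GapPair

/-- Two right principal angles at the eigenvalue `3` that vanish at opposite points. -/
structure IsCriticalPair (a₁ b₁ : ℝ) (p₁ ψ₁ θ₁ : ℝ → ℝ) (c₁ a₂ b₂ : ℝ) (p₂ ψ₂ θ₂ : ℝ → ℝ)
    (c₂ : ℝ) : Prop where
  gapPair : GapPair a₁ b₁ p₁ ψ₁ a₂ b₂ p₂ ψ₂
  fst : IsRightPrincipal a₁ b₁ 3 p₁ θ₁
  snd : IsRightPrincipal a₂ b₂ 3 p₂ θ₂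
  fst_mem : c₁ ∈ Ioo a₁ b₁
  snd_mem : c₂ ∈ Ioo a₂ b₂
  fst_eq_zero : θ₁ c₁ = 0
  snd_eq_zero : θ₂ c₂ = 0
  add_eq_zero : c₁ + c₂ = 0

namespace IsCriticalPair

theorem symm (h : IsCriticalPair a₁ b₁ p₁ ψ₁ θ₁ c₁ a₂ b₂ p₂ ψ₂ θ₂ c₂) :
    IsCriticalPair a₂ b₂ p₂ ψ₂ θ₂ c₂ a₁ b₁ p₁ ψ₁ θ₁ c₁ where
  gapPair := h.gapPair.symm
  fst := h.snd
  snd := h.fst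
  fst_mem := h.snd_mem
  snd_mem := h.fst_mem
  fst_eq_zero := h.snd_eq_zero
  snd_eq_zero := h.fst_eq_zero
  add_eq_zero := add_comm c₁ c₂ ▸ h.add_eq_zero

variable (h : IsCriticalPair a₁ b₁ p₁ ψ₁ θ₁ c₁ a₂ b₂ p₂ ψ₂ θ₂ c₂)

include h

theorem isRightBranch : IsRightBranch a₁ b₁ 3 p₁ θ₁ c₁ b₁ :=
  h.fst.isRightBranch h.fst_mem h.fst_eq_zero.ge

theorem excess_eq_zero {y s : ℝ} (hy : y ∈ Ioo c₁ b₁) (hs : s ∈ Ioo c₂ b₂)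
    (hys : ∫ x in c₂..s, riccati p₂ θ₂ x = ∫ x in c₁..y, riccati p₁ θ₁ x) :
    twoPointExcess p₁ θ₁ p₂ θ₂ y s = 0 := by
  have h₁ := h.isRightBranch
  have h₂ := h.symm.isRightBranch
  have hinit : twoPointExcess p₁ θ₁ p₂ θ₂ c₁ c₂ = 0 := by
    simp only [twoPointExcess, riccati, h.fst_eq_zero, h.snd_eq_zero, h.add_eq_zero, zero_div,
      tan_zero, mul_zero, add_zero, sub_zero]
  have hθy := h₁.angle_pos h.gapPair.fst.toContinuousWeight three_pos hy
  have hθs := h₂.angle_pos h.gapPair.snd.toContinuousWeight three_pos hs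
  exact (h.gapPair.excess_nonpos h₁ h₂ h.add_eq_zero.ge hinit.le hy hs hys).antisymm
    (h.gapPair.excess_nonneg h.fst h.snd (h₁.mem_Ioo (Ioo_subset_Ico_self hy))
      (h₂.mem_Ioo (Ioo_subset_Ico_self hs)) (by linarith [h.add_eq_zero, hy.1, hs.1]) hθy.le hθs.le)

theorem eqOn_riccati_comp {y s τ : ℝ} (hy : y ≤ b₁) (hs : s ≤ b₂)
    (hY₁ : IsIntegralParam (riccati p₁ θ₁) c₁ y τ Y₁)
    (hY₂ : IsIntegralParam (riccati p₂ θ₂) c₂ s τ Y₂) :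
    EqOn (fun t ↦ riccati p₁ θ₁ (Y₁ t)) (fun t ↦ riccati p₂ θ₂ (Y₂ t)) (Ioo 0 τ) := fun t ht ↦ by
  have hmem₁ : ∀ t ∈ Ioo 0 τ, Y₁ t ∈ Ioo c₁ b₁ := fun t ht ↦
    Ioo_subset_Ioo_right hy (hY₁.mem_Ioo t ht)
  have hmem₂ : ∀ t ∈ Ioo 0 τ, Y₂ t ∈ Ioo c₂ b₂ := fun t ht ↦
    Ioo_subset_Ioo_right hs (hY₂.mem_Ioo t ht)
  refine h.gapPair.riccati_eq_of_excess_eventuallyEq_zero h.isRightBranch h.symm.isRightBranch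
    h.add_eq_zero.ge (hmem₁ t ht) (hmem₂ t ht) (hY₁.hasDerivAt t ht) (hY₂.hasDerivAt t ht) ?_
  filter_upwards [Ioo_mem_nhds ht.1 ht.2] with u hu
  exact h.excess_eq_zero (hmem₁ u hu) (hmem₂ u hu)
    ((hY₂.integral_eq u hu).trans (hY₁.integral_eq u hu).symm)

theorem sub_eq_and_riccati_eq {y s : ℝ} (hy : y ∈ Ioo c₁ b₁) (hs : s ∈ Ioo c₂ b₂)
    (hys : ∫ x in c₂..s, riccati p₂ θ₂ x = ∫ x in c₁..y, riccati p₁ θ₁ x) :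
    y - s = c₁ - c₂ ∧ riccati p₁ θ₁ y = riccati p₂ θ₂ s := by
  have hp₁ := h.gapPair.fst.toContinuousWeight
  have hp₂ := h.gapPair.snd.toContinuousWeight
  have h₁ := h.isRightBranch
  have h₂ := h.symm.isRightBranch
  obtain ⟨Y₁, hY₁⟩ := h₁.exists_isIntegralParam hp₁ three_pos (Ioo_subset_Ico_self hy)
  obtain ⟨Y₂, hY₂⟩ := h₂.exists_isIntegralParam hp₂ three_pos (Ioo_subset_Ico_self hs)
  rw [hys] at hY₂
  set τ := ∫ x in c₁..y, riccati p₁ θ₁ x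
  have hτ : 0 < τ := h₁.integral_riccati_pos hp₁ three_pos hy
  have hR := h.eqOn_riccati_comp hy.2.le hs.2.le hY₁ hY₂
  constructor
  · have hderiv : ∀ t ∈ Ioo 0 τ, HasDerivAt (fun t ↦ Y₁ t - Y₂ t) 0 t := fun t ht ↦
      have hRt : riccati p₁ θ₁ (Y₁ t) = riccati p₂ θ₂ (Y₂ t) := hR ht
      ((hY₁.hasDerivAt t ht).sub (hY₂.hasDerivAt t ht)).congr_deriv (by rw [hRt, sub_self])
    have hconst := eq_of_hasDerivAt_zero_off_countable hτ.le countable_empty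
      (hY₁.continuousOn.sub hY₂.continuousOn) fun t ht ↦ hderiv t ht.1
    simpa only [Pi.sub_apply, hY₁.map_zero, hY₂.map_zero, hY₁.map_right, hY₂.map_right]
      using hconst.symm
  · have hcont₁ : ContinuousOn (fun t ↦ riccati p₁ θ₁ (Y₁ t)) (Icc 0 τ) :=
      (h₁.continuousOn_riccati hp₁ three_pos).comp hY₁.continuousOn fun t ht ↦
        Icc_subset_Ico_right hy.2 (hY₁.mem_Icc hy.1.le ht)
    have hcont₂ : ContinuousOn (fun t ↦ riccati p₂ θ₂ (Y₂ t)) (Icc 0 τ) :=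
      (h₂.continuousOn_riccati hp₂ three_pos).comp hY₂.continuousOn fun t ht ↦
        Icc_subset_Ico_right hs.2 (hY₂.mem_Icc hs.1.le ht)
    simpa only [hY₁.map_right, hY₂.map_right] using hR.of_subset_closure hcont₁ hcont₂
      Ioo_subset_Icc_self (closure_Ioo hτ.ne).ge (right_mem_Icc.2 hτ.le)

theorem riccati_eq_tan {y s : ℝ} (hy : y ∈ Ioo c₁ b₁) (hs : s ∈ Ioo c₂ b₂)
    (hys : ∫ x in c₂..s, riccati p₂ θ₂ x = ∫ x in c₁..y, riccati p₁ θ₁ x) :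
    riccati p₁ θ₁ y = tan (y - c₁) := by
  obtain ⟨hsub, hR⟩ := h.sub_eq_and_riccati_eq hy hs hys
  have hexcess := h.excess_eq_zero hy hs hys
  have hhalf : (y + s) / 2 = y - c₁ := by linarith [h.add_eq_zero]
  rw [twoPointExcess, ← hR, hhalf] at hexcess
  linarith

theorem eq_add_pi_div_two_of_forall_integral_eq
    (hmatch : ∀ y ∈ Ioo c₁ b₁, ∃ s ∈ Ioo c₂ b₂,
      ∫ x in c₂..s, riccati p₂ θ₂ x = ∫ x in c₁..y, riccati p₁ θ₁ x) :
    b₁ = c₁ + π / 2 ∧ b₂ = c₂ + π / 2 ∧ (∀ y ∈ Ioo c₁ b₁, riccati p₁ θ₁ y = tan (y - c₁)) ∧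
      ∀ s ∈ Ioo c₂ b₂, riccati p₂ θ₂ s = tan (s - c₂) := by
  have hcb := h.fst_mem.2
  have hR₁ : ∀ y ∈ Ioo c₁ b₁, riccati p₁ θ₁ y = tan (y - c₁) := fun y hy ↦
    let ⟨_, hs, hys⟩ := hmatch y hy
    h.riccati_eq_tan hy hs hys
  have hlong : π / 2 ≤ b₁ - c₁ := by
    by_contra! hshort
    have hlim := h.fst.tendsto_riccati_atTop h.gapPair.fst (h.fst_mem.1.trans hcb) three_pos
    obtain ⟨y, hlarge, hy⟩ :=
      ((hlim.eventually_gt_atTop (tan (b₁ - c₁))).and (Ioo_mem_nhdsLT hcb)).exists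
    rw [hR₁ y hy] at hlarge
    refine (strictMonoOn_tan ⟨?_, ?_⟩ ⟨?_, hshort⟩ (sub_lt_sub_right hy.2 c₁)).not_gt hlarge <;>
      linarith [pi_pos, hy.1, hy.2]
  have hle : b₁ ≤ b₂ + (c₁ - c₂) := by
    by_contra! hlt
    obtain ⟨y, hby, hyb⟩ := exists_between hlt
    have hy : y ∈ Ioo c₁ b₁ := ⟨by linarith [h.snd_mem.2], hyb⟩
    obtain ⟨s, hs, hys⟩ := hmatch y hy
    linarith [(h.sub_eq_and_riccati_eq hy hs hys).1, hs.2]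
  have hpi := h.gapPair.add_le_pi
  have hsum := h.add_eq_zero
  refine ⟨by linarith, by linarith, hR₁, fun s hs ↦ ?_⟩
  have hy : s + (c₁ - c₂) ∈ Ioo c₁ b₁ := ⟨by linarith [hs.1], by linarith [hs.2]⟩
  obtain ⟨s', hs', hys⟩ := hmatch _ hy
  have hs_eq : s' = s := by linarith [(h.sub_eq_and_riccati_eq hy hs' hys).1]
  subst hs_eq
  exact h.symm.riccati_eq_tan hs' hy hys.symm

theorem eq_add_pi_div_two_and_riccati_eq_tan :
    b₁ = c₁ + π / 2 ∧ b₂ = c₂ + π / 2 ∧ (∀ y ∈ Ioo c₁ b₁, riccati p₁ θ₁ y = tan (y - c₁)) ∧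
      ∀ s ∈ Ioo c₂ b₂, riccati p₂ θ₂ s = tan (s - c₂) := by
  rcases h.isRightBranch.forall_integral_eq_or h.symm.isRightBranch
    h.gapPair.fst.toContinuousWeight h.gapPair.snd.toContinuousWeight three_pos with hm | hm
  · exact h.eq_add_pi_div_two_of_forall_integral_eq hm
  · obtain ⟨hb₂, hb₁, hR₂, hR₁⟩ := h.symm.eq_add_pi_div_two_of_forall_integral_eq hm
    exact ⟨hb₁, hb₂, hR₁, hR₂⟩

end IsCriticalPair

end Rigidity

section Model

variable {c k : ℝ} {p ψ A : ℝ → ℝ}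

theorem cos_sub_pos_of_mem_Ioo {x : ℝ} (hx : x ∈ Ioo (c - π / 2) (c + π / 2)) : 0 < cos (x - c) :=
  cos_pos_of_mem_Ioo ⟨by linarith [hx.1], by linarith [hx.2]⟩

theorem sin_sub_ne_zero_of_mem_Ioo {x : ℝ} (hx : x ∈ Ioo (c - π / 2) (c + π / 2)) (hxc : x ≠ c) :
    sin (x - c) ≠ 0 := by
  rw [Ne, sin_eq_zero_iff_of_lt_of_lt (by linarith [hx.1, pi_pos]) (by linarith [hx.2, pi_pos])]
  exact sub_ne_zero.2 hxc

theorem hasDerivAt_cos_sub (x : ℝ) : HasDerivAt (fun y ↦ cos (y - c)) (-sin (x - c)) x :=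
  (hasDerivAt_cos (x - c)).comp_sub_const x c

theorem hasDerivAt_cos_sq_div (hp : ∀ x ∈ Ioo (c - π / 2) (c + π / 2), 0 < p x)
    (hA : ∀ x ∈ Ioo (c - π / 2) (c + π / 2), HasDerivAt A (1 / p x + 3 * p x * A x ^ 2) x)
    (hpA : ∀ x ∈ Ioo (c - π / 2) (c + π / 2), p x * A x = tan (x - c)) {x : ℝ}
    (hx : x ∈ Ioo (c - π / 2) (c + π / 2)) (hxc : x ≠ c) :
    HasDerivAt (fun y ↦ cos (y - c) ^ 2 / p y) 0 x := by
  have hsin : HasDerivAt (fun y ↦ sin (y - c)) (cos (x - c)) x :=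
    (hasDerivAt_sin (x - c)).comp_sub_const x c
  have hform : ∀ y ∈ Ioo (c - π / 2) (c + π / 2), A y = sin (y - c) / cos (y - c) / p y :=
    fun y hy ↦ by rw [← tan_eq_sin_div_cos, ← hpA y hy, mul_div_cancel_left₀ _ (hp y hy).ne']
  -- Only `A` is known to be differentiable, so `1 / p` is expressed through it.
  have heq : (fun y ↦ cos (y - c) ^ 2 / p y) =ᶠ[𝓝 x]
      fun y ↦ cos (y - c) ^ 3 * A y / sin (y - c) := by
    filter_upwards [isOpen_Ioo.mem_nhds hx, isOpen_ne.mem_nhds hxc] with y hy hyc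
    have hs := sin_sub_ne_zero_of_mem_Ioo hy hyc
    have hc := (cos_sub_pos_of_mem_Ioo hy).ne'
    have hpy := (hp y hy).ne'
    rw [hform y hy]
    field_simp
  have hs := sin_sub_ne_zero_of_mem_Ioo hx hxc
  have hc := (cos_sub_pos_of_mem_Ioo hx).ne'
  have hpx := (hp x hx).ne'
  refine (((((hasDerivAt_cos_sub x).pow 3).mul (hA x hx)).div hsin hs).congr_of_eventuallyEq
    heq).congr_deriv ?_
  simp only [Pi.mul_apply, Pi.pow_apply, hform x hx]
  field_simp
  ring

theorem exists_eq_const_mul_cos_sq (hp : ContinuousWeight (c - π / 2) (c + π / 2) p)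
    (hA : ∀ x ∈ Ioo (c - π / 2) (c + π / 2), HasDerivAt A (1 / p x + 3 * p x * A x ^ 2) x)
    (hpA : ∀ x ∈ Ioo (c - π / 2) (c + π / 2), p x * A x = tan (x - c)) :
    ∃ k, 0 < k ∧ ∀ x ∈ Ioo (c - π / 2) (c + π / 2), p x = k * cos (x - c) ^ 2 := by
  set I := Ioo (c - π / 2) (c + π / 2)
  have hc : c ∈ I := ⟨by linarith [pi_pos], by linarith [pi_pos]⟩
  set f : ℝ → ℝ := fun y ↦ cos (y - c) ^ 2 / p y
  have hf : ContinuousOn f I :=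
    ContinuousOn.div (by fun_prop) hp.continuousOn fun x hx ↦ (hp.pos x hx).ne'
  have heq {x y : ℝ} (hx : x ∈ I) (hy : y ∈ I) (hxy : x ≤ y) : f x = f y :=
    eq_of_hasDerivAt_zero_off_countable hxy (countable_singleton c)
      (hf.mono (Icc_subset_Ioo hx.1 hy.2)) fun z hz ↦
        hasDerivAt_cos_sq_div hp.pos hA hpA ⟨hx.1.trans hz.1.1, hz.1.2.trans hy.2⟩ hz.2
  refine ⟨p c, hp.pos c hc, fun x hx ↦ ?_⟩
  have hfx : f x = f c := (le_total x c).elim (heq hx hc) fun h ↦ (heq hc hx h).symm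
  simp only [f, sub_self, cos_zero, one_pow] at hfx
  rw [div_eq_div_iff (hp.pos x hx).ne' (hp.pos c hc).ne', one_mul] at hfx
  rw [mul_comm, hfx]

theorem LogConcaveWeight.eq_tan_of_eq_const_mul_cos_sq
    (hp : LogConcaveWeight (c - π / 2) (c + π / 2) p ψ)
    (hpk : ∀ x ∈ Ioo (c - π / 2) (c + π / 2), p x = k * cos (x - c) ^ 2) {x : ℝ}
    (hx : x ∈ Ioo (c - π / 2) (c + π / 2)) : ψ x = tan (x - c) := by
  have heq : p =ᶠ[𝓝 x] fun y ↦ k * cos (y - c) ^ 2 := by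
    filter_upwards [isOpen_Ioo.mem_nhds hx] with y hy using hpk y hy
  have hderiv := (hp.hasSuperderivAt hx).eq_of_hasDerivAt
    ((((hasDerivAt_cos_sub x).pow 2).const_mul k).congr_of_eventuallyEq heq)
  have hpx := hp.pos x hx
  have hcos := cos_sub_pos_of_mem_Ioo hx
  rw [hpk x hx] at hpx hderiv
  have hk : k ≠ 0 := left_ne_zero_of_mul hpx.ne'
  rw [tan_eq_sin_div_cos, eq_div_iff hcos.ne']
  refine mul_left_cancel₀ (mul_ne_zero hk hcos.ne') ?_
  linear_combination -hderiv / 2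

end Model

section Reflection

variable {a b c μ : ℝ} {p ψ θ θ' : ℝ → ℝ}

theorem IsPruferAngle.of_comp_neg (hθ' : IsPruferAngle (-b) (-a) μ (fun x ↦ p (-x)) θ') :
    IsPruferAngle a b μ p fun x ↦ -θ' (-x) := by
  simpa only [neg_neg] using hθ'.comp_neg

theorem riccati_comp_neg (x : ℝ) :
    riccati p (fun x ↦ -θ' (-x)) x = -riccati (fun x ↦ p (-x)) θ' (-x) := by
  simp only [riccati, tan_neg, neg_neg, mul_neg]

theorem monotoneOn_of_two_mul_tan_le (hba : b - a ≤ π)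
    (hgap : ∀ x ∈ Ioo a b, ∀ y ∈ Ioo a b, x < y → 2 * tan ((y - x) / 2) ≤ ψ y - ψ x) :
    MonotoneOn ψ (Ioo a b) := by
  refine monotoneOn_iff_forall_lt.2 fun x hx y hy hxy ↦ ?_
  have htan : 0 < tan ((y - x) / 2) :=
    tan_pos_of_pos_of_lt_pi_div_two (by linarith) (by linarith [hx.1, hy.2])
  linarith [hgap x hx y hy hxy]

theorem gapPair_comp_neg (hba : b - a ≤ π) (hpos : ∀ x ∈ Ioo a b, 0 < p x)
    (hψ : ∀ x ∈ Ioo a b, ∀ y ∈ Ioo a b, log (p y) - log (p x) = -2 * ∫ t in x..y, ψ t)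
    (hgap : ∀ x ∈ Ioo a b, ∀ y ∈ Ioo a b, x < y → 2 * tan ((y - x) / 2) ≤ ψ y - ψ x) :
    GapPair a b p ψ (-b) (-a) (fun x ↦ p (-x)) (fun x ↦ -ψ (-x)) :=
  have hp : LogConcaveWeight a b p ψ := ⟨hpos, monotoneOn_of_two_mul_tan_le hba hgap, hψ⟩
  { fst := hp
    snd := hp.comp_neg
    add_le_pi := hba
    gap := fun y hy s hs hys ↦ by
      have hle := hgap (-s) (neg_mem_Ioo_iff.2 hs) y hy (by linarith)
      rwa [sub_neg_eq_add, sub_eq_add_neg] at hle }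

namespace GapPair

variable (h : GapPair a b p ψ (-b) (-a) (fun x ↦ p (-x)) (fun x ↦ -ψ (-x)))
  (hθ : IsRightPrincipal a b 3 p θ) (hθ' : IsRightPrincipal (-b) (-a) 3 (fun x ↦ p (-x)) θ')

include h hθ' hθ

/-- If the principal angles at the two ends were in the opposite order, an angle strictly between
them would pass through both `-π / 2` and `π / 2`, and its logarithmic ratio would blow up on both
sides of its zero. -/
theorem neg_comp_neg_le {x : ℝ} (hx : x ∈ Ioo a b) : -θ' (-x) ≤ θ x := by
  by_contra! hlt
  have hp := h.fst.toContinuousWeight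
  have hx' : -x ∈ Ioo (-b) (-a) := ⟨neg_lt_neg hx.2, neg_lt_neg hx.1⟩
  have hθx := hθ.lt_pi_div_two x hx
  have hθx' := hθ'.lt_pi_div_two (-x) hx'
  obtain ⟨t, hlo, hhi⟩ : ∃ t, max (θ x) (-(π / 2)) < t ∧ t < min (-θ' (-x)) (π / 2) :=
    exists_between (max_lt (lt_min hlt hθx) (lt_min (by linarith) (by linarith [pi_pos])))
  obtain ⟨hθt, hpi_t⟩ := max_lt_iff.1 hlo
  obtain ⟨htθ', ht_pi⟩ := lt_min_iff.1 hhi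
  obtain ⟨φ, rfl, hφ⟩ := hp.exists_isPruferAngle 3 hx t
  obtain ⟨z, hz, hφz⟩ := hθ.exists_eq_pi_div_two hx hφ ht_pi hθt
  obtain ⟨w, hw, hφw⟩ := hθ'.exists_eq_pi_div_two hx' hφ.comp_neg
    (by rw [neg_neg]; linarith) (by rw [neg_neg]; linarith)
  have hw' : -w ∈ Ioo a b := neg_mem_Ioo_iff.2 hw
  obtain ⟨c, hc, hφc⟩ : ∃ c ∈ Ioo a b, φ c = 0 :=
    isPreconnected_Ioo.intermediate_value₂ hw' hz hφ.continuousOn continuousOn_const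
      (by linarith [pi_pos]) (by linarith [pi_pos])
  have hexcess := h.excess_pos_of_eq_pi_div_two hφ hφ.comp_neg hc
    (s := -c) ⟨neg_lt_neg hc.2, neg_lt_neg hc.1⟩ (add_neg_cancel c).ge
    ⟨hφc.ge, hφc ▸ pi_div_two_pos⟩ (by rw [neg_neg, hφc, neg_zero]; exact ⟨le_rfl, pi_div_two_pos⟩)
    ⟨z, hz, hφz⟩ ⟨w, hw, hφw⟩
  simp only [twoPointExcess, riccati, neg_neg, hφc, neg_zero, add_neg_cancel, zero_div, tan_zero,
    mul_zero, add_zero, sub_zero, lt_irrefl] at hexcess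

theorem exists_isCriticalPair (hab : a < b) (heq : EqOn (fun x ↦ -θ' (-x)) θ (Ioo a b)) :
    ∃ c, IsCriticalPair a b p ψ θ c (-b) (-a) (fun x ↦ p (-x)) (fun x ↦ -ψ (-x)) θ' (-c) := by
  obtain ⟨x, hx, hθx⟩ := hθ.exists_nonneg h.fst hab three_pos
  obtain ⟨y, hy, hθy⟩ := hθ'.exists_nonneg h.snd (neg_lt_neg hab) three_pos
  have hθy' : -θ' (- -y) = θ (-y) := heq (neg_mem_Ioo_iff.2 hy)
  rw [neg_neg] at hθy'
  obtain ⟨c, hc, hθc⟩ : ∃ c ∈ Ioo a b, θ c = 0 :=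
    isPreconnected_Ioo.intermediate_value₂ (neg_mem_Ioo_iff.2 hy) hx
      hθ.isPruferAngle.continuousOn continuousOn_const (by linarith) hθx
  have hθc' : -θ' (-c) = 0 := (heq hc).trans hθc
  exact ⟨c, h, hθ, hθ', hc, ⟨neg_lt_neg hc.2, neg_lt_neg hc.1⟩, hθc, neg_eq_zero.1 hθc',
    add_neg_cancel c⟩

theorem ofReal_three_lt_mu1 (hab : a < b) (hlt : ∀ x ∈ Ioo a b, -θ' (-x) < θ x) :
    ENNReal.ofReal 3 < mu1 a b p := by
  have hp := h.fst.toContinuousWeight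
  have hθ'_angle := hθ'.isPruferAngle.of_comp_neg
  have hlo : ∀ x ∈ Ioo a b, -(π / 2) < -θ' (-x) := fun x hx ↦
    neg_lt_neg (hθ'.lt_pi_div_two (-x) ⟨neg_lt_neg hx.2, neg_lt_neg hx.1⟩)
  have hhi := hθ.lt_pi_div_two
  refine ofReal_lt_mu1_of_riccati_lt (A := fun x ↦ tan (-θ' (-x))) (B := fun x ↦ tan (θ x))
    three_pos hab hp h.fst.integrableOn
    (fun x hx ↦ hθ'_angle.hasDerivAt_tan hx
      (cos_pos_of_mem_Ioo ⟨hlo x hx, (hlt x hx).trans (hhi x hx)⟩).ne')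
    (fun x hx ↦ hθ.isPruferAngle.hasDerivAt_tan hx
      (cos_pos_of_mem_Ioo ⟨(hlo x hx).trans (hlt x hx), hhi x hx⟩).ne')
    (fun x hx ↦ strictMonoOn_tan ⟨hlo x hx, (hlt x hx).trans (hhi x hx)⟩
      ⟨(hlo x hx).trans (hlt x hx), hhi x hx⟩ (hlt x hx))
    ?_ (hθ.tendsto_riccati_atTop h.fst hab three_pos)
  refine (tendsto_neg_atTop_atBot.comp ((hθ'.tendsto_riccati_atTop h.snd (neg_lt_neg hab)
    three_pos).comp tendsto_neg_nhdsGT)).congr fun x ↦ ?_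
  exact (riccati_comp_neg x).symm

end GapPair

theorem IsCriticalPair.riccati_eq_tan_sub
    (h : IsCriticalPair a b p ψ θ c (-b) (-a) (fun x ↦ p (-x)) (fun x ↦ -ψ (-x)) θ' (-c))
    (heq : EqOn (fun x ↦ -θ' (-x)) θ (Ioo a b)) {x : ℝ} (hx : x ∈ Ioo a b) :
    riccati p θ x = tan (x - c) := by
  obtain ⟨-, -, hR, hR'⟩ := h.eq_add_pi_div_two_and_riccati_eq_tan
  rcases lt_trichotomy x c with hxc | rfl | hcx
  · have hθx : -θ' (-x) = θ x := heq hx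
    have hneg := riccati_comp_neg (p := p) (θ' := θ') x
    rw [hR' (-x) ⟨neg_lt_neg hxc, neg_lt_neg hx.1⟩, ← tan_neg] at hneg
    rw [riccati, ← hθx]
    exact hneg.trans (congrArg tan (by ring))
  · rw [riccati, h.fst_eq_zero, sub_self, tan_zero, mul_zero]
  · exact hR x ⟨hcx, hx.2⟩

theorem GapPair.exists_eq_tan_and_eq_cos_sq
    (h : GapPair a b p ψ (-b) (-a) (fun x ↦ p (-x)) (fun x ↦ -ψ (-x))) (hab : a < b)
    (heig : mu1 a b p ≤ 3) :
    ∃ c, a = c - π / 2 ∧ b = c + π / 2 ∧ (∀ x ∈ Ioo a b, ψ x = tan (x - c)) ∧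
      ∃ k, 0 < k ∧ ∀ x ∈ Ioo a b, p x = k * cos (x - c) ^ 2 := by
  obtain ⟨θ, hθ⟩ := h.fst.exists_isRightPrincipal hab three_pos
  obtain ⟨θ', hθ'⟩ := h.snd.exists_isRightPrincipal (neg_lt_neg hab) three_pos
  obtain ⟨x₀, hx₀, heq₀⟩ : ∃ x ∈ Ioo a b, -θ' (-x) = θ x := by
    by_contra! hne
    have hlt := h.ofReal_three_lt_mu1 hθ hθ' hab fun x hx ↦
      (h.neg_comp_neg_le hθ hθ' hx).lt_of_ne (hne x hx)
    exact hlt.not_ge (heig.trans_eq (ENNReal.ofReal_ofNat 3).symm)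
  have heq : EqOn (fun x ↦ -θ' (-x)) θ (Ioo a b) :=
    hθ'.isPruferAngle.of_comp_neg.eqOn hθ.isPruferAngle h.fst.toContinuousWeight hx₀ heq₀
  obtain ⟨c, hcrit⟩ := h.exists_isCriticalPair hθ hθ' hab heq
  obtain ⟨rfl, ha, -⟩ := hcrit.eq_add_pi_div_two_and_riccati_eq_tan
  obtain rfl : a = c - π / 2 := by linarith
  have hcos : ∀ x ∈ Ioo (c - π / 2) (c + π / 2), cos (θ x) ≠ 0 := fun x hx ↦
    (cos_pos_of_mem_Ioo ⟨heq hx ▸ neg_lt_neg (hθ'.lt_pi_div_two (-x)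
      ⟨neg_lt_neg hx.2, neg_lt_neg hx.1⟩), hθ.lt_pi_div_two x hx⟩).ne'
  obtain ⟨k, hk, hpk⟩ := exists_eq_const_mul_cos_sq h.fst.toContinuousWeight
    (fun x hx ↦ hθ.isPruferAngle.hasDerivAt_tan hx (hcos x hx))
    fun x hx ↦ hcrit.riccati_eq_tan_sub heq hx
  exact ⟨c, rfl, rfl, fun x hx ↦ h.fst.eq_tan_of_eq_const_mul_cos_sq hpk hx, k, hk, hpk⟩

end Reflection

theorem rigidity_weighted_neumann_general {a b : ℝ} (hab : a < b) (hba : b - a ≤ π) {p ψ : ℝ → ℝ}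
    (hpos : ∀ x ∈ Ioo a b, 0 < p x)
    (hψ : ∀ x ∈ Ioo a b, ∀ y ∈ Ioo a b, log (p y) - log (p x) = -2 * ∫ t in x..y, ψ t)
    (hgap : ∀ x ∈ Ioo a b, ∀ y ∈ Ioo a b, x < y → 2 * tan ((y - x) / 2) ≤ ψ y - ψ x)
    (heig : mu1 a b p ≤ 3) :
    ∃ c, a = c - π / 2 ∧ b = c + π / 2 ∧ (∀ x ∈ Ioo a b, ψ x = tan (x - c)) ∧
      ∃ k, 0 < k ∧ ∀ x ∈ Ioo a b, p x = k * cos (x - c) ^ 2 :=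
  (gapPair_comp_neg hba hpos hψ hgap).exists_eq_tan_and_eq_cos_sq hab heig

/-- Corollary 2.5 / `c:sharpmu`: if `μ₁(I_π, p) = 3` for a positive
log-concave weight `p ∈ L¹(I_π)` such that `ψ_p = -(1/2)(log p)' ∈ 𝒜(I_π)` (i.e. `ψ_p`
satisfies the improved-monotonicity gap condition), then `ψ_p(x) = tan x` and
`p(x) = k cos² x` for some positive constant `k`. -/
theorem rigidity_weighted_neumann
    (p : ℝ → ℝ)
    (hpos : ∀ x ∈ Ioo (-(π / 2)) (π / 2), 0 < p x)
    (hint : IntegrableOn p (Ioo (-(π / 2)) (π / 2)))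
    (hlc : ConcaveOn ℝ (Ioo (-(π / 2)) (π / 2)) (fun x => Real.log (p x)))
    (ψ : ℝ → ℝ)
    (hmono : MonotoneOn ψ (Ioo (-(π / 2)) (π / 2)))
    (hψ : ∀ x ∈ Ioo (-(π / 2)) (π / 2), ∀ y ∈ Ioo (-(π / 2)) (π / 2),
      Real.log (p y) - Real.log (p x) = -2 * ∫ t in x..y, ψ t)
    (hgap : ∀ x ∈ Ioo (-(π / 2)) (π / 2), ∀ y ∈ Ioo (-(π / 2)) (π / 2), x < y →
      2 * tan ((y - x) / 2) ≤ ψ y - ψ x)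
    (heig : mu1 (-(π / 2)) (π / 2) p = 3) :
    (∀ x ∈ Ioo (-(π / 2)) (π / 2), ψ x = tan x) ∧
    ∃ k : ℝ, 0 < k ∧ ∀ x ∈ Ioo (-(π / 2)) (π / 2), p x = k * cos x ^ 2 := by
  obtain ⟨c, -, hc, hrigid⟩ := rigidity_weighted_neumann_general (by linarith [pi_pos])
    (by linarith) hpos hψ hgap heig.le
  obtain rfl : c = 0 := by linarith
  simpa only [sub_zero] using hrigid
end
end
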